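/- arXiv:2412.21048 — 9 statements merged into one kernel-verified Lean document; each statement's English description precedes it below -/
import Mathlib

section
/- Let f : ℝⁿ → ℝ be a C^∞ function with compact support contained in Ω and with ∫_{ℝⁿ} f = 0, and let u be its Bogovskiĭ field. Then u is continuously differentiable on ℝⁿ, u(x) = 0 for every x outside the closure of Ω, and div u(x) = f(x) for every x ∈ ℝⁿ. -/
open MeasureTheory Metric Set Filter Topology

/-- Differentiation under an integral over a compact set. -/
theorem bog_hasFDerivAt {E P V : Type*} [NormedAddCommGroup E] [NormedSpace ℝ E]
    [FiniteDimensional ℝ E]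
    [NormedAddCommGroup V] [NormedSpace ℝ V] [FiniteDimensional ℝ V]
    [TopologicalSpace P] [T2Space P] [SecondCountableTopology P]
    [MeasurableSpace P] [BorelSpace P] (μ : Measure P) [IsLocallyFiniteMeasure μ]
    (S : Set P) (hS : IsCompact S) (F : E → P → V) (F' : E → P → E →L[ℝ] V)
    (hF : Continuous (Function.uncurry F)) (hF' : Continuous (Function.uncurry F'))
    (hd : ∀ x p, HasFDerivAt (F · p) (F' x p) x) (x₀ : E) :
    HasFDerivAt (fun x => ∫ p in S, F x p ∂μ) (∫ p in S, F' x₀ p ∂μ) x₀ := by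
  have : ProperSpace E := FiniteDimensional.proper_real E
  have hc : ∀ x, Continuous (F x) := fun x => hF.comp (by fun_prop : Continuous fun p => (x, p))
  have hc' : ∀ x, Continuous (F' x) := fun x => hF'.comp (by fun_prop : Continuous fun p => (x, p))
  obtain ⟨M, hM⟩ := ((isCompact_closedBall x₀ 1).prod hS).bddAbove_image hF'.norm.continuousOn
  refine hasFDerivAt_integral_of_dominated_of_fderiv_le (bound := fun _ => M)
    (closedBall_mem_nhds x₀ one_pos) ?_ ?_ ?_ ?_ ?_ ?_
  · exact Eventually.of_forall fun x => (hc x).aestronglyMeasurable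
  · exact (hc x₀).continuousOn.integrableOn_compact hS
  · exact (hc' x₀).aestronglyMeasurable
  · filter_upwards [ae_restrict_mem hS.measurableSet] with p hp x hx
    exact hM ⟨(x, p), ⟨hx, hp⟩, rfl⟩
  · exact continuousOn_const.integrableOn_compact hS
  · exact Eventually.of_forall fun p x _ => hd x p

section
variable {n : ℕ}

local notation "𝔼" => EuclideanSpace ℝ (Fin n)

set_option maxHeartbeats 1000000 in
theorem bog_contDiff (f ω : 𝔼 → ℝ) (hf : ContDiff ℝ 1 f) (hω : ContDiff ℝ 1 ω) (R : ℝ)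
    (hR : ∀ y w, R < ‖w‖ → f y * ω (y + w) = 0) (if0 : Integrable f)
    (hωint : ∫ x, ω x = 1) (hfint : ∫ x, f x = 0)
    (u : 𝔼 → 𝔼)
    (hu : ∀ x, u x = ∫ p in Icc (0:ℝ) 1 ×ˢ closedBall (0:𝔼) R,
      (f (x - p.1 • p.2) * ω (x + (1 - p.1) • p.2)) • p.2) :
    ContDiff ℝ 1 u ∧ (∀ x, ∑ i, fderiv ℝ u x (EuclideanSpace.single i 1) i = f x) := by
  set S := Icc (0:ℝ) 1 ×ˢ closedBall (0:𝔼) R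
  have hS : IsCompact S := isCompact_Icc.prod (isCompact_closedBall _ _)
  let L : 𝔼 → ℝ × 𝔼 → 𝔼 →L[ℝ] ℝ := fun x p =>
    f (x - p.1 • p.2) • fderiv ℝ ω (x + (1 - p.1) • p.2)
      + ω (x + (1 - p.1) • p.2) • fderiv ℝ f (x - p.1 • p.2)
  have cf := hf.continuous
  have cω := hω.continuous
  have cf' := hf.continuous_fderiv one_ne_zero
  have cω' := hω.continuous_fderiv one_ne_zero
  have df : ∀ x, HasFDerivAt f (fderiv ℝ f x) x := fun x =>
    (hf.differentiable one_ne_zero x).hasFDerivAt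
  have dω : ∀ x, HasFDerivAt ω (fderiv ℝ ω x) x := fun x =>
    (hω.differentiable one_ne_zero x).hasFDerivAt
  have cL : Continuous (Function.uncurry L) := by
    simp only [L, Function.uncurry_def]
    fun_prop
  let F' : 𝔼 → ℝ × 𝔼 → 𝔼 →L[ℝ] 𝔼 := fun x p => (L x p).smulRight p.2
  have cF' : Continuous (Function.uncurry F') := by
    have : Function.uncurry F' = fun q => (Function.uncurry L q).smulRight q.2.2 := rfl
    rw [this]
    exact ((ContinuousLinearMap.smulRightL ℝ 𝔼 𝔼).continuous₂).comp (cL.prodMk (by fun_prop))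
  have hd : ∀ x p, HasFDerivAt
      (fun x : 𝔼 => (f (x - p.1 • p.2) * ω (x + (1 - p.1) • p.2)) • p.2) (F' x p) x := by
    intro x p
    have h1 : HasFDerivAt (fun x : 𝔼 => f (x - p.1 • p.2)) (fderiv ℝ f (x - p.1 • p.2)) x := by
      have h := (df (x - p.1 • p.2)).comp x ((hasFDerivAt_id x).sub_const (p.1 • p.2))
      rw [ContinuousLinearMap.comp_id] at h
      exact h
    have h2 : HasFDerivAt (fun x : 𝔼 => ω (x + (1 - p.1) • p.2))
        (fderiv ℝ ω (x + (1 - p.1) • p.2)) x := by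
      have h := (dω (x + (1 - p.1) • p.2)).comp x
        ((hasFDerivAt_id x).add_const ((1 - p.1) • p.2))
      rw [ContinuousLinearMap.comp_id] at h
      exact h
    exact (h1.mul h2).smul_const p.2
  have hU : ∀ x, HasFDerivAt u (∫ p in S, F' x p) x := by
    intro x
    have := bog_hasFDerivAt (volume : Measure (ℝ × 𝔼)) S hS
      (fun x p => (f (x - p.1 • p.2) * ω (x + (1 - p.1) • p.2)) • p.2) F'
      (by simp only [Function.uncurry_def]; fun_prop) cF' hd x
    rwa [← funext hu] at this
  refine ⟨?_, ?_⟩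
  · rw [contDiff_one_iff_fderiv]
    refine ⟨fun x => (hU x).differentiableAt, ?_⟩
    rw [funext fun x => (hU x).fderiv]
    exact continuous_parametric_integral_of_continuous cF' hS
  intro x
  rw [(hU x).fderiv]
  let T : (𝔼 →L[ℝ] 𝔼) →L[ℝ] ℝ := ∑ i, (EuclideanSpace.proj i : 𝔼 →L[ℝ] ℝ).comp
    (ContinuousLinearMap.apply ℝ 𝔼 (EuclideanSpace.single i 1))
  have hT : ∀ A : 𝔼 →L[ℝ] 𝔼, T A = ∑ i, A (EuclideanSpace.single i 1) i := by
    intro A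
    simp [T]
  have cF'x : Continuous (F' x) := cF'.comp (by fun_prop : Continuous fun p => (x, p))
  have cLx : Continuous (L x) := cL.comp (by fun_prop : Continuous fun p => (x, p))
  have iF' : IntegrableOn (F' x) S := cF'x.continuousOn.integrableOn_compact hS
  rw [← hT, ← ContinuousLinearMap.integral_comp_comm T iF']
  have hTF : ∀ p, T (F' x p) = L x p p.2 := by
    intro p
    rw [hT]
    simp only [F', ContinuousLinearMap.smulRight_apply, PiLp.smul_apply, smul_eq_mul]
    conv_rhs => rw [← (EuclideanSpace.basisFun (Fin n) ℝ).sum_repr p.2]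
    simp [mul_comm]
  simp_rw [hTF]
  have cLp : Continuous fun p : ℝ × 𝔼 => L x p p.2 := cLx.clm_apply continuous_snd
  have iL : IntegrableOn (fun p : ℝ × 𝔼 => L x p p.2) S :=
    cLp.continuousOn.integrableOn_compact hS
  have step : ∫ p in S, L x p p.2 = ∫ w in closedBall (0:𝔼) R, ∫ s in Icc (0:ℝ) 1, L x (s, w) w := by
    have iL' := iL
    rw [IntegrableOn, Measure.volume_eq_prod, ← Measure.prod_restrict] at iL'
    rw [Measure.volume_eq_prod, ← Measure.prod_restrict, integral_prod_symm _ iL']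
  rw [step]
  have ftc : ∀ w : 𝔼, ∫ s in Icc (0:ℝ) 1, L x (s, w) w = f x * ω (x + w) - f (x - w) * ω x := by
    intro w
    rw [integral_Icc_eq_integral_Ioc, ← intervalIntegral.integral_of_le zero_le_one]
    have hder : ∀ s ∈ uIcc (0:ℝ) 1, HasDerivAt
        (fun s : ℝ => -(f (x - s • w) * ω (x + (1 - s) • w))) (L x (s, w) w) s := by
      intro s _
      have e1 : HasDerivAt (fun s : ℝ => x - s • w) (-w) s := by
        simpa using ((hasDerivAt_id s).smul_const w).const_sub x
      have e2 : HasDerivAt (fun s : ℝ => x + (1 - s) • w) (-w) s := by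
        simpa using (((hasDerivAt_id s).const_sub 1).smul_const w).const_add x
      have h1 := (df (x - s • w)).comp_hasDerivAt s e1
      have h2 := (dω (x + (1 - s) • w)).comp_hasDerivAt s e2
      refine ((h1.mul h2).neg).congr_deriv ?_
      simp [L]
      ring
    rw [intervalIntegral.integral_eq_sub_of_hasDerivAt hder]
    · simp
      ring
    · exact (cLp.comp (by fun_prop : Continuous fun s : ℝ => (s, w))).intervalIntegrable _ _
  simp_rw [ftc]
  rw [setIntegral_eq_integral_of_forall_compl_eq_zero]
  · have iω0 : Integrable ω := by
      by_contra h
      simp [integral_undef h] at hωint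
    rw [integral_sub, integral_const_mul, integral_mul_const,
      integral_add_left_eq_self (fun w => ω w) x, integral_sub_left_eq_self f volume x, hωint, hfint]
    · simp
    · exact (iω0.comp_add_left x).const_mul _
    · exact (if0.comp_sub_left x).mul_const _
  · intro w hw
    have hw : R < ‖w‖ := by simpa using hw
    rw [hR x w hw]
    have := hR (x - w) w hw
    simp at this
    simpa using this

theorem bog_repr (f ω : 𝔼 → ℝ) (hf : Continuous f) (hω : Continuous ω) (R : ℝ)
    (hR : ∀ y w, R < ‖w‖ → f y * ω (y + w) = 0)
    (x : 𝔼) :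
    ∫ y, f y • ∫ s in Ioo (0:ℝ) 1, ((s ^ n)⁻¹ * ω (y + s⁻¹ • (x - y))) • (s⁻¹ • (x - y))
     = ∫ p in Icc (0:ℝ) 1 ×ˢ closedBall (0:𝔼) R,
      (f (x - p.1 • p.2) * ω (x + (1 - p.1) • p.2)) • p.2 := by
  set S := Icc (0:ℝ) 1 ×ˢ closedBall (0:𝔼) R
  have hS : IsCompact S := isCompact_Icc.prod (isCompact_closedBall _ _)
  let K : ℝ × 𝔼 → 𝔼 := fun p => (f (x - p.1 • p.2) * ω (x + (1 - p.1) • p.2)) • p.2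
  have cK : Continuous K := by fun_prop
  have K0 : ∀ s w, w ∉ closedBall (0:𝔼) R → K (s, w) = 0 := by
    intro s w hw
    have hw : R < ‖w‖ := by simpa using hw
    have := hR (x - s • w) w hw
    have e : x - s • w + w = x + (1 - s) • w := by module
    rw [e] at this
    simp [K, this]
  let ν : Measure ℝ := volume.restrict (Ioo (0:ℝ) 1)
  have iKS : Integrable K (ν.prod (volume.restrict (closedBall (0:𝔼) R))) := by
    have : IntegrableOn K S := cK.continuousOn.integrableOn_compact hS
    have := this.mono_set (prod_mono Ioo_subset_Icc_self (Subset.refl (closedBall (0:𝔼) R)))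
    rwa [IntegrableOn, Measure.volume_eq_prod, ← Measure.prod_restrict] at this
  have iK : Integrable K (ν.prod (volume : Measure 𝔼)) := by
    have h1 : IntegrableOn K (univ ×ˢ closedBall (0:𝔼) R) (ν.prod (volume : Measure 𝔼)) := by
      rw [IntegrableOn, ← Measure.prod_restrict, Measure.restrict_univ]
      exact iKS
    refine (integrableOn_iff_integrable_of_support_subset ?_).1 h1
    intro p hp
    by_contra hc
    exact hp (K0 p.1 p.2 (by simpa using hc))
  -- the right-hand side
  have rhs : ∫ p in S, K p = ∫ s in Ioo (0:ℝ) 1, ∫ w, K (s, w) := by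
    have iKI : Integrable K ((volume.restrict (Icc (0:ℝ) 1)).prod
        (volume.restrict (closedBall (0:𝔼) R))) := by
      have : IntegrableOn K S := cK.continuousOn.integrableOn_compact hS
      rwa [IntegrableOn, Measure.volume_eq_prod, ← Measure.prod_restrict] at this
    rw [Measure.volume_eq_prod, ← Measure.prod_restrict, integral_prod _ iKI,
      integral_Icc_eq_integral_Ioo]
    congr 1
    ext1 s
    exact setIntegral_eq_integral_of_forall_compl_eq_zero fun w hw => K0 s w hw
  change _ = ∫ p in S, K p
  rw [rhs]
  let H : ℝ → 𝔼 → 𝔼 := fun s y =>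
    f y • (((s ^ n)⁻¹ * ω (y + s⁻¹ • (x - y))) • (s⁻¹ • (x - y)))
  have HK : ∀ s ∈ Ioo (0:ℝ) 1, ∀ y, H s y = (s ^ n)⁻¹ • K (s, s⁻¹ • (x - y)) := by
    intro s hs y
    have hs0 : s ≠ 0 := hs.1.ne'
    have e1 : x - s • s⁻¹ • (x - y) = y := by
      rw [smul_inv_smul₀ hs0]; abel
    have e2 : x + (1 - s) • s⁻¹ • (x - y) = y + s⁻¹ • (x - y) := by
      rw [sub_smul, smul_inv_smul₀ hs0]; module
    simp only [H, K]
    rw [e1, e2]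
    simp only [smul_smul]
    congr 1
    ring
  have cov : ∀ {V : Type} [NormedAddCommGroup V] [NormedSpace ℝ V] (g : 𝔼 → V), ∀ s ∈ Ioo (0:ℝ) 1,
      ∫ y, (s ^ n)⁻¹ • g (s⁻¹ • (x - y)) = ∫ w, g w := by
    intro V _ _ g s hs
    rw [integral_sub_left_eq_self (fun y => (s ^ n)⁻¹ • g (s⁻¹ • y)) volume x, integral_smul,
      Measure.integral_comp_inv_smul_of_nonneg _ _ hs.1.le, finrank_euclideanSpace_fin,
      inv_smul_smul₀ (pow_ne_zero _ hs.1.ne')]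
  have mH : Measurable (Function.uncurry H) := by
    have := hf.measurable
    have := hω.measurable
    simp only [H, Function.uncurry_def]
    fun_prop
  have iH : Integrable (Function.uncurry H) (ν.prod (volume : Measure 𝔼)) := by
    rw [integrable_prod_iff mH.aestronglyMeasurable]
    have iK1 := (integrable_prod_iff cK.aestronglyMeasurable).1 iK
    constructor
    · filter_upwards [iK1.1, ae_restrict_mem measurableSet_Ioo] with s h1 hs
      simp only [Function.uncurry, HK s hs]
      have h2 := ((integrable_comp_smul_iff volume _ (inv_ne_zero hs.1.ne')).2 h1).comp_sub_left x
      exact h2.smul ((s ^ n)⁻¹)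
    · refine iK1.2.congr ?_
      filter_upwards [ae_restrict_mem measurableSet_Ioo] with s hs
      rw [← cov (fun w => ‖K (s, w)‖) s hs]
      congr 1
      ext y
      simp only [Function.uncurry, HK s hs, norm_smul, smul_eq_mul]
      rw [Real.norm_of_nonneg (inv_nonneg.2 (pow_nonneg hs.1.le _))]
  have lhs : ∀ y, f y • ∫ s in Ioo (0:ℝ) 1, ((s ^ n)⁻¹ * ω (y + s⁻¹ • (x - y))) • (s⁻¹ • (x - y))
      = ∫ s, H s y ∂ν := fun y => (integral_smul _ _).symm
  simp_rw [lhs]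
  rw [← integral_integral_swap iH]
  refine setIntegral_congr_fun measurableSet_Ioo fun s hs => ?_
  simp only [HK s hs]
  exact cov (fun w => K (s, w)) s hs

end

/-- For a smooth compactly supported `f` with support in `Ω` and zero
integral, the Bogovskiĭ field `u` is `C¹` on `ℝⁿ`, vanishes outside the closure of `Ω`,
and satisfies `div u = f` everywhere. -/
theorem bogovskii_smooth_solution
    (n : ℕ) (hn : 2 ≤ n)
    (Ω B : Set (EuclideanSpace ℝ (Fin n)))
    (hΩo : IsOpen Ω) (hΩb : Bornology.IsBounded Ω)
    (hBball : ∃ c r, 0 < r ∧ B = Metric.ball c r)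
    (hBΩ : B ⊆ Ω)
    (hstar : ∀ x ∈ Ω, ∀ y ∈ B, segment ℝ x y ⊆ Ω)
    (ω : EuclideanSpace ℝ (Fin n) → ℝ)
    (hω : ContDiff ℝ (⊤ : ℕ∞) ω) (hωc : HasCompactSupport ω)
    (hωsupp : tsupport ω ⊆ B) (hωint : ∫ x, ω x = 1)
    (f : EuclideanSpace ℝ (Fin n) → ℝ)
    (hf : ContDiff ℝ (⊤ : ℕ∞) f) (hfc : HasCompactSupport f)
    (hfsupp : tsupport f ⊆ Ω) (hfint : ∫ x, f x = 0)
    (G : EuclideanSpace ℝ (Fin n) → EuclideanSpace ℝ (Fin n) → EuclideanSpace ℝ (Fin n))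
    (hG : ∀ x y, x ≠ y → G x y =
      ∫ s in Set.Ioo (0:ℝ) 1, ((s ^ n)⁻¹ * ω (y + s⁻¹ • (x - y))) • (s⁻¹ • (x - y)))
    (hGdiag : ∀ x, G x x = 0)
    (u : EuclideanSpace ℝ (Fin n) → EuclideanSpace ℝ (Fin n))
    (hu : ∀ x, u x = ∫ y in Ω, f y • G x y) :
    ContDiff ℝ 1 u ∧
    (∀ x, x ∉ closure Ω → u x = 0) ∧
    (∀ x, ∑ i, fderiv ℝ u x (EuclideanSpace.single i 1) i = f x) := by
  obtain ⟨c, r, hr, rfl⟩ := hBball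
  have hf0 : ∀ y, y ∉ Ω → f y = 0 := fun y hy =>
    image_eq_zero_of_notMem_tsupport fun h => hy (hfsupp h)
  have hω0 : ∀ y, y ∉ ball c r → ω y = 0 := fun y hy =>
    image_eq_zero_of_notMem_tsupport fun h => hy (hωsupp h)
  have hG' : ∀ x y, G x y =
      ∫ s in Set.Ioo (0:ℝ) 1, ((s ^ n)⁻¹ * ω (y + s⁻¹ • (x - y))) • (s⁻¹ • (x - y)) := by
    intro x y
    by_cases h : x = y
    · subst h
      simp [hGdiag]
    · exact hG x y h
  obtain ⟨M, hM⟩ := hΩb.exists_norm_le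
  have hR : ∀ y w, M + M < ‖w‖ → f y * ω (y + w) = 0 := by
    intro y w hw
    by_contra hne
    have h1 : y ∈ Ω := by
      by_contra h; exact hne (by rw [hf0 y h, zero_mul])
    have h2 : y + w ∈ Ω := by
      by_contra h; exact hne (by rw [hω0 _ (fun h' => h (hBΩ h')), mul_zero])
    have h3 : ‖w‖ ≤ ‖y + w‖ + ‖y‖ := by
      simpa using norm_sub_le (y + w) y
    linarith [hM _ h1, hM _ h2]
  have hrep : ∀ x, u x = ∫ p in Icc (0:ℝ) 1 ×ˢ closedBall (0:EuclideanSpace ℝ (Fin n)) (M + M),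
      (f (x - p.1 • p.2) * ω (x + (1 - p.1) • p.2)) • p.2 := by
    intro x
    rw [hu, ← bog_repr f ω hf.continuous hω.continuous (M + M) hR x,
      setIntegral_eq_integral_of_forall_compl_eq_zero]
    · simp only [hG']
    · intro y hy
      rw [hf0 y hy, zero_smul]
  obtain ⟨h1, h2⟩ := bog_contDiff f ω (hf.of_le (by exact_mod_cast le_top))
    (hω.of_le (by exact_mod_cast le_top)) (M + M) hR (hf.continuous.integrable_of_hasCompactSupport hfc)
    hωint hfint u hrep
  refine ⟨h1, ?_, h2⟩
  intro x hx
  rw [hu]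
  refine setIntegral_eq_zero_of_forall_eq_zero fun y hy => ?_
  rw [hG', setIntegral_eq_zero_of_forall_eq_zero, smul_zero]
  intro s hs
  rw [hω0, mul_zero, zero_smul]
  intro hz
  refine hx (subset_closure (hstar y hy _ hz ⟨1 - s, s, by linarith [hs.2], hs.1.le, by ring, ?_⟩))
  rw [smul_add, smul_inv_smul₀ hs.1.ne']
  module
end

section
/- Let f : ℝⁿ → ℝ be a C^∞ function with compact support contained in Ω, let u be its Bogovskiĭ field, and fix indices 1 ≤ i, j ≤ n. Then for every x ∈ Ω the principal-value limit L(x) = lim_{ε→0⁺} ∫_{{y : |x−y|>ε}} ( ∫₀¹ (∂η_i/∂z_j)(y, (x−y)/s) s^{−(n+1)} ds ) f(y) dy exists, and ∂u_i/∂x_j(x) = L(x) + ω_{ij}(x) f(x), where ω_{ij}(x) = ∫_{ℝⁿ} (z_i z_j / |z|²) ω(x+z) dz and η_i(y,z) = z_i ω(y+z). -/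
open MeasureTheory Metric Set Filter Topology

lemma bog_cov_slice {n : ℕ} {F : Type*} [NormedAddCommGroup F] [NormedSpace ℝ F]
    (Ψ : EuclideanSpace ℝ (Fin n) → F) (x : EuclideanSpace ℝ (Fin n)) (s : ℝ) (hs : 0 < s) :
    ∫ y, (s ^ n)⁻¹ • Ψ (s⁻¹ • (x - y)) = ∫ z, Ψ z := by
  rw [integral_sub_left_eq_self (fun w => (s ^ n)⁻¹ • Ψ (s⁻¹ • w)), integral_smul,
    Measure.integral_comp_inv_smul_of_nonneg _ _ hs.le]
  simp only [finrank_euclideanSpace, Fintype.card_fin, smul_smul]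
  rw [inv_mul_cancel₀ (by positivity), one_smul]


noncomputable def bogM (n : ℕ) (R : ℝ) : Measure (ℝ × EuclideanSpace ℝ (Fin n)) :=
  (volume.restrict (Ioo (0:ℝ) 1)).prod (volume.restrict (closedBall 0 R))

lemma bog_fin_ball (n : ℕ) (R : ℝ) :
    IsFiniteMeasure (volume.restrict (closedBall (0 : EuclideanSpace ℝ (Fin n)) R)) :=
  isFiniteMeasure_restrict.2 measure_closedBall_lt_top.ne

lemma bog_fin_Ioo : IsFiniteMeasure (volume.restrict (Ioo (0:ℝ) 1)) :=
  isFiniteMeasure_restrict.2 (by simp)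

instance bogM_fin (n : ℕ) (R : ℝ) : IsFiniteMeasure (bogM n R) := by
  have := bog_fin_ball n R
  have := bog_fin_Ioo
  unfold bogM; infer_instance

lemma bogM_ae (n : ℕ) (R : ℝ) : ∀ᵐ p ∂(bogM n R), p.1 ∈ Ioo (0:ℝ) 1 ∧ ‖p.2‖ ≤ R := by
  have h1 : ∀ᵐ p ∂(bogM n R), p.1 ∈ Ioo (0:ℝ) 1 :=
    Measure.quasiMeasurePreserving_fst.ae (ae_restrict_mem measurableSet_Ioo)
  have h2 : ∀ᵐ p ∂(bogM n R), p.2 ∈ closedBall (0 : EuclideanSpace ℝ (Fin n)) R :=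
    Measure.quasiMeasurePreserving_snd.ae (ae_restrict_mem measurableSet_closedBall)
  filter_upwards [h1, h2] with p hp hq
  exact ⟨hp, by simpa using hq⟩

lemma bogM_int {n : ℕ} {R : ℝ} {F : Type*} [NormedAddCommGroup F]
    {g : ℝ × EuclideanSpace ℝ (Fin n) → F} (hm : AEStronglyMeasurable g (bogM n R)) (C : ℝ)
    (h : ∀ s ∈ Ioo (0:ℝ) 1, ∀ z, ‖z‖ ≤ R → ‖g (s, z)‖ ≤ C) : Integrable g (bogM n R) := by
  refine Integrable.of_bound hm C ?_
  filter_upwards [bogM_ae n R] with p hp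
  exact h p.1 hp.1 p.2 hp.2

lemma bogM_bdd {n : ℕ} (R : ℝ) {F : Type*} [NormedAddCommGroup F]
    {g : ℝ × EuclideanSpace ℝ (Fin n) → F} (hc : Continuous g) :
    ∃ C, 0 ≤ C ∧ ∀ s ∈ Icc (0:ℝ) 1, ∀ z, ‖z‖ ≤ R → ‖g (s, z)‖ ≤ C := by
  have hK : IsCompact (Icc (0:ℝ) 1 ×ˢ closedBall (0 : EuclideanSpace ℝ (Fin n)) R) :=
    isCompact_Icc.prod (isCompact_closedBall _ _)
  obtain ⟨C, hC⟩ := hK.exists_bound_of_continuousOn hc.continuousOn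
  refine ⟨max C 0, le_max_right _ _, fun s hs z hz => (hC (s, z) ⟨hs, by simpa using hz⟩).trans (le_max_left _ _)⟩

lemma bog_cov {n : ℕ} {F : Type*} [NormedAddCommGroup F] [NormedSpace ℝ F]
    (Ψ : ℝ × EuclideanSpace ℝ (Fin n) → F) (hm : StronglyMeasurable Ψ) (C R : ℝ)
    (hb : ∀ s ∈ Ioo (0:ℝ) 1, ∀ z, ‖Ψ (s, z)‖ ≤ C)
    (h0 : ∀ s ∈ Ioo (0:ℝ) 1, ∀ z, R < ‖z‖ → Ψ (s, z) = 0) (x : EuclideanSpace ℝ (Fin n)) :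
    Integrable (fun y => ∫ s in Ioo (0:ℝ) 1, (s ^ n)⁻¹ • Ψ (s, s⁻¹ • (x - y))) ∧
    ∫ y, ∫ s in Ioo (0:ℝ) 1, (s ^ n)⁻¹ • Ψ (s, s⁻¹ • (x - y)) =
      ∫ p, Ψ p ∂(bogM n R) := by
  set S := volume.restrict (Ioo (0:ℝ) 1) with hS
  have hrest : ∀ s ∈ Ioo (0:ℝ) 1,
      (closedBall (0 : EuclideanSpace ℝ (Fin n)) R).indicator (fun z => Ψ (s, z))
        = fun z => Ψ (s, z) := by
    intro s hs
    rw [Set.indicator_eq_self]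
    intro z hz
    by_contra h
    exact hz (h0 s hs z (by simpa using h))
  have hsl : ∀ s ∈ Ioo (0:ℝ) 1, Integrable (fun z => Ψ (s, z)) := by
    intro s hs
    rw [← hrest s hs, integrable_indicator_iff measurableSet_closedBall]
    exact Measure.integrableOn_of_bounded (M := C) measure_closedBall_lt_top.ne
      (hm.comp_measurable measurable_prodMk_left).aestronglyMeasurable
      (Eventually.of_forall fun z => hb s hs z)
  have hgm : StronglyMeasurable
      (fun p : ℝ × EuclideanSpace ℝ (Fin n) => (p.1 ^ n)⁻¹ • Ψ (p.1, p.1⁻¹ • (x - p.2))) := by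
    refine StronglyMeasurable.smul ?_ (hm.comp_measurable ?_)
    · exact Measurable.stronglyMeasurable (by fun_prop)
    · fun_prop
  have hn : ∀ s ∈ Ioo (0:ℝ) 1, ∫ y, ‖(s ^ n)⁻¹ • Ψ (s, s⁻¹ • (x - y))‖ = ∫ z, ‖Ψ (s, z)‖ := by
    intro s hs
    rw [← bog_cov_slice (fun z => ‖Ψ (s, z)‖) x s hs.1]
    congr 1; ext y
    rw [norm_smul, norm_inv, norm_pow, Real.norm_of_nonneg hs.1.le, smul_eq_mul]
  have hgi : Integrable (fun p : ℝ × EuclideanSpace ℝ (Fin n) =>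
      (p.1 ^ n)⁻¹ • Ψ (p.1, p.1⁻¹ • (x - p.2))) (S.prod volume) := by
    rw [integrable_prod_iff hgm.aestronglyMeasurable]
    constructor
    · filter_upwards [ae_restrict_mem measurableSet_Ioo] with s hs
      have h1 := (integrable_comp_smul_iff volume (fun z => Ψ (s, z)) (inv_ne_zero hs.1.ne')).2
        (hsl s hs)
      exact (h1.comp_sub_left x).smul _
    · refine Measure.integrableOn_of_bounded (M := C * volume.real (closedBall (0 : EuclideanSpace ℝ (Fin n)) R)) (by simp) 
        (hgm.norm.integral_prod_right').aestronglyMeasurable ?_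
      filter_upwards [ae_restrict_mem measurableSet_Ioo] with s hs
      rw [hn s hs, ← (show (∫ z in closedBall 0 R, ‖Ψ (s, z)‖) = _ from
        setIntegral_eq_integral_of_forall_compl_eq_zero (fun z hz => by
          rw [h0 s hs z (by simpa using hz), norm_zero]))]
      refine norm_setIntegral_le_of_norm_le_const measure_closedBall_lt_top ?_ 
      intro z _
      rw [norm_norm]; exact hb s hs z
  have hpi : Integrable Ψ (bogM n R) :=
    bogM_int hm.aestronglyMeasurable C (fun s hs z _ => hb s hs z)
  rw [bogM] at hpi ⊢
  refine ⟨hgi.integral_prod_right, ?_⟩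
  rw [integral_prod _ hpi, ← integral_integral_swap (f := fun s y => (s ^ n)⁻¹ • Ψ (s, s⁻¹ • (x - y))) hgi]
  refine setIntegral_congr_fun measurableSet_Ioo fun s hs => ?_
  rw [bog_cov_slice (fun z => Ψ (s, z)) x s hs.1]
  exact (setIntegral_eq_integral_of_forall_compl_eq_zero (fun z hz => 
          h0 s hs z (by simpa using hz))).symm

lemma bog_int_fderiv_zero {n : ℕ} {g : EuclideanSpace ℝ (Fin n) → ℝ} (hg : ContDiff ℝ 1 g)
    (hc : HasCompactSupport g) (v : EuclideanSpace ℝ (Fin n)) :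
    ∫ z, fderiv ℝ g z v = 0 := by
  have hcont : Continuous (fun z => fderiv ℝ g z v) :=
    (hg.continuous_fderiv one_ne_zero).clm_apply continuous_const
  have hcs : HasCompactSupport (fun z => fderiv ℝ g z v) := hc.fderiv_apply ℝ v
  have h := integral_mul_fderiv_eq_neg_fderiv_mul_of_integrable (μ := volume)
    (f := fun _ : EuclideanSpace ℝ (Fin n) => (1:ℝ)) (g := g) (v := v) (by simp)
    (by simpa using hcont.integrable_of_hasCompactSupport hcs)
    (by simpa using hg.continuous.integrable_of_hasCompactSupport hc)
    (by intros; fun_prop) (fun x _ => hg.differentiable one_ne_zero x)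
  simpa using h

noncomputable def bogχ (n : ℕ) (k : ℕ) (ε : ℝ) (p : ℝ × EuclideanSpace ℝ (Fin n)) : ℝ :=
  Real.smoothTransition (k * (p.1 ^ 2 * ‖p.2‖ ^ 2 - ε ^ 2))

noncomputable def bogχd (n : ℕ) (k : ℕ) (ε : ℝ) (p : ℝ × EuclideanSpace ℝ (Fin n)) : ℝ :=
  deriv Real.smoothTransition (k * (p.1 ^ 2 * ‖p.2‖ ^ 2 - ε ^ 2))

noncomputable def bogw {n : ℕ} (i j : Fin n) (z : EuclideanSpace ℝ (Fin n)) : ℝ :=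
  z i * z j / ‖z‖ ^ 2

lemma bog_coord {n : ℕ} (i : Fin n) (z : EuclideanSpace ℝ (Fin n)) : |z i| ≤ ‖z‖ := by
  simpa using PiLp.norm_apply_le z i

lemma bogw_le {n : ℕ} (i j : Fin n) (z : EuclideanSpace ℝ (Fin n)) : |bogw i j z| ≤ 1 := by
  unfold bogw
  rw [abs_div, abs_mul, abs_of_nonneg (by positivity : 0 ≤ ‖z‖ ^ 2)]
  refine div_le_one_of_le₀ ?_ (by positivity)
  rw [sq]
  exact mul_le_mul (bog_coord i z) (bog_coord j z) (abs_nonneg _) (norm_nonneg _)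

lemma bogw_meas {n : ℕ} (i j : Fin n) : Measurable (bogw i j) := by
  unfold bogw; fun_prop

lemma bogχ_contDiff (n k : ℕ) (ε : ℝ) : ContDiff ℝ 1 (bogχ n k ε) := by
  unfold bogχ
  refine (Real.smoothTransition.contDiff (n := 1)).comp ?_
  refine contDiff_const.mul (ContDiff.sub (ContDiff.mul (contDiff_fst.pow 2) ?_) contDiff_const)
  exact contDiff_snd.norm_sq ℝ

lemma bogχd_cont (n k : ℕ) (ε : ℝ) : Continuous (bogχd n k ε) := by
  unfold bogχd
  have : Continuous (deriv Real.smoothTransition) :=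
    (Real.smoothTransition.contDiff (n := 1)).continuous_deriv le_rfl
  exact this.comp (by fun_prop)

lemma bogχ_hasDeriv_s {n : ℕ} (k : ℕ) (ε : ℝ) (s : ℝ) (z : EuclideanSpace ℝ (Fin n)) :
    HasDerivAt (fun s => bogχ n k ε (s, z)) (bogχd n k ε (s, z) * (k * (2 * s * ‖z‖ ^ 2))) s := by
  unfold bogχ bogχd
  have h1 : DifferentiableAt ℝ Real.smoothTransition (k * (s ^ 2 * ‖z‖ ^ 2 - ε ^ 2)) :=
    (Real.smoothTransition.contDiff (n := 1)).differentiable one_ne_zero _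
  have h2 : HasDerivAt (fun s : ℝ => s ^ 2) (2 * s) s := by simpa using hasDerivAt_pow 2 s
  have h3 := ((h2.mul_const (‖z‖ ^ 2)).sub_const (ε ^ 2)).const_mul (k : ℝ)
  exact HasDerivAt.comp (h₂ := Real.smoothTransition)
    (h := fun s : ℝ => (k : ℝ) * (s ^ 2 * ‖z‖ ^ 2 - ε ^ 2)) s h1.hasDerivAt h3

lemma bogχ_hasLine {n : ℕ} (k : ℕ) (ε : ℝ) (s : ℝ) (z : EuclideanSpace ℝ (Fin n)) (j : Fin n) :
    fderiv ℝ (fun z => bogχ n k ε (s, z)) z (EuclideanSpace.single j 1)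
      = bogχd n k ε (s, z) * (k * (2 * s ^ 2 * z j)) := by
  unfold bogχ bogχd
  have h1 : DifferentiableAt ℝ Real.smoothTransition (k * (s ^ 2 * ‖z‖ ^ 2 - ε ^ 2)) :=
    (Real.smoothTransition.contDiff (n := 1)).differentiable one_ne_zero _
  have h2 := (hasStrictFDerivAt_norm_sq z).hasFDerivAt
  have h3 := h1.hasDerivAt.comp_hasFDerivAt z (((h2.const_mul (s ^ 2)).sub_const (ε ^ 2)).const_mul (k : ℝ))
  have h4 := h3.fderiv
  simp only [Function.comp_def] at h4
  rw [h4]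
  simp [EuclideanSpace.inner_single_right]
  exact Or.inl (Or.inl (by ring))

lemma bogχ_le (n k : ℕ) (ε : ℝ) (p) : |bogχ n k ε p| ≤ 1 := by
  unfold bogχ
  rw [abs_of_nonneg (Real.smoothTransition.nonneg _)]
  exact Real.smoothTransition.le_one _

noncomputable def bogθ (n : ℕ) (ε : ℝ) (p : ℝ × EuclideanSpace ℝ (Fin n)) : ℝ :=
  if ε < p.1 * ‖p.2‖ then 1 else 0

lemma bogθ_meas (n : ℕ) (ε : ℝ) : Measurable (bogθ n ε) := by
  unfold bogθ
  exact Measurable.ite (measurableSet_lt (by fun_prop) (by fun_prop)) measurable_const measurable_const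

lemma bogθ_le (n : ℕ) (ε : ℝ) (p) : |bogθ n ε p| ≤ 1 := by
  unfold bogθ; split_ifs <;> simp

lemma bogχ_zero {n k : ℕ} {ε : ℝ} {s : ℝ} (hs : 0 ≤ s)
    {z : EuclideanSpace ℝ (Fin n)} (h : s * ‖z‖ ≤ ε) : bogχ n k ε (s, z) = 0 := by
  unfold bogχ
  apply Real.smoothTransition.zero_of_nonpos
  have : (s * ‖z‖) ^ 2 ≤ ε ^ 2 := by gcongr
  have h2 : s ^ 2 * ‖z‖ ^ 2 - ε ^ 2 ≤ 0 := by nlinarith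
  exact mul_nonpos_of_nonneg_of_nonpos (Nat.cast_nonneg _) h2

lemma bogχ_tendsto {n : ℕ} {ε : ℝ} (hε : 0 < ε) {s : ℝ} (hs : 0 ≤ s)
    (z : EuclideanSpace ℝ (Fin n)) :
    Tendsto (fun k : ℕ => bogχ n k ε (s, z)) atTop (𝓝 (bogθ n ε (s, z))) := by
  by_cases h : ε < s * ‖z‖
  · have : bogθ n ε (s, z) = 1 := by simp [bogθ, h]
    rw [this]
    have hp : 0 < s ^ 2 * ‖z‖ ^ 2 - ε ^ 2 := by
      have : ε ^ 2 < (s * ‖z‖) ^ 2 := by gcongr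
      nlinarith
    refine tendsto_const_nhds.congr' ?_
    have ht : Tendsto (fun k : ℕ => (k : ℝ) * (s ^ 2 * ‖z‖ ^ 2 - ε ^ 2)) atTop atTop :=
      tendsto_natCast_atTop_atTop.atTop_mul_const hp
    filter_upwards [ht.eventually_ge_atTop 1] with k hk
    exact (Real.smoothTransition.one_of_one_le hk).symm
  · have : bogθ n ε (s, z) = 0 := by simp [bogθ, h]
    rw [this]
    refine tendsto_const_nhds.congr fun k => ?_
    rw [bogχ_zero hs (not_lt.1 h)]

lemma bogθ_tendsto {n : ℕ} {s : ℝ} (hs : 0 < s)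
    {z : EuclideanSpace ℝ (Fin n)} (hz : z ≠ 0) :
    Tendsto (fun ε : ℝ => bogθ n ε (s, z)) (𝓝[>] 0) (𝓝 1) := by
  refine tendsto_const_nhds.congr' ?_
  have hp : 0 < s * ‖z‖ := by positivity
  filter_upwards [Ioo_mem_nhdsGT hp] with ε h
  simp [bogθ, h.2]

lemma bog_inv_bound {R ε s t a : ℝ} (hε : 0 < ε) (hs : 0 < s) (ht : t ≤ R) (h : ε < s * t) (ha : 0 ≤ a) :
    s⁻¹ * a ≤ R / ε * a := by
  refine mul_le_mul_of_nonneg_right ?_ ha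
  rw [inv_le_iff_one_le_mul₀ hs, div_mul_eq_mul_div, one_le_div hε]
  nlinarith

/-- explicit formula for `∂_j (z_i φ)`. -/
noncomputable def bogP {n : ℕ} (i j : Fin n) (φ : ℝ × EuclideanSpace ℝ (Fin n) → ℝ)
    (p : ℝ × EuclideanSpace ℝ (Fin n)) : ℝ :=
  (EuclideanSpace.single j (1:ℝ) : EuclideanSpace ℝ (Fin n)) i * φ p
    + p.2 i * fderiv ℝ φ p (0, EuclideanSpace.single j 1)

noncomputable def bogS {n : ℕ} (φ : ℝ × EuclideanSpace ℝ (Fin n) → ℝ)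
    (p : ℝ × EuclideanSpace ℝ (Fin n)) : ℝ :=
  fderiv ℝ φ p (1, 0)

lemma bogP_cont {n : ℕ} (i j : Fin n) {φ : ℝ × EuclideanSpace ℝ (Fin n) → ℝ}
    (hφ : ContDiff ℝ 1 φ) : Continuous (bogP i j φ) := by
  unfold bogP
  have h1 := hφ.continuous
  have h2 : Continuous (fun p => fderiv ℝ φ p (0, EuclideanSpace.single j 1)) :=
    (hφ.continuous_fderiv one_ne_zero).clm_apply continuous_const
  fun_prop

lemma bogS_cont {n : ℕ} {φ : ℝ × EuclideanSpace ℝ (Fin n) → ℝ}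
    (hφ : ContDiff ℝ 1 φ) : Continuous (bogS φ) :=
  (hφ.continuous_fderiv one_ne_zero).clm_apply continuous_const

lemma bog_slice_z {n : ℕ} (i j : Fin n) {φ : ℝ × EuclideanSpace ℝ (Fin n) → ℝ}
    (hφ : ContDiff ℝ 1 φ) (R : ℝ) (h0 : ∀ s ∈ Ioo (0:ℝ) 1, ∀ z, R < ‖z‖ → φ (s, z) = 0)
    (k : ℕ) (ε : ℝ) (s : ℝ) (hs : s ∈ Ioo (0:ℝ) 1) :
    ∫ z in closedBall (0 : EuclideanSpace ℝ (Fin n)) R,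
      (s⁻¹ * bogP i j φ (s, z) * bogχ n k ε (s, z)
        + bogw i j z * φ (s, z) * (bogχd n k ε (s, z) * (k * (2 * s * ‖z‖ ^ 2)))) = 0 := by
  have hs0 : s ≠ 0 := hs.1.ne'
  set g : EuclideanSpace ℝ (Fin n) → ℝ := fun z => z i * φ (s, z) * bogχ n k ε (s, z) with hg
  have hφs : ContDiff ℝ 1 (fun z => φ (s, z)) := hφ.comp (contDiff_prodMk_right s)
  have hχs : ContDiff ℝ 1 (fun z => bogχ n k ε (s, z)) :=
    (bogχ_contDiff n k ε).comp (contDiff_prodMk_right s)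
  have hcoord : ∀ z, HasFDerivAt (fun z : EuclideanSpace ℝ (Fin n) => z i)
      (EuclideanSpace.proj i : EuclideanSpace ℝ (Fin n) →L[ℝ] ℝ) z := fun z =>
    (EuclideanSpace.proj i : EuclideanSpace ℝ (Fin n) →L[ℝ] ℝ).hasFDerivAt
  have hgd : ContDiff ℝ 1 g := by
    refine ContDiff.mul (ContDiff.mul ?_ hφs) hχs
    exact (EuclideanSpace.proj i : EuclideanSpace ℝ (Fin n) →L[ℝ] ℝ).contDiff
  have hgc : HasCompactSupport g := by
    refine HasCompactSupport.intro (isCompact_closedBall 0 R) fun z hz => ?_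
    have : R < ‖z‖ := by simpa using hz
    simp [hg, h0 s hs z this]
  have hform : ∀ z, s⁻¹ * fderiv ℝ g z (EuclideanSpace.single j 1) =
      s⁻¹ * bogP i j φ (s, z) * bogχ n k ε (s, z)
        + bogw i j z * φ (s, z) * (bogχd n k ε (s, z) * (k * (2 * s * ‖z‖ ^ 2))) := by
    intro z
    have h1 : HasFDerivAt (fun z => φ (s, z))
        ((fderiv ℝ φ (s, z)).comp (ContinuousLinearMap.inr ℝ ℝ (EuclideanSpace ℝ (Fin n)))) z :=
      (hφ.differentiable one_ne_zero (s, z)).hasFDerivAt.comp z (hasFDerivAt_prodMk_right s z)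
    have h2 := (hχs.differentiable one_ne_zero z).hasFDerivAt
    have h3 := ((hcoord z).mul h1).mul h2
    have h4 : fderiv ℝ g z = _ := h3.fderiv
    have h5 : (EuclideanSpace.proj i : EuclideanSpace ℝ (Fin n) →L[ℝ] ℝ) (EuclideanSpace.single j 1)
      = (EuclideanSpace.single j (1:ℝ) : EuclideanSpace ℝ (Fin n)) i := rfl
    rw [h4]
    simp only [_root_.add_apply, _root_.smul_apply, ContinuousLinearMap.comp_apply,
      ContinuousLinearMap.inr_apply, bogχ_hasLine, smul_eq_mul, h5, Pi.mul_apply, bogP, bogw]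
    by_cases hz : z = 0
    · subst hz; simp
      ring_nf
    · have : ‖z‖ ≠ 0 := norm_ne_zero_iff.2 hz
      field_simp
      ring
  have hz0 : ∀ z, z ∉ closedBall (0 : EuclideanSpace ℝ (Fin n)) R →
      s⁻¹ * fderiv ℝ g z (EuclideanSpace.single j 1) = 0 := by
    intro z hz
    have : z ∉ tsupport g := by
      intro h
      refine hz (closure_minimal ?_ isClosed_closedBall h)
      intro y hy
      by_contra hy'
      have : R < ‖y‖ := by simpa using hy'
      exact hy (by simp [hg, h0 s hs y this])
    have h2 : fderiv ℝ g z = 0 := by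
      by_contra hne
      exact this (support_fderiv_subset ℝ hne)
    simp [h2]
  calc _ = ∫ z in closedBall (0 : EuclideanSpace ℝ (Fin n)) R,
        s⁻¹ * fderiv ℝ g z (EuclideanSpace.single j 1) := by simp_rw [hform]
    _ = ∫ z, s⁻¹ * fderiv ℝ g z (EuclideanSpace.single j 1) :=
      setIntegral_eq_integral_of_forall_compl_eq_zero hz0
    _ = 0 := by rw [integral_const_mul, bog_int_fderiv_zero hgd hgc, mul_zero]

lemma bog_phi_deriv {n : ℕ} {φ : ℝ × EuclideanSpace ℝ (Fin n) → ℝ}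
    (hφ : ContDiff ℝ 1 φ) (s : ℝ) (z : EuclideanSpace ℝ (Fin n)) :
    HasDerivAt (fun s => φ (s, z)) (bogS φ (s, z)) s := by
  have h := HasFDerivAt.comp (f := fun t : ℝ => (t, z)) s
    (hφ.differentiable one_ne_zero (s, z)).hasFDerivAt (hasFDerivAt_prodMk_left s z)
  simpa [bogS, Function.comp_def] using h.hasDerivAt

lemma bog_slice_s {n : ℕ} {φ : ℝ × EuclideanSpace ℝ (Fin n) → ℝ}
    (hφ : ContDiff ℝ 1 φ) (k : ℕ) (ε : ℝ) (z : EuclideanSpace ℝ (Fin n)) :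
    ∫ s in Ioo (0:ℝ) 1, (bogS φ (s, z) * bogχ n k ε (s, z)
        + φ (s, z) * (bogχd n k ε (s, z) * (k * (2 * s * ‖z‖ ^ 2)))) =
      φ (1, z) * bogχ n k ε (1, z) - φ (0, z) * bogχ n k ε (0, z) := by
  rw [← integral_Ioc_eq_integral_Ioo, ← intervalIntegral.integral_of_le zero_le_one]
  refine intervalIntegral.integral_eq_sub_of_hasDerivAt
    (f := fun s => φ (s, z) * bogχ n k ε (s, z)) (fun s _ => ?_) ?_
  · exact (bog_phi_deriv hφ s z).mul (bogχ_hasDeriv_s k ε s z)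
  · apply Continuous.intervalIntegrable
    have h1 := bogS_cont hφ
    have h2 := bogχd_cont n k ε
    have h3 := (bogχ_contDiff n k ε).continuous
    have h4 := hφ.continuous
    fun_prop

lemma bog_slice_s' {n : ℕ} {φ : ℝ × EuclideanSpace ℝ (Fin n) → ℝ}
    (hφ : ContDiff ℝ 1 φ) (z : EuclideanSpace ℝ (Fin n)) :
    ∫ s in Ioo (0:ℝ) 1, bogS φ (s, z) = φ (1, z) - φ (0, z) := by
  rw [← integral_Ioc_eq_integral_Ioo, ← intervalIntegral.integral_of_le zero_le_one]
  refine intervalIntegral.integral_eq_sub_of_hasDerivAt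
    (f := fun s => φ (s, z)) (fun s _ => bog_phi_deriv hφ s z) ?_
  apply Continuous.intervalIntegrable
  have h1 := bogS_cont hφ
  fun_prop

lemma bog_P_chi_bound {n : ℕ} {R ε s a c C : ℝ} (hε : 0 < ε) (hs : s ∈ Ioo (0:ℝ) 1)
    {z : EuclideanSpace ℝ (Fin n)} (hz : ‖z‖ ≤ R) (ha : |a| ≤ C) (hC : 0 ≤ C)
    (hc : |c| ≤ 1) (hc0 : s * ‖z‖ ≤ ε → c = 0) : ‖s⁻¹ * a * c‖ ≤ R / ε * C := by
  have hR : 0 ≤ R := (norm_nonneg z).trans hz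
  by_cases h : ε < s * ‖z‖
  · rw [Real.norm_eq_abs, abs_mul, abs_mul, abs_of_pos (inv_pos.2 hs.1)]
    calc s⁻¹ * |a| * |c| ≤ s⁻¹ * |a| * 1 := by
          have := hs.1
          gcongr
      _ = s⁻¹ * |a| := mul_one _
      _ ≤ R / ε * |a| := bog_inv_bound hε hs.1 hz h (abs_nonneg _)
      _ ≤ R / ε * C := by gcongr
  · rw [hc0 (not_lt.1 h)]
    simp; positivity

lemma bog_w_bound {n : ℕ} (i j : Fin n) {a c C : ℝ} (z : EuclideanSpace ℝ (Fin n)) (ha : |a| ≤ C)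
    (hc : |c| ≤ 1) : ‖bogw i j z * a * c‖ ≤ C := by
  rw [Real.norm_eq_abs, abs_mul, abs_mul]
  have hC : 0 ≤ C := (abs_nonneg _).trans ha
  calc |bogw i j z| * |a| * |c| ≤ 1 * C * 1 := by
        gcongr
        exact bogw_le i j z
    _ = C := by ring

lemma bog_step_k {n : ℕ} (i j : Fin n) {φ : ℝ × EuclideanSpace ℝ (Fin n) → ℝ}
    (hφ : ContDiff ℝ 1 φ) (R : ℝ) (h0 : ∀ s ∈ Ioo (0:ℝ) 1, ∀ z, R < ‖z‖ → φ (s, z) = 0)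
    (k : ℕ) {ε : ℝ} (hε : 0 < ε) :
    ∫ p, p.1⁻¹ * bogP i j φ p * bogχ n k ε p ∂(bogM n R)
      = ∫ p, bogw i j p.2 * bogS φ p * bogχ n k ε p ∂(bogM n R)
        - ∫ z in closedBall (0 : EuclideanSpace ℝ (Fin n)) R,
          bogw i j z * φ (1, z) * bogχ n k ε (1, z) := by
  have cP := bogP_cont i j hφ
  have cS := bogS_cont hφ
  have cd := bogχd_cont n k ε
  have cχ := (bogχ_contDiff n k ε).continuous
  have cφ := hφ.continuous
  have mw := bogw_meas i j
  obtain ⟨CP, hCP0, hCP⟩ := bogM_bdd R cP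
  obtain ⟨CS, hCS0, hCS⟩ := bogM_bdd R cS
  have cE : Continuous (fun p : ℝ × EuclideanSpace ℝ (Fin n) =>
    φ p * (bogχd n k ε p * (k * (2 * p.1 * ‖p.2‖ ^ 2)))) := by fun_prop
  obtain ⟨CE, hCE0, hCE⟩ := bogM_bdd R cE
  have I1 : Integrable (fun p => p.1⁻¹ * bogP i j φ p * bogχ n k ε p) (bogM n R) := by
    refine bogM_int (Measurable.aestronglyMeasurable (by fun_prop)) (R / ε * CP) ?_
    intro s hs z hz
    exact bog_P_chi_bound hε hs hz (hCP s (Ioo_subset_Icc_self hs) z hz) hCP0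
      (bogχ_le n k ε _) (fun h => bogχ_zero hs.1.le h)
  have I2 : Integrable (fun p => bogw i j p.2 * bogS φ p * bogχ n k ε p) (bogM n R) := by
    refine bogM_int (Measurable.aestronglyMeasurable (by fun_prop)) CS ?_
    intro s hs z hz
    exact bog_w_bound i j z (hCS s (Ioo_subset_Icc_self hs) z hz) (bogχ_le n k ε _)
  have I3 : Integrable (fun p => bogw i j p.2 * φ p *
      (bogχd n k ε p * (k * (2 * p.1 * ‖p.2‖ ^ 2)))) (bogM n R) := by
    refine bogM_int (Measurable.aestronglyMeasurable (by fun_prop)) CE ?_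
    intro s hs z hz
    have := bog_w_bound i j z (hCE s (Ioo_subset_Icc_self hs) z hz) (c := 1) (by simp)
    simpa [mul_assoc] using this
  have E1 : ∫ p, (p.1⁻¹ * bogP i j φ p * bogχ n k ε p + bogw i j p.2 * φ p *
      (bogχd n k ε p * (k * (2 * p.1 * ‖p.2‖ ^ 2)))) ∂(bogM n R) = 0 := by
    have := I1.add I3
    rw [bogM] at this ⊢
    refine (integral_prod _ this).trans ?_
    refine (setIntegral_congr_fun measurableSet_Ioo fun s hs => ?_).trans (integral_zero _ _)
    exact bog_slice_z i j hφ R h0 k ε s hs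
  have E2 : ∫ p, (bogw i j p.2 * bogS φ p * bogχ n k ε p + bogw i j p.2 * φ p *
      (bogχd n k ε p * (k * (2 * p.1 * ‖p.2‖ ^ 2)))) ∂(bogM n R)
      = ∫ z in closedBall (0 : EuclideanSpace ℝ (Fin n)) R,
          bogw i j z * φ (1, z) * bogχ n k ε (1, z) := by
    have := I2.add I3
    rw [bogM] at this ⊢
    refine (integral_prod_symm _ this).trans ?_
    congr 1
    ext z
    have hs := bog_slice_s hφ k ε z
    rw [bogχ_zero (s := 0) le_rfl (by simpa using hε.le), mul_zero, sub_zero] at hs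
    rw [mul_assoc, ← hs, ← integral_const_mul]
    congr 1; ext s
    simp only [Pi.add_apply]
    ring
  rw [integral_add I1 I3] at E1
  rw [integral_add I2 I3] at E2
  linarith

lemma bog_step_θ {n : ℕ} (i j : Fin n) {φ : ℝ × EuclideanSpace ℝ (Fin n) → ℝ}
    (hφ : ContDiff ℝ 1 φ) (R : ℝ) (h0 : ∀ s ∈ Ioo (0:ℝ) 1, ∀ z, R < ‖z‖ → φ (s, z) = 0)
    {ε : ℝ} (hε : 0 < ε) :
    ∫ p, p.1⁻¹ * bogP i j φ p * bogθ n ε p ∂(bogM n R)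
      = ∫ p, bogw i j p.2 * bogS φ p * bogθ n ε p ∂(bogM n R)
        - ∫ z in closedBall (0 : EuclideanSpace ℝ (Fin n)) R,
          bogw i j z * φ (1, z) * bogθ n ε (1, z) := by
  have cP := bogP_cont i j hφ
  have cS := bogS_cont hφ
  have cχ := fun k => (bogχ_contDiff n k ε).continuous
  have cφ := hφ.continuous
  have mw := bogw_meas i j
  obtain ⟨CP, hCP0, hCP⟩ := bogM_bdd R cP
  obtain ⟨CS, hCS0, hCS⟩ := bogM_bdd R cS
  obtain ⟨Cφ, hCφ0, hCφ⟩ := bogM_bdd R cφ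
  have := bog_fin_ball n R
  have T1 : Tendsto (fun k : ℕ => ∫ p, p.1⁻¹ * bogP i j φ p * bogχ n k ε p ∂(bogM n R)) atTop
      (𝓝 (∫ p, p.1⁻¹ * bogP i j φ p * bogθ n ε p ∂(bogM n R))) := by
    refine tendsto_integral_filter_of_dominated_convergence (fun _ => R / ε * CP)
      (Eventually.of_forall fun k => ?_) (Eventually.of_forall fun k => ?_) (integrable_const _) ?_
    · have := cχ k
      exact Measurable.aestronglyMeasurable (by fun_prop)
    · filter_upwards [bogM_ae n R] with p hp
      exact bog_P_chi_bound hε hp.1 hp.2 (hCP _ (Ioo_subset_Icc_self hp.1) _ hp.2) hCP0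
        (bogχ_le n k ε _) (fun h => bogχ_zero hp.1.1.le h)
    · filter_upwards [bogM_ae n R] with p hp
      exact (bogχ_tendsto hε hp.1.1.le p.2).const_mul _
  have T2 : Tendsto (fun k : ℕ => ∫ p, bogw i j p.2 * bogS φ p * bogχ n k ε p ∂(bogM n R)) atTop
      (𝓝 (∫ p, bogw i j p.2 * bogS φ p * bogθ n ε p ∂(bogM n R))) := by
    refine tendsto_integral_filter_of_dominated_convergence (fun _ => CS)
      (Eventually.of_forall fun k => ?_) (Eventually.of_forall fun k => ?_) (integrable_const _) ?_
    · have := cχ k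
      exact Measurable.aestronglyMeasurable (by fun_prop)
    · filter_upwards [bogM_ae n R] with p hp
      exact bog_w_bound i j p.2 (hCS _ (Ioo_subset_Icc_self hp.1) _ hp.2) (bogχ_le n k ε _)
    · filter_upwards [bogM_ae n R] with p hp
      exact (bogχ_tendsto hε hp.1.1.le p.2).const_mul _
  have T3 : Tendsto (fun k : ℕ => ∫ z in closedBall (0 : EuclideanSpace ℝ (Fin n)) R,
          bogw i j z * φ (1, z) * bogχ n k ε (1, z)) atTop
      (𝓝 (∫ z in closedBall (0 : EuclideanSpace ℝ (Fin n)) R,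
          bogw i j z * φ (1, z) * bogθ n ε (1, z))) := by
    refine tendsto_integral_filter_of_dominated_convergence (fun _ => Cφ)
      (Eventually.of_forall fun k => ?_) (Eventually.of_forall fun k => ?_) (integrable_const _) ?_
    · have := cχ k
      exact Measurable.aestronglyMeasurable (by fun_prop)
    · filter_upwards [ae_restrict_mem measurableSet_closedBall] with z hz
      exact bog_w_bound i j z (hCφ 1 (by simp) z (by simpa using hz)) (bogχ_le n k ε _)
    · refine Eventually.of_forall fun z => ?_
      exact (bogχ_tendsto hε zero_le_one z).const_mul _
  refine tendsto_nhds_unique T1 ((T2.sub T3).congr fun k => ?_)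
  exact (bog_step_k i j hφ R h0 k hε).symm

lemma bog_core {n : ℕ} (i j : Fin n) {φ : ℝ × EuclideanSpace ℝ (Fin n) → ℝ}
    (hφ : ContDiff ℝ 1 φ) (R : ℝ) (h0 : ∀ s ∈ Ioo (0:ℝ) 1, ∀ z, R < ‖z‖ → φ (s, z) = 0) :
    Tendsto (fun ε : ℝ => ∫ p, p.1⁻¹ * bogP i j φ p * bogθ n ε p ∂(bogM n R)) (𝓝[>] 0)
      (𝓝 (-∫ z in closedBall (0 : EuclideanSpace ℝ (Fin n)) R, bogw i j z * φ (0, z))) := by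
  have cS := bogS_cont hφ
  have cφ := hφ.continuous
  have mw := bogw_meas i j
  obtain ⟨CS, hCS0, hCS⟩ := bogM_bdd R cS
  obtain ⟨Cφ, hCφ0, hCφ⟩ := bogM_bdd R cφ
  have := bog_fin_ball n R
  have w0 : bogw i j (0 : EuclideanSpace ℝ (Fin n)) = 0 := by simp [bogw]
  have T2 : Tendsto (fun ε : ℝ => ∫ p, bogw i j p.2 * bogS φ p * bogθ n ε p ∂(bogM n R)) (𝓝[>] 0)
      (𝓝 (∫ p, bogw i j p.2 * bogS φ p * 1 ∂(bogM n R))) := by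
    refine tendsto_integral_filter_of_dominated_convergence (fun _ => CS)
      (Eventually.of_forall fun ε => ?_) (Eventually.of_forall fun ε => ?_) (integrable_const _) ?_
    · have := bogθ_meas n ε
      exact Measurable.aestronglyMeasurable (by fun_prop)
    · filter_upwards [bogM_ae n R] with p hp
      exact bog_w_bound i j p.2 (hCS _ (Ioo_subset_Icc_self hp.1) _ hp.2) (bogθ_le n ε _)
    · filter_upwards [bogM_ae n R] with p hp
      by_cases hz : p.2 = 0
      · simp [hz, w0]
      · exact (bogθ_tendsto hp.1.1 hz).const_mul _
  have T3 : Tendsto (fun ε : ℝ => ∫ z in closedBall (0 : EuclideanSpace ℝ (Fin n)) R,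
          bogw i j z * φ (1, z) * bogθ n ε (1, z)) (𝓝[>] 0)
      (𝓝 (∫ z in closedBall (0 : EuclideanSpace ℝ (Fin n)) R,
          bogw i j z * φ (1, z) * 1)) := by
    refine tendsto_integral_filter_of_dominated_convergence (fun _ => Cφ)
      (Eventually.of_forall fun ε => ?_) (Eventually.of_forall fun ε => ?_) (integrable_const _) ?_
    · have := bogθ_meas n ε
      exact Measurable.aestronglyMeasurable (by fun_prop)
    · filter_upwards [ae_restrict_mem measurableSet_closedBall] with z hz
      exact bog_w_bound i j z (hCφ 1 (by simp) z (by simpa using hz)) (bogθ_le n ε _)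
    · refine Eventually.of_forall fun z => ?_
      by_cases hz : z = 0
      · simp [hz, w0]
      · exact (bogθ_tendsto one_pos hz).const_mul _
  have hInteg : ∀ t ∈ Icc (0:ℝ) 1, Integrable (fun z => bogw i j z * φ (t, z))
      (volume.restrict (closedBall (0 : EuclideanSpace ℝ (Fin n)) R)) := by
    intro t ht
    refine Integrable.of_bound (Measurable.aestronglyMeasurable (by fun_prop)) Cφ ?_
    filter_upwards [ae_restrict_mem measurableSet_closedBall] with z hz
    simpa using bog_w_bound i j z (hCφ t ht z (by simpa using hz)) (c := 1) (by simp)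
  have E : ∫ p, bogw i j p.2 * bogS φ p * 1 ∂(bogM n R)
      = (∫ z in closedBall (0 : EuclideanSpace ℝ (Fin n)) R, bogw i j z * φ (1, z))
        - ∫ z in closedBall (0 : EuclideanSpace ℝ (Fin n)) R, bogw i j z * φ (0, z) := by
    have I2 : Integrable (fun p => bogw i j p.2 * bogS φ p * 1) (bogM n R) := by
      refine bogM_int (Measurable.aestronglyMeasurable (by fun_prop)) CS ?_
      intro s hs z hz
      exact bog_w_bound i j z (hCS s (Ioo_subset_Icc_self hs) z hz) (by simp)
    rw [← integral_sub (hInteg 1 (by simp)) (hInteg 0 (by simp))]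
    rw [bogM] at I2 ⊢
    rw [integral_prod_symm _ I2]
    congr 1; ext z
    rw [← mul_sub, ← bog_slice_s' hφ z, ← integral_const_mul]
    simp
  have T := T2.sub T3
  rw [E] at T
  simp only [mul_one] at T
  rw [show (∀ a b : ℝ, a - b - a = -b) from fun a b => by ring] at T
  refine T.congr' ?_
  filter_upwards [self_mem_nhdsWithin] with ε hε
  exact (bog_step_θ i j hφ R h0 hε).symm

/-- `φ_x (s, z) = ω (x + (1 - s) z) f (x - s z)`. -/
noncomputable def bogφ {n : ℕ} (ω f : EuclideanSpace ℝ (Fin n) → ℝ) (x : EuclideanSpace ℝ (Fin n))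
    (p : ℝ × EuclideanSpace ℝ (Fin n)) : ℝ :=
  ω (x + (1 - p.1) • p.2) * f (x - p.1 • p.2)

/-- derivative of `z_i φ_x (s, z)` with respect to `x`. -/
noncomputable def bogF' {n : ℕ} (i : Fin n) (ω f : EuclideanSpace ℝ (Fin n) → ℝ)
    (x : EuclideanSpace ℝ (Fin n)) (p : ℝ × EuclideanSpace ℝ (Fin n)) :
    EuclideanSpace ℝ (Fin n) →L[ℝ] ℝ :=
  p.2 i • (ω (x + (1 - p.1) • p.2) • fderiv ℝ f (x - p.1 • p.2)
    + f (x - p.1 • p.2) • fderiv ℝ ω (x + (1 - p.1) • p.2))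

lemma bogφ_contDiff {n : ℕ} {ω f : EuclideanSpace ℝ (Fin n) → ℝ} (hω : ContDiff ℝ 1 ω)
    (hf : ContDiff ℝ 1 f) (x : EuclideanSpace ℝ (Fin n)) : ContDiff ℝ 1 (bogφ ω f x) := by
  unfold bogφ
  exact (hω.comp (by fun_prop)).mul (hf.comp (by fun_prop))

lemma bogF'_cont {n : ℕ} (i : Fin n) {ω f : EuclideanSpace ℝ (Fin n) → ℝ} (hω : ContDiff ℝ 1 ω)
    (hf : ContDiff ℝ 1 f) (x : EuclideanSpace ℝ (Fin n)) : Continuous (bogF' i ω f x) := by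
  unfold bogF'
  have h1 := hω.continuous
  have h2 := hf.continuous
  have h3 := hω.continuous_fderiv one_ne_zero
  have h4 := hf.continuous_fderiv one_ne_zero
  fun_prop

lemma bogF'_hasFDeriv {n : ℕ} (i : Fin n) {ω f : EuclideanSpace ℝ (Fin n) → ℝ}
    (hω : ContDiff ℝ 1 ω) (hf : ContDiff ℝ 1 f) (x : EuclideanSpace ℝ (Fin n))
    (p : ℝ × EuclideanSpace ℝ (Fin n)) :
    HasFDerivAt (fun x => p.2 i * bogφ ω f x p) (bogF' i ω f x p) x := by
  unfold bogφ bogF'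
  have h1 : HasFDerivAt (fun x => ω (x + (1 - p.1) • p.2)) (fderiv ℝ ω (x + (1 - p.1) • p.2)) x :=
    (hasFDerivAt_comp_add_right _).2 (hω.differentiable one_ne_zero _).hasFDerivAt
  have h2 : HasFDerivAt (fun x => f (x - p.1 • p.2)) (fderiv ℝ f (x - p.1 • p.2)) x := by
    exact (hasFDerivAt_comp_sub _).2 (hf.differentiable one_ne_zero _).hasFDerivAt
  exact (h1.mul h2).const_mul _

lemma bogφ_fderiv {n : ℕ} {ω f : EuclideanSpace ℝ (Fin n) → ℝ}
    (hω : ContDiff ℝ 1 ω) (hf : ContDiff ℝ 1 f) (x : EuclideanSpace ℝ (Fin n))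
    (s : ℝ) (z v : EuclideanSpace ℝ (Fin n)) :
    fderiv ℝ (bogφ ω f x) (s, z) (0, v) =
      (1 - s) * fderiv ℝ ω (x + (1 - s) • z) v * f (x - s • z)
        - s * ω (x + (1 - s) • z) * fderiv ℝ f (x - s • z) v := by
  have h0 := (bogφ_contDiff hω hf x).differentiable one_ne_zero (s, z)
  have h1 : HasFDerivAt (fun z => bogφ ω f x (s, z))
        ((fderiv ℝ (bogφ ω f x) (s, z)).comp
          (ContinuousLinearMap.inr ℝ ℝ (EuclideanSpace ℝ (Fin n)))) z :=
      h0.hasFDerivAt.comp z (hasFDerivAt_prodMk_right s z)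
  have a1 : HasFDerivAt (fun z => x + (1 - s) • z)
      ((1 - s) • ContinuousLinearMap.id ℝ (EuclideanSpace ℝ (Fin n))) z :=
    ((hasFDerivAt_id z).const_smul (1 - s)).const_add x
  have a2 : HasFDerivAt (fun z => x - s • z)
      (-(s • ContinuousLinearMap.id ℝ (EuclideanSpace ℝ (Fin n)))) z :=
    ((hasFDerivAt_id z).const_smul s).const_sub x
  have b1 := (hω.differentiable one_ne_zero (x + (1 - s) • z)).hasFDerivAt.comp z a1
  have b2 := (hf.differentiable one_ne_zero (x - s • z)).hasFDerivAt.comp z a2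
  have h2 : HasFDerivAt (fun z => bogφ ω f x (s, z)) _ z := b1.mul b2
  have := congrArg (fun L => L v) (h1.unique h2)
  simp only [ContinuousLinearMap.comp_apply, ContinuousLinearMap.inr_apply] at this
  rw [this]
  simp
  ring

lemma bog_bdd {n : ℕ} {ω : EuclideanSpace ℝ (Fin n) → ℝ} (hω : ContDiff ℝ 1 ω)
    (hc : HasCompactSupport ω) :
    ∃ C, 0 ≤ C ∧ (∀ y, |ω y| ≤ C) ∧ (∀ y, ‖fderiv ℝ ω y‖ ≤ C) ∧
      (∀ y, C < ‖y‖ → ω y = 0 ∧ fderiv ℝ ω y = 0) := by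
  obtain ⟨C1, h1⟩ := hω.continuous.bounded_above_of_compact_support hc
  obtain ⟨C2, h2⟩ := (hω.continuous_fderiv one_ne_zero).bounded_above_of_compact_support (hc.fderiv ℝ)
  obtain ⟨C3, h3⟩ := hc.isCompact.isBounded.exists_norm_le
  refine ⟨max (max C1 C2) (max C3 0), by simp, fun y => ?_, fun y => ?_, fun y hy => ?_⟩
  · exact (h1 y).trans (by simp)
  · exact (h2 y).trans (by simp)
  · have hy' : y ∉ tsupport ω := by
      intro h
      have := h3 y h
      have : C3 ≤ max (max C1 C2) (max C3 0) := by simp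
      linarith
    constructor
    · exact image_eq_zero_of_notMem_tsupport hy'
    · by_contra hne
      exact hy' (support_fderiv_subset ℝ hne)

lemma bog_van {n : ℕ} {x z : EuclideanSpace ℝ (Fin n)} {s C X : ℝ} (hC : 0 ≤ C) (hx : ‖x‖ ≤ X)
    (hs : s ∈ Icc (0:ℝ) 1) (hz : 2 * (C + X) < ‖z‖) :
    C < ‖x + (1 - s) • z‖ ∨ C < ‖x - s • z‖ := by
  have hX : 0 ≤ X := (norm_nonneg _).trans hx
  rcases le_total s (1/2) with h | h
  · left
    have h1 : ‖(1 - s) • z‖ ≤ ‖x + (1 - s) • z‖ + ‖x‖ := by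
      have := norm_sub_le (x + (1 - s) • z) x
      simpa using this
    rw [norm_smul, Real.norm_of_nonneg (by linarith [hs.2])] at h1
    nlinarith
  · right
    have h1 : ‖s • z‖ ≤ ‖x - s • z‖ + ‖x‖ := by
      have := norm_sub_le (x - s • z) x
      simpa using this
    rw [norm_smul, Real.norm_of_nonneg hs.1] at h1
    nlinarith

lemma bog_u {n : ℕ} [Nontrivial (EuclideanSpace ℝ (Fin n))]
    {Ω : Set (EuclideanSpace ℝ (Fin n))} {ω f : EuclideanSpace ℝ (Fin n) → ℝ}
    (hω : ContDiff ℝ 1 ω) (hf : ContDiff ℝ 1 f) (hfsupp : tsupport f ⊆ Ω)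
    {C : ℝ} (hC : 0 ≤ C) (hωC : ∀ y, |ω y| ≤ C) (hfC : ∀ y, |f y| ≤ C) {R : ℝ} (hR : 0 ≤ R)
    (G : EuclideanSpace ℝ (Fin n) → EuclideanSpace ℝ (Fin n) → EuclideanSpace ℝ (Fin n))
    (hG : ∀ x y, x ≠ y → G x y =
      ∫ s in Set.Ioo (0:ℝ) 1, ((s ^ n)⁻¹ * ω (y + s⁻¹ • (x - y))) • (s⁻¹ • (x - y)))
    (i : Fin n) (x : EuclideanSpace ℝ (Fin n))
    (h0 : ∀ s ∈ Ioo (0:ℝ) 1, ∀ z, R < ‖z‖ → bogφ ω f x (s, z) = 0) :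
    (∫ y in Ω, f y • G x y) i = ∫ p, p.2 i * bogφ ω f x p ∂(bogM n R) := by
  have hc := (bogφ_contDiff hω hf x).continuous
  have hb : ∀ s ∈ Ioo (0:ℝ) 1, ∀ z, ‖bogφ ω f x (s, z) • z‖ ≤ C * C * R := by
    intro s hs z
    by_cases hz : ‖z‖ ≤ R
    · rw [norm_smul, Real.norm_eq_abs]
      unfold bogφ
      rw [abs_mul]
      gcongr
      · exact hωC _
      · exact hfC _
    · rw [h0 s hs z (not_le.1 hz)]
      simp; positivity
  have hm : StronglyMeasurable (fun p : ℝ × EuclideanSpace ℝ (Fin n) => bogφ ω f x p • p.2) :=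
    (hc.smul continuous_snd).stronglyMeasurable
  have hcov := (bog_cov (fun p : ℝ × EuclideanSpace ℝ (Fin n) => bogφ ω f x p • p.2)
    hm (C * C * R) R hb (fun s hs z hz => by simp [h0 s hs z hz]) x).2
  have h1 : ∫ y in Ω, f y • G x y = ∫ y, f y • G x y := by
    refine setIntegral_eq_integral_of_forall_compl_eq_zero fun y hy => ?_
    rw [image_eq_zero_of_notMem_tsupport (fun h => hy (hfsupp h)), zero_smul]
  have h2 : ∫ y, f y • G x y = ∫ y, ∫ s in Ioo (0:ℝ) 1, (s ^ n)⁻¹ •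
      (bogφ ω f x (s, s⁻¹ • (x - y)) • (s⁻¹ • (x - y))) := by
    refine integral_congr_ae ?_
    have : ∀ᵐ y : EuclideanSpace ℝ (Fin n), y ≠ x := by
      simp [ae_iff]
    filter_upwards [this] with y hy
    rw [hG x y hy.symm, ← integral_smul]
    refine setIntegral_congr_fun measurableSet_Ioo fun s hs => ?_
    have hs0 : s ≠ 0 := hs.1.ne'
    have e1 : x - s • s⁻¹ • (x - y) = y := by rw [smul_inv_smul₀ hs0]; abel
    have e2 : x + (1 - s) • s⁻¹ • (x - y) = y + s⁻¹ • (x - y) := by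
      rw [sub_smul, one_smul, smul_inv_smul₀ hs0]; abel
    simp only [bogφ, e1, e2]
    simp only [smul_smul]
    congr 1
    ring
  rw [h1, h2]
  simp only at hcov
  rw [hcov]
  have hi : Integrable (fun p : ℝ × EuclideanSpace ℝ (Fin n) => bogφ ω f x p • p.2) (bogM n R) :=
    bogM_int hm.aestronglyMeasurable _ (fun s hs z _ => hb s hs z)
  have h3 := (EuclideanSpace.proj i : EuclideanSpace ℝ (Fin n) →L[ℝ] ℝ).integral_comp_comm hi
  have h4 : (EuclideanSpace.proj i : EuclideanSpace ℝ (Fin n) →L[ℝ] ℝ)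
    (∫ p, bogφ ω f x p • p.2 ∂(bogM n R)) = (∫ p, bogφ ω f x p • p.2 ∂(bogM n R)) i := rfl
  rw [← h4, ← h3]
  congr 1; ext p
  simp [mul_comm]

lemma bog_deriv {n : ℕ} {ω f : EuclideanSpace ℝ (Fin n) → ℝ}
    (hω : ContDiff ℝ 1 ω) (hf : ContDiff ℝ 1 f)
    {C : ℝ} (hC : 0 ≤ C) (hωC : ∀ y, |ω y| ≤ C) (hfC : ∀ y, |f y| ≤ C)
    (hωC' : ∀ y, ‖fderiv ℝ ω y‖ ≤ C) (hfC' : ∀ y, ‖fderiv ℝ f y‖ ≤ C) {R : ℝ} (hR : 0 ≤ R)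
    (i : Fin n) (x : EuclideanSpace ℝ (Fin n)) :
    HasFDerivAt (fun x => ∫ p, p.2 i * bogφ ω f x p ∂(bogM n R))
      (∫ p, bogF' i ω f x p ∂(bogM n R)) x := by
  have hc := fun x => (bogφ_contDiff hω hf x).continuous
  have hc' := bogF'_cont i hω hf x
  refine hasFDerivAt_integral_of_dominated_of_fderiv_le (s := univ)
    (bound := fun _ => R * (C * C + C * C)) univ_mem ?_ ?_ hc'.aestronglyMeasurable ?_
    (integrable_const _) ?_
  · refine Eventually.of_forall fun y => ?_
    have := hc y
    exact Continuous.aestronglyMeasurable (by fun_prop)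
  · have := hc x
    have h2 : Continuous (fun p : ℝ × EuclideanSpace ℝ (Fin n) => p.2 i * bogφ ω f x p) := by
      fun_prop
    obtain ⟨D, _, hD⟩ := bogM_bdd R h2
    exact bogM_int h2.aestronglyMeasurable D (fun s hs z hz => hD s (Ioo_subset_Icc_self hs) z hz)
  · filter_upwards [bogM_ae n R] with p hp y _
    unfold bogF'
    rw [norm_smul]
    refine mul_le_mul ((bog_coord i p.2).trans hp.2) ?_ (norm_nonneg _) hR
    refine (norm_add_le _ _).trans (add_le_add ?_ ?_)
    · rw [norm_smul]
      exact mul_le_mul (hωC _) (hfC' _) (norm_nonneg _) hC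
    · rw [norm_smul]
      exact mul_le_mul (hfC _) (hωC' _) (norm_nonneg _) hC
  · exact Eventually.of_forall fun p y _ => bogF'_hasFDeriv i hω hf y p

lemma bog_A {n : ℕ} {ω f : EuclideanSpace ℝ (Fin n) → ℝ}
    (hω : ContDiff ℝ 1 ω) (hf : ContDiff ℝ 1 f) {R : ℝ} (hR : 0 ≤ R)
    (i j : Fin n)
    (Dη : EuclideanSpace ℝ (Fin n) → EuclideanSpace ℝ (Fin n) → ℝ)
    (hDη : ∀ y z, Dη y z =
      fderiv ℝ (fun w : EuclideanSpace ℝ (Fin n) => w i * ω (y + w)) z (EuclideanSpace.single j 1))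
    (x : EuclideanSpace ℝ (Fin n))
    (h0 : ∀ s ∈ Ioo (0:ℝ) 1, ∀ z, R < ‖z‖ →
      (ω (x + (1 - s) • z) = 0 ∧ fderiv ℝ ω (x + (1 - s) • z) = 0) ∨
        (f (x - s • z) = 0 ∧ fderiv ℝ f (x - s • z) = 0)) {ε : ℝ} (hε : 0 < ε) :
    ∫ y in {y : EuclideanSpace ℝ (Fin n) | ε < ‖x - y‖},
            (∫ s in Set.Ioo (0:ℝ) 1, Dη y (s⁻¹ • (x - y)) * (s ^ (n + 1))⁻¹) * f y
      = ∫ p, bogF' i ω f x p (EuclideanSpace.single j 1) * bogθ n ε p ∂(bogM n R)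
        + ∫ p, p.1⁻¹ * bogP i j (bogφ ω f x) p * bogθ n ε p ∂(bogM n R) := by
  have hφ := bogφ_contDiff hω hf x
  have cP := bogP_cont i j hφ
  have cF : Continuous (fun p => bogF' i ω f x p (EuclideanSpace.single j 1)) :=
    (bogF'_cont i hω hf x).clm_apply continuous_const
  have mθ := bogθ_meas n ε
  obtain ⟨CP, hCP0, hCP⟩ := bogM_bdd R cP
  obtain ⟨CF, hCF0, hCF⟩ := bogM_bdd R cF
  have hvF : ∀ s ∈ Ioo (0:ℝ) 1, ∀ z, R < ‖z‖ →
      bogF' i ω f x (s, z) (EuclideanSpace.single j 1) = 0 := by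
    intro s hs z hz
    rcases h0 s hs z hz with h | h <;> simp [bogF', h.1, h.2]
  have hvP : ∀ s ∈ Ioo (0:ℝ) 1, ∀ z, R < ‖z‖ → bogP i j (bogφ ω f x) (s, z) = 0 := by
    intro s hs z hz
    unfold bogP
    rw [bogφ_fderiv hω hf, bogφ]
    rcases h0 s hs z hz with h | h <;> simp [h.1, h.2]
  have b1 : ∀ s ∈ Ioo (0:ℝ) 1, ∀ z, ‖z‖ ≤ R →
      ‖bogF' i ω f x (s, z) (EuclideanSpace.single j 1) * bogθ n ε (s, z)‖ ≤ CF := by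
    intro s hs z hz
    rw [norm_mul]
    have := mul_le_mul (hCF s (Ioo_subset_Icc_self hs) z hz) (bogθ_le n ε (s, z)) (abs_nonneg _) hCF0
    simpa using this
  have b2 : ∀ s ∈ Ioo (0:ℝ) 1, ∀ z, ‖z‖ ≤ R →
      ‖s⁻¹ * bogP i j (bogφ ω f x) (s, z) * bogθ n ε (s, z)‖ ≤ R / ε * CP := by
    intro s hs z hz
    refine bog_P_chi_bound hε hs hz (hCP s (Ioo_subset_Icc_self hs) z hz) hCP0
      (bogθ_le n ε _) (fun h => ?_)
    simp [bogθ, h]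
  have m1 : Measurable (fun p => bogF' i ω f x p (EuclideanSpace.single j 1) * bogθ n ε p) := by
    fun_prop
  have m2 : Measurable (fun p => p.1⁻¹ * bogP i j (bogφ ω f x) p * bogθ n ε p) := by
    fun_prop
  rw [← integral_add (bogM_int m1.aestronglyMeasurable CF b1)
    (bogM_int m2.aestronglyMeasurable (R / ε * CP) b2)]
  have hcov := (bog_cov (fun p => bogF' i ω f x p (EuclideanSpace.single j 1) * bogθ n ε p
    + p.1⁻¹ * bogP i j (bogφ ω f x) p * bogθ n ε p) (m1.add m2).stronglyMeasurable
    (CF + R / ε * CP) R ?_ ?_ x).2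
  rotate_left
  · intro s hs z
    by_cases hz : ‖z‖ ≤ R
    · exact (norm_add_le _ _).trans (add_le_add (b1 s hs z hz) (b2 s hs z hz))
    · simp only
      rw [hvF s hs z (not_le.1 hz), hvP s hs z (not_le.1 hz)]
      simp; positivity
  · intro s hs z hz
    simp only
    rw [hvF s hs z hz, hvP s hs z hz]; simp
  rw [← hcov, ← integral_indicator (measurableSet_lt (by fun_prop) (by fun_prop))]
  congr 1; ext y
  have key : ∀ s ∈ Ioo (0:ℝ) 1, bogθ n ε (s, s⁻¹ • (x - y)) = if ε < ‖x - y‖ then 1 else 0 := by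
    intro s hs
    unfold bogθ
    simp only
    rw [norm_smul, norm_inv, Real.norm_of_nonneg hs.1.le, mul_inv_cancel_left₀ hs.1.ne']
  by_cases hy : ε < ‖x - y‖
  · rw [indicator_of_mem (by exact hy), ← integral_mul_const]
    refine setIntegral_congr_fun measurableSet_Ioo fun s hs => ?_
    have hs0 : s ≠ 0 := hs.1.ne'
    have e1 : x - s • s⁻¹ • (x - y) = y := by rw [smul_inv_smul₀ hs0]; abel
    have e2 : x + (1 - s) • s⁻¹ • (x - y) = y + s⁻¹ • (x - y) := by
      rw [sub_smul, one_smul, smul_inv_smul₀ hs0]; abel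
    have eD : ∀ z, Dη y z = (EuclideanSpace.single j (1:ℝ) : EuclideanSpace ℝ (Fin n)) i * ω (y + z)
        + z i * fderiv ℝ ω (y + z) (EuclideanSpace.single j 1) := by
      intro z
      rw [hDη]
      have h1 : HasFDerivAt (fun z : EuclideanSpace ℝ (Fin n) => z i)
        (EuclideanSpace.proj i : EuclideanSpace ℝ (Fin n) →L[ℝ] ℝ) z :=
        (EuclideanSpace.proj i : EuclideanSpace ℝ (Fin n) →L[ℝ] ℝ).hasFDerivAt
      have h2 : HasFDerivAt (fun z => ω (y + z)) (fderiv ℝ ω (y + z)) z :=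
        (hasFDerivAt_comp_add_left _).2 (hω.differentiable one_ne_zero _).hasFDerivAt
      have h3 : fderiv ℝ (fun w : EuclideanSpace ℝ (Fin n) => w i * ω (y + w)) z = _ :=
        (h1.mul h2).fderiv
      have h5 : (EuclideanSpace.proj i : EuclideanSpace ℝ (Fin n) →L[ℝ] ℝ)
        (EuclideanSpace.single j 1)
        = (EuclideanSpace.single j (1:ℝ) : EuclideanSpace ℝ (Fin n)) i := rfl
      rw [h3]
      simp only [_root_.add_apply, _root_.smul_apply, h5, smul_eq_mul]
      ring
    simp only
    rw [key s hs, if_pos hy, eD]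
    unfold bogP
    rw [bogφ_fderiv hω hf]
    simp only [bogF', bogφ, e1, e2, _root_.add_apply, _root_.smul_apply, smul_eq_mul]
    field_simp
    ring
  · rw [indicator_of_notMem (by exact hy)]
    symm
    refine (setIntegral_congr_fun measurableSet_Ioo fun s hs => ?_).trans (integral_zero _ _)
    simp only
    rw [key s hs, if_neg hy]
    simp

/-- For smooth `f` supported in `Ω`, the partial derivative
`∂u_i/∂x_j` of the Bogovskiĭ field at `x ∈ Ω` equals the principal value singular
integral plus `ω_{ij}(x) f(x)`. -/
theorem bogovskii_derivative_representation
    (n : ℕ) (hn : 2 ≤ n)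
    (Ω B : Set (EuclideanSpace ℝ (Fin n)))
    (hΩo : IsOpen Ω) (hΩb : Bornology.IsBounded Ω)
    (hBball : ∃ c r, 0 < r ∧ B = Metric.ball c r)
    (hBΩ : B ⊆ Ω)
    (hstar : ∀ x ∈ Ω, ∀ y ∈ B, segment ℝ x y ⊆ Ω)
    (ω : EuclideanSpace ℝ (Fin n) → ℝ)
    (hω : ContDiff ℝ (⊤ : ℕ∞) ω) (hωc : HasCompactSupport ω)
    (hωsupp : tsupport ω ⊆ B) (hωint : ∫ x, ω x = 1)
    (f : EuclideanSpace ℝ (Fin n) → ℝ)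
    (hf : ContDiff ℝ (⊤ : ℕ∞) f) (hfc : HasCompactSupport f)
    (hfsupp : tsupport f ⊆ Ω)
    (G : EuclideanSpace ℝ (Fin n) → EuclideanSpace ℝ (Fin n) → EuclideanSpace ℝ (Fin n))
    (hG : ∀ x y, x ≠ y → G x y =
      ∫ s in Set.Ioo (0:ℝ) 1, ((s ^ n)⁻¹ * ω (y + s⁻¹ • (x - y))) • (s⁻¹ • (x - y)))
    (hGdiag : ∀ x, G x x = 0)
    (u : EuclideanSpace ℝ (Fin n) → EuclideanSpace ℝ (Fin n))
    (hu : ∀ x, u x = ∫ y in Ω, f y • G x y)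
    (i j : Fin n)
    -- `∂η_i/∂z_j (y, z)` where `η_i (y, z) = z_i ω (y + z)`
    (Dη : EuclideanSpace ℝ (Fin n) → EuclideanSpace ℝ (Fin n) → ℝ)
    (hDη : ∀ y z, Dη y z =
      fderiv ℝ (fun w : EuclideanSpace ℝ (Fin n) => w i * ω (y + w)) z (EuclideanSpace.single j 1))
    -- `ω_{ij}(x) = ∫ (z_i z_j / |z|²) ω (x + z) dz`
    (ωij : EuclideanSpace ℝ (Fin n) → ℝ)
    (hωij : ∀ x, ωij x = ∫ z, (z i * z j / ‖z‖ ^ 2) * ω (x + z)) :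
    ∀ x ∈ Ω, ∃ L : ℝ,
      Tendsto (fun ε : ℝ =>
          ∫ y in {y : EuclideanSpace ℝ (Fin n) | ε < ‖x - y‖},
            (∫ s in Set.Ioo (0:ℝ) 1, Dη y (s⁻¹ • (x - y)) * (s ^ (n + 1))⁻¹) * f y)
        (𝓝[>] (0:ℝ)) (𝓝 L) ∧
      fderiv ℝ (fun x => u x i) x (EuclideanSpace.single j 1) = L + ωij x * f x := by
  intro x _
  have hω1 : ContDiff ℝ 1 ω := contDiff_infty.1 hω 1
  have hf1 : ContDiff ℝ 1 f := contDiff_infty.1 hf 1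
  have : Nonempty (Fin n) := ⟨i⟩
  have : Nontrivial (EuclideanSpace ℝ (Fin n)) :=
    ⟨EuclideanSpace.single i 1, 0, by simp⟩
  obtain ⟨C1, hC1, a1, a2, a3⟩ := bog_bdd hω1 hωc
  obtain ⟨C2, hC2, b1, b2, b3⟩ := bog_bdd hf1 hfc
  set C := max C1 C2 with hCdef
  have hC : 0 ≤ C := hC1.trans (le_max_left _ _)
  have l1 : C1 ≤ C := le_max_left _ _
  have l2 : C2 ≤ C := le_max_right _ _
  set X := ‖x‖ + 1 with hX
  have hX0 : 0 ≤ X := by positivity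
  set R := 2 * (C + X) with hRdef
  have hR : 0 ≤ R := by positivity
  have hvan : ∀ x', ‖x'‖ ≤ X → ∀ s ∈ Icc (0:ℝ) 1, ∀ z, R < ‖z‖ →
      (ω (x' + (1 - s) • z) = 0 ∧ fderiv ℝ ω (x' + (1 - s) • z) = 0) ∨
        (f (x' - s • z) = 0 ∧ fderiv ℝ f (x' - s • z) = 0) := by
    intro x' hx' s hs z hz
    rcases bog_van hC hx' hs hz with h | h
    · exact Or.inl (a3 _ (l1.trans_lt h))
    · exact Or.inr (b3 _ (l2.trans_lt h))
  have hvφ : ∀ x', ‖x'‖ ≤ X → ∀ s ∈ Ioo (0:ℝ) 1, ∀ z, R < ‖z‖ → bogφ ω f x' (s, z) = 0 := by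
    intro x' hx' s hs z hz
    unfold bogφ
    rcases hvan x' hx' s (Ioo_subset_Icc_self hs) z hz with h | h <;> simp [h.1]
  have hxX : ‖x‖ ≤ X := by rw [hX]; linarith
  have hev : (fun x => u x i) =ᶠ[𝓝 x] fun x => ∫ p, p.2 i * bogφ ω f x p ∂(bogM n R) := by
    filter_upwards [ball_mem_nhds x one_pos] with x' hx'
    have hx'' : ‖x'‖ ≤ X := by
      rw [mem_ball_iff_norm] at hx'
      have := norm_le_norm_add_norm_sub' x' x
      linarith
    rw [hu, bog_u hω1 hf1 hfsupp hC (fun y => (a1 y).trans l1) (fun y => (b1 y).trans l2) hR G hG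
      i x' (hvφ x' hx'')]
  have hd := (bog_deriv hω1 hf1 hC (fun y => (a1 y).trans l1) (fun y => (b1 y).trans l2)
    (fun y => (a2 y).trans l1) (fun y => (b2 y).trans l2) hR i x).congr_of_eventuallyEq hev
  have cF' := bogF'_cont i hω1 hf1 x
  have iF' : Integrable (bogF' i ω f x) (bogM n R) := by
    obtain ⟨D, _, hD⟩ := bogM_bdd R cF'
    exact bogM_int cF'.aestronglyMeasurable D
      (fun s hs z hz => hD s (Ioo_subset_Icc_self hs) z hz)
  have hder : fderiv ℝ (fun x => u x i) x (EuclideanSpace.single j 1)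
      = ∫ p, bogF' i ω f x p (EuclideanSpace.single j 1) ∂(bogM n R) := by
    rw [hd.fderiv, ContinuousLinearMap.integral_apply iF']
  have cF : Continuous (fun p => bogF' i ω f x p (EuclideanSpace.single j 1)) :=
    cF'.clm_apply continuous_const
  have lim1 : Tendsto (fun ε => ∫ p, bogF' i ω f x p (EuclideanSpace.single j 1) * bogθ n ε p
      ∂(bogM n R)) (𝓝[>] 0)
      (𝓝 (∫ p, bogF' i ω f x p (EuclideanSpace.single j 1) ∂(bogM n R))) := by
    obtain ⟨D, hD0, hD⟩ := bogM_bdd R cF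
    refine tendsto_integral_filter_of_dominated_convergence (fun _ => D) ?_ ?_
      (integrable_const _) ?_
    · refine Eventually.of_forall fun ε => ?_
      have := bogθ_meas n ε
      exact Measurable.aestronglyMeasurable (by fun_prop)
    · refine Eventually.of_forall fun ε => ?_
      filter_upwards [bogM_ae n R] with p hp
      rw [norm_mul]
      have := mul_le_mul (hD p.1 (Ioo_subset_Icc_self hp.1) p.2 hp.2) (bogθ_le n ε p)
        (abs_nonneg _) hD0
      simpa using this
    · filter_upwards [bogM_ae n R] with p hp
      by_cases hz : p.2 = 0
      · have : bogF' i ω f x p (EuclideanSpace.single j 1) = 0 := by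
          simp [bogF', hz]
        simp [this]
      · simpa using (bogθ_tendsto (n := n) hp.1.1 hz).const_mul
          (bogF' i ω f x p (EuclideanSpace.single j 1))
  have lim2 := bog_core i j (bogφ_contDiff hω1 hf1 x) R (hvφ x hxX)
  have hval : ∫ z in closedBall 0 R, bogw i j z * bogφ ω f x (0, z) = ωij x * f x := by
    rw [hωij, ← integral_mul_const, setIntegral_eq_integral_of_forall_compl_eq_zero]
    · congr 1; ext z
      simp [bogφ, bogw, mul_assoc]
    · intro z hz
      have hz' : R < ‖z‖ := by simpa using hz
      have h0 := hvan x hxX 0 (by simp) z hz'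
      simp only [bogφ]
      rcases h0 with h | h <;> rw [h.1] <;> simp
  rw [hval] at lim2
  refine ⟨_, (lim1.add lim2).congr' ?_, ?_⟩
  · filter_upwards [self_mem_nhdsWithin] with ε hε
    exact (bog_A hω1 hf1 hR i j Dη hDη x
      (fun s hs z hz => hvan x hxX s (Ioo_subset_Icc_self hs) z hz) hε).symm
  · rw [hder]; ring
end

section
/- There exists a constant C (depending only on n, Ω, ω, χ) such that for all x, y ∈ ℝⁿ with x ≠ y one has |N(x,y)| ≤ C · min(|x−y|^{−n}, |x−y|^{−(n+1)}); moreover N(x,y) = 0 whenever |x−y| ≥ d. -/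
open MeasureTheory Metric Set Filter Topology

/-- The kernel `N(x,y) = χ(x) K(y, x−y)` satisfies
`|N(x,y)| ≲ min(|x−y|^{−n}, |x−y|^{−(n+1)})`, and vanishes for `|x−y| ≥ d`. -/
theorem kernel_N_size_bound
    (n : ℕ) (hn : 2 ≤ n)
    (Ω B : Set (EuclideanSpace ℝ (Fin n)))
    (hΩo : IsOpen Ω) (hΩb : Bornology.IsBounded Ω)
    (hBball : ∃ c r, 0 < r ∧ B = Metric.ball c r)
    (hBΩ : B ⊆ Ω)
    (hstar : ∀ x ∈ Ω, ∀ y ∈ B, segment ℝ x y ⊆ Ω)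
    (ω : EuclideanSpace ℝ (Fin n) → ℝ)
    (hω : ContDiff ℝ (⊤ : ℕ∞) ω) (hωc : HasCompactSupport ω)
    (hωsupp : tsupport ω ⊆ B) (hωint : ∫ x, ω x = 1)
    (Bt : Set (EuclideanSpace ℝ (Fin n)))
    (hBt : ∃ c r, 0 < r ∧ Bt = Metric.ball c r)
    (hΩBt : closure Ω ⊆ Bt)
    (d : ℝ) (hd : d = Metric.diam Bt)
    (χ : EuclideanSpace ℝ (Fin n) → ℝ)
    (hχ : ContDiff ℝ (⊤ : ℕ∞) χ) (hχc : HasCompactSupport χ)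
    (hχsupp : tsupport χ ⊆ Bt) (hχ1 : ∀ x ∈ Ω, χ x = 1)
    (i j : Fin n)
    -- `∂η_i/∂z_j (y, z)` where `η_i (y, z) = z_i ω (y + z)`
    (Dη : EuclideanSpace ℝ (Fin n) → EuclideanSpace ℝ (Fin n) → ℝ)
    (hDη : ∀ y z, Dη y z =
      fderiv ℝ (fun w : EuclideanSpace ℝ (Fin n) => w i * ω (y + w)) z (EuclideanSpace.single j 1))
    (K : EuclideanSpace ℝ (Fin n) → EuclideanSpace ℝ (Fin n) → ℝ)
    (hK : ∀ y z, z ≠ 0 → K y z =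
      ∫ s in Set.Ioo (0:ℝ) 1, χ y * Dη y (s⁻¹ • z) * (s ^ (n + 1))⁻¹)
    (N : EuclideanSpace ℝ (Fin n) → EuclideanSpace ℝ (Fin n) → ℝ)
    (hN : ∀ x y, x ≠ y → N x y = χ x * K y (x - y)) :
    ∃ C : ℝ,
      (∀ x y, x ≠ y →
        |N x y| ≤ C * min (‖x - y‖ ^ n)⁻¹ (‖x - y‖ ^ (n + 1))⁻¹) ∧
      (∀ x y, x ≠ y → d ≤ ‖x - y‖ → N x y = 0) := by
  obtain ⟨c, ρ, hρ, rfl⟩ := hBt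
  have hn0 : (0:ℝ) < n := by exact_mod_cast (by omega : 0 < n)
  obtain ⟨A, hA⟩ := hχc.exists_bound_of_continuous hχ.continuous
  obtain ⟨M1, hM1⟩ := hωc.exists_bound_of_continuous hω.continuous
  obtain ⟨M2, hM2⟩ := (hωc.fderiv (𝕜 := ℝ)).exists_bound_of_continuous
    (hω.continuous_fderiv (by simp))
  have hA0 : 0 ≤ A := (norm_nonneg _).trans (hA 0)
  have hM10 : 0 ≤ M1 := (norm_nonneg _).trans (hM1 0)
  have hM20 : 0 ≤ M2 := (norm_nonneg _).trans (hM2 0)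
  have hχ0 : ∀ x, x ∉ Metric.ball c ρ → χ x = 0 := fun x hx =>
    image_eq_zero_of_notMem_tsupport (fun h => hx (hχsupp h))
  set R : ℝ := 2 * ρ with hR
  have hRpos : 0 < R := by positivity
  have hωB : tsupport ω ⊆ Metric.ball c ρ :=
    hωsupp.trans (hBΩ.trans (subset_closure.trans hΩBt))
  have hDf : ∀ y z, Dη y z = z i * fderiv ℝ ω (y + z) (EuclideanSpace.single j 1)
      + ω (y + z) * (EuclideanSpace.single j (1:ℝ) : EuclideanSpace ℝ (Fin n)) i := by
    intro y z
    rw [hDη]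
    have h1 : HasFDerivAt (fun w : EuclideanSpace ℝ (Fin n) => w i)
        (EuclideanSpace.proj i : EuclideanSpace ℝ (Fin n) →L[ℝ] ℝ) z :=
      (EuclideanSpace.proj i : EuclideanSpace ℝ (Fin n) →L[ℝ] ℝ).hasFDerivAt
    have h2 : HasFDerivAt (fun w => ω (y + w)) (fderiv ℝ ω (y + z)) z := by
      have h3 : HasFDerivAt ω (fderiv ℝ ω (y + z)) (y + z) :=
        (hω.differentiable (by simp) _).hasFDerivAt
      exact (h3.comp z ((hasFDerivAt_id z).const_add y) :)
    rw [show (fun w : EuclideanSpace ℝ (Fin n) => w i * ω (y + w)) =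
      (fun w => w i) * (fun w => ω (y + w)) from rfl, (h1.mul h2).fderiv]
    simp
  have hD0 : ∀ y z, y ∈ Metric.ball c ρ → R ≤ ‖z‖ → Dη y z = 0 := by
    intro y z hy hz
    have hnot : y + z ∉ tsupport ω := by
      intro h
      have h1 := hωB h
      rw [mem_ball] at h1 hy
      have h2 : ‖z‖ = dist (y + z) y := by simp [dist_eq_norm]
      have h3 := dist_triangle_right (y + z) y c
      linarith
    rw [hDf, image_eq_zero_of_notMem_tsupport hnot,
      Function.notMem_support.1 (fun h => hnot (support_fderiv_subset ℝ h))]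
    simp
  set M : ℝ := R * M2 + M1 with hM
  have hM0 : 0 ≤ M := by positivity
  have hDb : ∀ y z, ‖z‖ ≤ R → |Dη y z| ≤ M := by
    intro y z hz
    have hs : ‖(EuclideanSpace.single j (1:ℝ) : EuclideanSpace ℝ (Fin n))‖ = 1 := by simp
    have e1 : |z i| ≤ R := (PiLp.norm_apply_le z i).trans hz
    have e2 : |fderiv ℝ ω (y + z) (EuclideanSpace.single j 1)| ≤ M2 := by
      have := (fderiv ℝ ω (y + z)).le_opNorm (EuclideanSpace.single j 1)
      rw [hs, mul_one] at this
      exact this.trans (hM2 _)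
    have e3 : |ω (y + z)| ≤ M1 := hM1 _
    have e4 : |(EuclideanSpace.single j (1:ℝ) : EuclideanSpace ℝ (Fin n)) i| ≤ 1 :=
      (PiLp.norm_apply_le _ i).trans hs.le
    rw [hDf]
    refine (abs_add_le _ _).trans ?_
    rw [abs_mul, abs_mul]
    have := mul_le_mul e1 e2 (abs_nonneg _) hRpos.le
    have := mul_le_mul e3 e4 (abs_nonneg _) hM10
    linarith
  have hKb : ∀ y z, z ≠ 0 → y ∈ Metric.ball c ρ →
      |K y z| ≤ A * M * (R ^ n / n) * (‖z‖ ^ n)⁻¹ := by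
    intro y z hz hy
    have hz0 : 0 < ‖z‖ := norm_pos_iff.2 hz
    have ha : 0 < ‖z‖ / R := by positivity
    have hexp : (-((n:ℝ) + 1)) < -1 := by linarith
    have hint := (integrableOn_Ioi_rpow_of_lt hexp ha).const_mul (A * M)
    have hg : Integrable ((Ioi (‖z‖ / R)).indicator
        (fun s : ℝ => A * M * s ^ (-((n:ℝ) + 1)))) :=
      (integrable_indicator_iff measurableSet_Ioi).2 hint
    have hg0 : ∀ s, 0 ≤ (Ioi (‖z‖ / R)).indicator
        (fun s : ℝ => A * M * s ^ (-((n:ℝ) + 1))) s := by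
      intro s
      refine indicator_nonneg (fun s hs => ?_) s
      have : 0 < s := ha.trans hs
      positivity
    rw [hK y z hz, ← Real.norm_eq_abs]
    calc
      _ ≤ ∫ s in Set.Ioo (0:ℝ) 1, (Ioi (‖z‖ / R)).indicator
            (fun s : ℝ => A * M * s ^ (-((n:ℝ) + 1))) s := by
          refine norm_integral_le_of_norm_le hg.integrableOn ?_
          filter_upwards [ae_restrict_mem measurableSet_Ioo] with s hs
          have hs0 : 0 < s := hs.1
          have hns : ‖s⁻¹ • z‖ = ‖z‖ / s := by
            rw [norm_smul, norm_inv, Real.norm_of_nonneg hs0.le]; ring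
          by_cases h : s ∈ Ioi (‖z‖ / R)
          · rw [indicator_of_mem h]
            have h' : ‖z‖ / R < s := h
            have hle : ‖s⁻¹ • z‖ ≤ R := by
              rw [hns, div_le_iff₀ hs0]
              rw [div_lt_iff₀ hRpos] at h'
              linarith
            have hp : s ^ (-((n:ℝ) + 1)) = (s ^ (n + 1))⁻¹ := by
              rw [Real.rpow_neg hs0.le]
              congr 1
              exact_mod_cast Real.rpow_natCast s (n + 1)
            rw [hp, norm_mul, norm_mul, Real.norm_of_nonneg (by positivity : 0 ≤ (s ^ (n + 1))⁻¹)]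
            have hA' := hA y
            have hDb' : ‖Dη y (s⁻¹ • z)‖ ≤ M := hDb y _ hle
            gcongr
          · rw [indicator_of_notMem h, hD0 y _ hy]
            · simp
            · rw [hns, le_div_iff₀ hs0]
              have h' : s ≤ ‖z‖ / R := not_lt.1 h
              rw [le_div_iff₀ hRpos] at h'
              linarith
      _ ≤ ∫ s, (Ioi (‖z‖ / R)).indicator
            (fun s : ℝ => A * M * s ^ (-((n:ℝ) + 1))) s :=
          setIntegral_le_integral hg (Eventually.of_forall hg0)
      _ = A * M * (R ^ n / n) * (‖z‖ ^ n)⁻¹ := by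
          rw [integral_indicator measurableSet_Ioi, integral_const_mul,
            integral_Ioi_rpow_of_lt hexp ha]
          have : -((n:ℝ) + 1) + 1 = -n := by ring
          rw [this, Real.rpow_neg ha.le, Real.rpow_natCast, div_pow]
          field_simp
  have hNz : ∀ x y, x ≠ y → ¬ (x ∈ Metric.ball c ρ ∧ y ∈ Metric.ball c ρ) → N x y = 0 := by
    intro x y hxy h
    rw [hN x y hxy]
    by_cases hx : x ∈ Metric.ball c ρ
    · have hy : χ y = 0 := hχ0 y (fun hy => h ⟨hx, hy⟩)
      rw [hK y _ (sub_ne_zero.2 hxy)]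
      simp [hy]
    · rw [hχ0 x hx, zero_mul]
  refine ⟨A * (A * M * (R ^ n / n)) * (1 + R), ?_, ?_⟩
  · intro x y hxy
    have hr : 0 < ‖x - y‖ := norm_pos_iff.2 (sub_ne_zero.2 hxy)
    by_cases h : x ∈ Metric.ball c ρ ∧ y ∈ Metric.ball c ρ
    · have hrR : ‖x - y‖ ≤ R := by
        have h1 := h.1
        have h2 := h.2
        rw [mem_ball] at h1 h2
        rw [← dist_eq_norm]
        have := dist_triangle_right x y c
        linarith
      rw [hN x y hxy, abs_mul]
      have h1 := mul_le_mul (hA x) (hKb y _ (sub_ne_zero.2 hxy) h.2) (abs_nonneg _) hA0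
      rw [Real.norm_eq_abs] at h1
      refine h1.trans ?_
      rw [← mul_assoc A, mul_assoc _ (1 + R)]
      refine mul_le_mul_of_nonneg_left ?_ (by positivity)
      have hp : 0 < (‖x - y‖ ^ n)⁻¹ := by positivity
      rcases min_choice (‖x - y‖ ^ n)⁻¹ (‖x - y‖ ^ (n + 1))⁻¹ with h | h <;> rw [h]
      · nlinarith
      · have e : (‖x - y‖ ^ n)⁻¹ = ‖x - y‖ * (‖x - y‖ ^ (n + 1))⁻¹ := by
          field_simp
          exact pow_succ _ _
        rw [e]
        gcongr
        linarith
    · rw [hNz x y hxy h, abs_zero]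
      positivity
  · intro x y hxy hdx
    refine hNz x y hxy ?_
    rintro ⟨hx, hy⟩
    have hr : 0 < ‖x - y‖ := norm_pos_iff.2 (sub_ne_zero.2 hxy)
    have hcont : Tendsto (fun t : ℝ => x + t • (x - y)) (𝓝[>] 0) (𝓝 x) := by
      have : Continuous (fun t : ℝ => x + t • (x - y)) := by fun_prop
      have h := this.tendsto 0
      simp only [zero_smul, add_zero] at h
      exact h.mono_left nhdsWithin_le_nhds
    obtain ⟨t, ht, ht0⟩ := ((hcont.eventually (isOpen_ball.mem_nhds hx)).and
      self_mem_nhdsWithin).exists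
    have ht0 : 0 < t := ht0
    have h1 := dist_le_diam_of_mem isBounded_ball ht hy
    have h2 : dist (x + t • (x - y)) y = (1 + t) * ‖x - y‖ := by
      rw [dist_eq_norm, show x + t • (x - y) - y = (1 + t) • (x - y) by module, norm_smul,
        Real.norm_of_nonneg (by positivity)]
    rw [h2, ← hd] at h1
    nlinarith
end

section
/- There exists a constant C (depending only on n, Ω, ω, χ) such that for all x, y, ȳ ∈ ℝⁿ with 2|y−ȳ| < |x−y| one has |N(x,y) − N(x,ȳ)| ≤ C |y−ȳ| / |x−y|^{n+1}. -/
open MeasureTheory Metric Set Filter Topology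

/-- The abstract kernel bound. -/
theorem kernel_aux {E : Type*} [NormedAddCommGroup E] [NormedSpace ℝ E] (n : ℕ)
    (G : E × E → ℝ) (hGc : Continuous G) (M L D : ℝ) (hL : 0 ≤ L)
    (hD : 0 < D) (hM : ∀ p, |G p| ≤ M) (hLip : ∀ p q, |G p - G q| ≤ L * ‖p - q‖)
    (hv : ∀ p : E × E, D ≤ ‖p.2‖ → G p = 0) (x y y' : E) (h : 2 * ‖y - y'‖ < ‖x - y‖) :
    |(∫ s in Set.Ioo (0:ℝ) 1, G (y, s⁻¹ • (x - y)) * (s ^ (n + 1))⁻¹)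
      - ∫ s in Set.Ioo (0:ℝ) 1, G (y', s⁻¹ • (x - y')) * (s ^ (n + 1))⁻¹| ≤
      (L * (2 * D) ^ (n + 1)) * ‖y - y'‖ / ‖x - y‖ ^ (n + 1) := by
  have hr : 0 < ‖x - y‖ := lt_of_le_of_lt (by positivity) h
  set r := ‖x - y‖ with hrdef
  set a := r / (2 * D) with ha
  have ha0 : 0 < a := by positivity
  have hxy' : r / 2 ≤ ‖x - y'‖ := by
    have : r ≤ ‖x - y'‖ + ‖y - y'‖ := by
      rw [hrdef]
      calc ‖x - y‖ = ‖(x - y') - (y - y')‖ := by congr 1; abel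
        _ ≤ _ := norm_sub_le _ _
    linarith
  -- vanishing for small s
  have hvan : ∀ u : E, r / 2 ≤ ‖x - u‖ → ∀ s : ℝ, 0 < s → s ≤ a →
      G (u, s⁻¹ • (x - u)) = 0 := by
    intro u hu s hs hsa
    apply hv
    simp only [norm_smul, norm_inv, Real.norm_eq_abs, abs_of_pos hs]
    rw [inv_mul_eq_div, le_div_iff₀ hs]
    calc D * s ≤ D * a := by gcongr
      _ = r / 2 := by rw [ha]; field_simp
      _ ≤ _ := hu
  have hIoi : ∀ k : ℕ, 1 ≤ k → IntegrableOn (fun s : ℝ => (s ^ (k + 1))⁻¹) (Ioi a) := by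
    intro k hk
    have h1 := integrableOn_Ioi_rpow_of_lt (a := -((k:ℝ) + 1)) (c := a)
      (by have : (1:ℝ) ≤ k := by exact_mod_cast hk
          linarith) ha0
    refine h1.congr_fun (fun s hs => ?_) measurableSet_Ioi
    have hs0 : 0 < s := ha0.trans hs
    simp only
    rw [Real.rpow_neg hs0.le]
    norm_cast
  have hIval : ∫ s in Ioi a, (s ^ (n + 2))⁻¹ = (a ^ (n + 1))⁻¹ / (n + 1) := by
    have h1 := integral_Ioi_rpow_of_lt (a := -((n:ℝ) + 2)) (c := a)
      (by have : (0:ℝ) ≤ n := by positivity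
          linarith) ha0
    rw [setIntegral_congr_fun (g := fun s : ℝ => s ^ (-((n:ℝ) + 2))) measurableSet_Ioi, h1]
    · have : -((n:ℝ) + 2) + 1 = -(((n + 1 : ℕ) : ℝ)) := by push_cast; ring
      rw [this, Real.rpow_neg ha0.le, Real.rpow_natCast]
      push_cast
      rw [neg_div_neg_eq]
    · intro s hs
      have hs0 : 0 < s := ha0.trans hs
      simp only
      rw [Real.rpow_neg hs0.le]
      norm_cast
  have hint : ∀ u : E, r / 2 ≤ ‖x - u‖ →
      IntegrableOn (fun s : ℝ => G (u, s⁻¹ • (x - u)) * (s ^ (n + 1))⁻¹) (Ioo 0 1) := by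
    intro u hu
    have hb : Integrable (fun s : ℝ => M * (a ^ (n + 1))⁻¹) (volume.restrict (Ioo (0:ℝ) 1)) :=
      integrable_const _
    refine hb.mono' ?_ ?_
    · apply ContinuousOn.aestronglyMeasurable _ measurableSet_Ioo
      intro s hs
      have hs0 : s ≠ 0 := hs.1.ne'
      apply ContinuousAt.continuousWithinAt
      apply ContinuousAt.mul
      · apply hGc.continuousAt.comp
        have := continuousAt_inv₀ hs0
        fun_prop
      · have := pow_ne_zero (n + 1) hs0
        fun_prop (disch := assumption)
    · refine (ae_restrict_iff' measurableSet_Ioo).2 (Eventually.of_forall fun s hs => ?_)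
      have hM0 : 0 ≤ M := (abs_nonneg _).trans (hM (u, u))
      rcases le_or_gt s a with hsa | hsa
      · rw [hvan u hu s hs.1 hsa]
        simp only [zero_mul, norm_zero]; positivity
      · rw [norm_mul, Real.norm_eq_abs, Real.norm_eq_abs,
          abs_of_nonneg (a := (s ^ (n+1))⁻¹) (by have := hs.1; positivity)]
        have hs0 := hs.1
        have hb1 : (s ^ (n + 1))⁻¹ ≤ (a ^ (n + 1))⁻¹ := by gcongr
        exact mul_le_mul (hM _) hb1 (by positivity) hM0
  have hy : r / 2 ≤ ‖x - y‖ := by linarith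
  rw [← integral_sub (hint y hy) (hint y' hxy'), ← Real.norm_eq_abs]
  have hkey : ∀ s ∈ Ioo (0:ℝ) 1, ‖G (y, s⁻¹ • (x - y)) * (s ^ (n + 1))⁻¹ -
      G (y', s⁻¹ • (x - y')) * (s ^ (n + 1))⁻¹‖ ≤
      (Ioi a).indicator (fun s => L * ‖y - y'‖ * (s ^ (n + 2))⁻¹) s := by
    intro s hs
    have hs0 := hs.1
    rcases le_or_gt s a with hsa | hsa
    · rw [hvan y hy s hs0 hsa, hvan y' hxy' s hs0 hsa]
      rw [indicator_of_notMem (by simpa using hsa)]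
      simp
    · rw [indicator_of_mem (by simpa using hsa), ← sub_mul, norm_mul, Real.norm_eq_abs,
        Real.norm_eq_abs, abs_of_nonneg (a := (s ^ (n+1))⁻¹) (by positivity)]
      have h1 : ‖((y, s⁻¹ • (x - y)) : E × E) - (y', s⁻¹ • (x - y'))‖ ≤ ‖y - y'‖ * s⁻¹ := by
        rw [Prod.mk_sub_mk, Prod.norm_mk, ← smul_sub, sub_sub_sub_cancel_left, norm_smul,
          norm_inv, Real.norm_eq_abs, abs_of_pos hs0, norm_sub_rev y' y]
        apply max_le
        · have : 1 ≤ s⁻¹ := (one_le_inv₀ hs0).2 hs.2.le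
          exact le_mul_of_one_le_right (norm_nonneg _) this
        · rw [mul_comm]
      calc _ ≤ (L * (‖y - y'‖ * s⁻¹)) * (s ^ (n+1))⁻¹ := by
            gcongr
            exact (hLip _ _).trans (by gcongr)
        _ = _ := by rw [pow_succ s (n+1), mul_inv]; ring
  have hgi : Integrable ((Ioi a).indicator (fun s : ℝ => L * ‖y - y'‖ * (s ^ (n + 2))⁻¹)) := by
    rw [integrable_indicator_iff measurableSet_Ioi]
    exact (hIoi (n+1) (by omega)).const_mul _
  calc _ ≤ ∫ s in Ioo (0:ℝ) 1, (Ioi a).indicator (fun s => L * ‖y - y'‖ * (s ^ (n + 2))⁻¹) s :=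
        norm_integral_le_of_norm_le hgi.integrableOn
          ((ae_restrict_iff' measurableSet_Ioo).2 (Eventually.of_forall hkey))
    _ ≤ ∫ s, (Ioi a).indicator (fun s : ℝ => L * ‖y - y'‖ * (s ^ (n + 2))⁻¹) s := by
        apply setIntegral_le_integral hgi
        refine Eventually.of_forall fun s => ?_
        apply indicator_nonneg
        intro s hs
        have : 0 < s := ha0.trans hs
        positivity
    _ = L * ‖y - y'‖ * ((a ^ (n + 1))⁻¹ / (n + 1)) := by
        rw [integral_indicator measurableSet_Ioi, integral_const_mul, hIval]
    _ ≤ L * ‖y - y'‖ * ((a ^ (n + 1))⁻¹) := by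
        gcongr
        apply div_le_self (by positivity)
        have : (0:ℝ) ≤ n := by positivity
        linarith
    _ = _ := by rw [ha, div_pow, inv_div]; ring

/-- The kernel `N(x,y) = χ(x) K(y, x−y)` satisfies the Hörmander-type
regularity estimate `|N(x,y) − N(x,y')| ≲ |y−y'| / |x−y|^{n+1}` for `2|y−y'| < |x−y|`. -/
theorem kernel_N_regularity_bound
    (n : ℕ) (hn : 2 ≤ n)
    (Ω B : Set (EuclideanSpace ℝ (Fin n)))
    (hΩo : IsOpen Ω) (hΩb : Bornology.IsBounded Ω)
    (hBball : ∃ c r, 0 < r ∧ B = Metric.ball c r)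
    (hBΩ : B ⊆ Ω)
    (hstar : ∀ x ∈ Ω, ∀ y ∈ B, segment ℝ x y ⊆ Ω)
    (ω : EuclideanSpace ℝ (Fin n) → ℝ)
    (hω : ContDiff ℝ (⊤ : ℕ∞) ω) (hωc : HasCompactSupport ω)
    (hωsupp : tsupport ω ⊆ B) (hωint : ∫ x, ω x = 1)
    (Bt : Set (EuclideanSpace ℝ (Fin n)))
    (hBt : ∃ c r, 0 < r ∧ Bt = Metric.ball c r)
    (hΩBt : closure Ω ⊆ Bt)
    (d : ℝ) (hd : d = Metric.diam Bt)
    (χ : EuclideanSpace ℝ (Fin n) → ℝ)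
    (hχ : ContDiff ℝ (⊤ : ℕ∞) χ) (hχc : HasCompactSupport χ)
    (hχsupp : tsupport χ ⊆ Bt) (hχ1 : ∀ x ∈ Ω, χ x = 1)
    (i j : Fin n)
    -- `∂η_i/∂z_j (y, z)` where `η_i (y, z) = z_i ω (y + z)`
    (Dη : EuclideanSpace ℝ (Fin n) → EuclideanSpace ℝ (Fin n) → ℝ)
    (hDη : ∀ y z, Dη y z =
      fderiv ℝ (fun w : EuclideanSpace ℝ (Fin n) => w i * ω (y + w)) z (EuclideanSpace.single j 1))
    (K : EuclideanSpace ℝ (Fin n) → EuclideanSpace ℝ (Fin n) → ℝ)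
    (hK : ∀ y z, z ≠ 0 → K y z =
      ∫ s in Set.Ioo (0:ℝ) 1, χ y * Dη y (s⁻¹ • z) * (s ^ (n + 1))⁻¹)
    (N : EuclideanSpace ℝ (Fin n) → EuclideanSpace ℝ (Fin n) → ℝ)
    (hN : ∀ x y, x ≠ y → N x y = χ x * K y (x - y)) :
    ∃ C : ℝ, ∀ x y y' : EuclideanSpace ℝ (Fin n),
      2 * ‖y - y'‖ < ‖x - y‖ →
      |N x y - N x y'| ≤ C * ‖y - y'‖ / ‖x - y‖ ^ (n + 1) := by
  classical
  set e : EuclideanSpace ℝ (Fin n) := EuclideanSpace.single j 1 with he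
  have hωd : Differentiable ℝ ω := hω.differentiable (by simp)
  have hD : ∀ y z, Dη y z = z i * fderiv ℝ ω (y + z) e + ω (y + z) * e i := by
    intro y z
    rw [hDη]
    have h1 : HasFDerivAt (fun w : EuclideanSpace ℝ (Fin n) => w i)
        (EuclideanSpace.proj i : EuclideanSpace ℝ (Fin n) →L[ℝ] ℝ) z :=
      (EuclideanSpace.proj i : EuclideanSpace ℝ (Fin n) →L[ℝ] ℝ).hasFDerivAt
    have h2 : HasFDerivAt (fun w : EuclideanSpace ℝ (Fin n) => ω (y + w))
        (fderiv ℝ ω (y + z)) z := by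
      have := (hωd (y + z)).hasFDerivAt.comp z ((hasFDerivAt_id z).const_add y)
      rw [ContinuousLinearMap.comp_id] at this
      exact this
    have h3 : HasFDerivAt (fun w : EuclideanSpace ℝ (Fin n) => w i * ω (y + w)) _ z := h1.mul h2
    rw [h3.fderiv]
    simp
  let G : EuclideanSpace ℝ (Fin n) × EuclideanSpace ℝ (Fin n) → ℝ := fun p =>
    χ p.1 * (p.2 i * fderiv ℝ ω (p.1 + p.2) e + ω (p.1 + p.2) * e i)
  have hG1 : ContDiff ℝ 1 G := by
    have h1 : ContDiff ℝ 1 (fderiv ℝ ω) := hω.fderiv_right (by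
      have : ((2 : ℕ∞) : WithTop ℕ∞) ≤ ((⊤ : ℕ∞) : WithTop ℕ∞) := WithTop.coe_le_coe.2 le_top
      have h2 : (1 + 1 : WithTop ℕ∞) = ((2 : ℕ∞) : WithTop ℕ∞) := by norm_num
      rw [h2]; exact this)
    have h2 : ContDiff ℝ 1 ω := hω.of_le (by exact_mod_cast le_top)
    have h3 : ContDiff ℝ 1 χ := hχ.of_le (by exact_mod_cast le_top)
    have h4 : ContDiff ℝ 1 (fun p : EuclideanSpace ℝ (Fin n) × EuclideanSpace ℝ (Fin n) =>
        p.2 i) :=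
      ((EuclideanSpace.proj i : EuclideanSpace ℝ (Fin n) →L[ℝ] ℝ).contDiff).comp contDiff_snd
    have h5 : ContDiff ℝ 1 (fun p : EuclideanSpace ℝ (Fin n) × EuclideanSpace ℝ (Fin n) =>
        p.1 + p.2) := contDiff_fst.add contDiff_snd
    exact (h3.comp contDiff_fst).mul
      ((h4.mul ((h1.comp h5).clm_apply contDiff_const)).add ((h2.comp h5).mul contDiff_const))
  obtain ⟨R1, hR1⟩ := hωc.isCompact.isBounded.subset_closedBall (0 : EuclideanSpace ℝ (Fin n))
  obtain ⟨R2, hR2⟩ := hχc.isCompact.isBounded.subset_closedBall (0 : EuclideanSpace ℝ (Fin n))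
  have hω0 : ∀ z, R1 < ‖z‖ → ω z = 0 ∧ fderiv ℝ ω z = 0 := by
    intro z hz
    have hz' : z ∉ tsupport ω := fun hh => by
      have := hR1 hh
      simp only [mem_closedBall, dist_zero_right] at this
      linarith
    exact ⟨image_eq_zero_of_notMem_tsupport hz', by
      by_contra hne
      exact hz' (support_fderiv_subset ℝ hne)⟩
  have hχ0 : ∀ z, R2 < ‖z‖ → χ z = 0 := by
    intro z hz
    have hz' : z ∉ tsupport χ := fun hh => by
      have := hR2 hh
      simp only [mem_closedBall, dist_zero_right] at this
      linarith
    exact image_eq_zero_of_notMem_tsupport hz'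
  have hGv : ∀ p, R1 + R2 < ‖p.2‖ → G p = 0 := by
    intro p hp
    rcases lt_or_ge R2 ‖p.1‖ with h | h
    · simp [G, hχ0 _ h]
    · have : ‖p.2‖ ≤ ‖p.1 + p.2‖ + ‖p.1‖ := by
        calc ‖p.2‖ = ‖(p.1 + p.2) - p.1‖ := by congr 1; abel
          _ ≤ _ := norm_sub_le _ _
      obtain ⟨h1, h2⟩ := hω0 (p.1 + p.2) (by linarith)
      simp [G, h1, h2]
  have hGc : HasCompactSupport G := by
    refine HasCompactSupport.intro ((isCompact_closedBall 0 R2).prod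
      (isCompact_closedBall 0 (R1 + R2))) ?_
    intro p hp
    simp only [mem_prod, mem_closedBall, dist_zero_right, not_and_or, not_le] at hp
    rcases hp with h | h
    · simp [G, hχ0 _ h]
    · exact hGv p h
  obtain ⟨L, hL⟩ := hG1.lipschitzWith_of_hasCompactSupport hGc (by simp)
  obtain ⟨M, hM⟩ := hGc.exists_bound_of_continuous hG1.continuous
  obtain ⟨X, hX⟩ := hχc.exists_bound_of_continuous hχ.continuous
  have hX0 : 0 ≤ X := (norm_nonneg _).trans (hX 0)
  set D : ℝ := |R1 + R2| + 1 with hDdef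
  have hmain := kernel_aux n G hG1.continuous M L D L.2 (by positivity) hM
    (fun p q => by simpa [Real.dist_eq, dist_eq_norm] using hL.dist_le_mul p q)
    (fun p hp => hGv p (by have := le_abs_self (R1 + R2); linarith))
  refine ⟨X * (L * (2 * D) ^ (n + 1)), fun x y y' h => ?_⟩
  have hxy : x ≠ y := by
    rintro rfl
    have := norm_nonneg (x - y')
    simp at h
    linarith
  have hxy' : x ≠ y' := by
    rintro rfl
    have := norm_nonneg (x - y)
    rw [norm_sub_rev y x] at h
    linarith
  have hKG : ∀ u, x ≠ u → N x u =
      χ x * ∫ s in Set.Ioo (0:ℝ) 1, G (u, s⁻¹ • (x - u)) * (s ^ (n + 1))⁻¹ := by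
    intro u hu
    rw [hN x u hu, hK u _ (sub_ne_zero.2 hu)]
    simp only [hD, G]
  rw [hKG y hxy, hKG y' hxy', ← mul_sub, abs_mul]
  calc _ ≤ X * ((L * (2 * D) ^ (n + 1)) * ‖y - y'‖ / ‖x - y‖ ^ (n + 1)) := by
        gcongr
        · exact hX x
        · exact hmain x y y' h
    _ = _ := by ring
end

section
/- For every y ∈ ℝⁿ, the function σ ↦ K₁(y,σ) = ∫₀^∞ χ(y) (∂η_i/∂z_j)(y, σ/s) s^{−(n+1)} ds has zero mean on the unit sphere: ∫_{S^{n−1}} K₁(y,σ) dσ = 0, where dσ is the surface measure on the unit sphere S^{n−1} ⊂ ℝⁿ. -/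
open MeasureTheory Metric Set Filter Topology

/-- Integration in polar coordinates. -/
theorem polar_integral_aux {E : Type*} [NormedAddCommGroup E] [NormedSpace ℝ E]
    [MeasurableSpace E] [BorelSpace E] [FiniteDimensional ℝ E] [Nontrivial E]
    (μ : Measure E) [μ.IsAddHaarMeasure] (f : E → ℝ) (hf : Integrable f μ) :
    ∫ σ : sphere (0 : E) 1, (∫ r in Ioi (0 : ℝ), r ^ (Module.finrank ℝ E - 1) * f (r • (σ : E)))
      ∂μ.toSphere = ∫ x, f x ∂μ := by
  set F : sphere (0 : E) 1 × Ioi (0 : ℝ) → ℝ := fun p => f ((p.2 : ℝ) • (p.1 : E)) with hF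
  have hcomp : ∀ x : ({(0)}ᶜ : Set E), F (homeomorphUnitSphereProd E x) = f x := by
    intro x
    have h := congrArg Subtype.val ((homeomorphUnitSphereProd E).symm_apply_apply x)
    rw [homeomorphUnitSphereProd_symm_apply_coe] at h
    simp only [hF]
    rw [h]
  have hmp := μ.measurePreserving_homeomorphUnitSphereProd
  have hFi : Integrable F (μ.toSphere.prod (.volumeIoiPow (Module.finrank ℝ E - 1))) := by
    rw [← hmp.integrable_comp_emb (Homeomorph.measurableEmbedding _)]
    have h1 : F ∘ (homeomorphUnitSphereProd E) = f ∘ Subtype.val := funext hcomp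
    rw [h1, ← integrableOn_iff_comap_subtypeVal (measurableSet_singleton _).compl]
    exact hf.integrableOn
  have h2 : ∫ x, f x ∂μ = ∫ p, F p ∂(μ.toSphere.prod (.volumeIoiPow (Module.finrank ℝ E - 1))) := by
    rw [← hmp.integral_comp (Homeomorph.measurableEmbedding _)]
    simp only [hcomp]
    rw [integral_subtype_comap (measurableSet_singleton _).compl f, restrict_compl_singleton]
  rw [h2, integral_prod _ hFi]
  congr 1
  ext σ
  simp only [Measure.volumeIoiPow, ENNReal.ofReal, hF]
  rw [integral_withDensity_eq_integral_smul,
    integral_subtype_comap measurableSet_Ioi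
      fun a : ℝ ↦ Real.toNNReal (a ^ (Module.finrank ℝ E - 1)) • f (a • (σ : E))]
  · refine setIntegral_congr_fun measurableSet_Ioi fun x hx ↦ ?_
    simp only [NNReal.smul_def, Real.coe_toNNReal _ (pow_nonneg hx.out.le _), smul_eq_mul]
  · exact (measurable_subtype_coe.pow_const _).real_toNNReal

/-- The substitution `s = 1 / r`. -/
theorem inv_subst_aux (n : ℕ) (hn : 1 ≤ n) (g : ℝ → ℝ) :
    ∫ s in Ioi (0 : ℝ), g s⁻¹ * (s ^ (n + 1))⁻¹ = ∫ r in Ioi (0 : ℝ), r ^ (n - 1) * g r := by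
  rw [← integral_comp_rpow_Ioi (fun r => r ^ (n - 1) * g r) (p := -1) (by norm_num)]
  refine setIntegral_congr_fun measurableSet_Ioi fun x hx ↦ ?_
  have hx0 : (0 : ℝ) < x := hx
  obtain ⟨m, rfl⟩ : ∃ m, n = m + 1 := ⟨n - 1, by omega⟩
  have h1 : x ^ (-1 - 1 : ℝ) = (x ^ 2)⁻¹ := by
    rw [show (-1 - 1 : ℝ) = -((2 : ℕ) : ℝ) by norm_num, Real.rpow_neg hx0.le, Real.rpow_natCast]
  simp only [h1, Real.rpow_neg_one, smul_eq_mul, abs_neg, abs_one, Nat.add_sub_cancel]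
  generalize g x⁻¹ = c
  ring

/-- The integral of a directional derivative of a compactly supported function vanishes. -/
theorem integral_fderiv_aux {E : Type*} [NormedAddCommGroup E] [NormedSpace ℝ E]
    [MeasurableSpace E] [BorelSpace E] [FiniteDimensional ℝ E]
    (μ : Measure E) [μ.IsAddHaarMeasure] (g : E → ℝ) (hg : ContDiff ℝ 1 g)
    (hc : HasCompactSupport g) (v : E) :
    Integrable (fun x => fderiv ℝ g x v) μ ∧ ∫ x, fderiv ℝ g x v ∂μ = 0 := by
  have hi : Integrable (fun x => fderiv ℝ g x v) μ :=
    ((hg.continuous_fderiv (by norm_num)).clm_apply continuous_const).integrable_of_hasCompactSupport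
      (hc.fderiv_apply ℝ v)
  refine ⟨hi, ?_⟩
  have h := integral_mul_fderiv_eq_neg_fderiv_mul_of_integrable (μ := μ) (f := fun _ : E => (1 : ℝ))
    (g := g) (v := v) (by simp) (by simpa using hi)
    (by simpa using hg.continuous.integrable_of_hasCompactSupport hc)
    (fun x _ => by fun_prop) (fun x _ => hg.differentiable (by norm_num) x)
  simpa using h

/-- The kernel `K₁(y,σ) = ∫₀^∞ χ(y) (∂η_i/∂z_j)(y, σ/s) s^{−(n+1)} ds`
has zero mean over the unit sphere (with its surface measure). -/
theorem K1_zero_mean_on_sphere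
    (n : ℕ) (hn : 2 ≤ n)
    (Ω B : Set (EuclideanSpace ℝ (Fin n)))
    (hΩo : IsOpen Ω) (hΩb : Bornology.IsBounded Ω)
    (hBball : ∃ c r, 0 < r ∧ B = Metric.ball c r)
    (hBΩ : B ⊆ Ω)
    (hstar : ∀ x ∈ Ω, ∀ y ∈ B, segment ℝ x y ⊆ Ω)
    (ω : EuclideanSpace ℝ (Fin n) → ℝ)
    (hω : ContDiff ℝ (⊤ : ℕ∞) ω) (hωc : HasCompactSupport ω)
    (hωsupp : tsupport ω ⊆ B) (hωint : ∫ x, ω x = 1)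
    (Bt : Set (EuclideanSpace ℝ (Fin n)))
    (hBt : ∃ c r, 0 < r ∧ Bt = Metric.ball c r)
    (hΩBt : closure Ω ⊆ Bt)
    (d : ℝ) (hd : d = Metric.diam Bt)
    (χ : EuclideanSpace ℝ (Fin n) → ℝ)
    (hχ : ContDiff ℝ (⊤ : ℕ∞) χ) (hχc : HasCompactSupport χ)
    (hχsupp : tsupport χ ⊆ Bt) (hχ1 : ∀ x ∈ Ω, χ x = 1)
    (i j : Fin n)
    -- `∂η_i/∂z_j (y, z)` where `η_i (y, z) = z_i ω (y + z)`
    (Dη : EuclideanSpace ℝ (Fin n) → EuclideanSpace ℝ (Fin n) → ℝ)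
    (hDη : ∀ y z, Dη y z =
      fderiv ℝ (fun w : EuclideanSpace ℝ (Fin n) => w i * ω (y + w)) z (EuclideanSpace.single j 1))
    (K₁ : EuclideanSpace ℝ (Fin n) → EuclideanSpace ℝ (Fin n) → ℝ)
    (hK₁ : ∀ y z, K₁ y z =
      ∫ s in Set.Ioi (0:ℝ), χ y * Dη y (s⁻¹ • z) * (s ^ (n + 1))⁻¹) :
    ∀ y : EuclideanSpace ℝ (Fin n),
      ∫ σ : Metric.sphere (0 : EuclideanSpace ℝ (Fin n)) 1, K₁ y ↑σ
        ∂((volume : Measure (EuclideanSpace ℝ (Fin n))).toSphere) = 0 := by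
  intro y
  haveI : Nonempty (Fin n) := ⟨i⟩
  set g : EuclideanSpace ℝ (Fin n) → ℝ := fun w => w i * ω (y + w) with hg
  have hgd : ContDiff ℝ 1 g := by
    have h1 : ContDiff ℝ 1 ω := hω.of_le (by exact_mod_cast le_top)
    have h2 : ContDiff ℝ 1 (fun w : EuclideanSpace ℝ (Fin n) => w i) :=
      (EuclideanSpace.proj (𝕜 := ℝ) i).contDiff
    exact h2.mul (h1.comp (contDiff_const.add contDiff_id))
  have hgc : HasCompactSupport g :=
    (hωc.comp_homeomorph (Homeomorph.addLeft y)).mul_left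
  obtain ⟨hi, h0⟩ := integral_fderiv_aux volume g hgd hgc (EuclideanSpace.single j 1)
  have hp := polar_integral_aux volume _ (hi.const_mul (χ y))
  rw [integral_const_mul, h0, mul_zero, finrank_euclideanSpace_fin] at hp
  rw [← hp]
  congr 1
  ext σ
  rw [hK₁, ← inv_subst_aux n (by omega)
    (fun r => χ y * fderiv ℝ g (r • (σ : EuclideanSpace ℝ (Fin n))) (EuclideanSpace.single j 1))]
  simp only [hDη, hg]
end

section
/- Define K₂(y,z) = ∫₁^∞ χ(y) (∂η_i/∂z_j)(y, z/s) s^{−(n+1)} ds. Then there is a constant C (depending only on n, ω, χ) such that |K₂(y,z)| ≤ C for all y, z ∈ ℝⁿ; moreover χ(x) K₂(y, x−y) = 0 whenever |x−y| > 2d. -/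
open MeasureTheory Metric Set Filter Topology

/-- The kernel `K₂(y,z) = ∫₁^∞ χ(y) (∂η_i/∂z_j)(y, z/s) s^{−(n+1)} ds`
is uniformly bounded, and `χ(x) K₂(y, x−y) = 0` whenever `|x−y| > 2d`. -/
theorem K2_bounded_and_compactly_supported
    (n : ℕ) (hn : 2 ≤ n)
    (Ω B : Set (EuclideanSpace ℝ (Fin n)))
    (hΩo : IsOpen Ω) (hΩb : Bornology.IsBounded Ω)
    (hBball : ∃ c r, 0 < r ∧ B = Metric.ball c r)
    (hBΩ : B ⊆ Ω)
    (hstar : ∀ x ∈ Ω, ∀ y ∈ B, segment ℝ x y ⊆ Ω)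
    (ω : EuclideanSpace ℝ (Fin n) → ℝ)
    (hω : ContDiff ℝ (⊤ : ℕ∞) ω) (hωc : HasCompactSupport ω)
    (hωsupp : tsupport ω ⊆ B) (hωint : ∫ x, ω x = 1)
    (Bt : Set (EuclideanSpace ℝ (Fin n)))
    (hBt : ∃ c r, 0 < r ∧ Bt = Metric.ball c r)
    (hΩBt : closure Ω ⊆ Bt)
    (d : ℝ) (hd : d = Metric.diam Bt)
    (χ : EuclideanSpace ℝ (Fin n) → ℝ)
    (hχ : ContDiff ℝ (⊤ : ℕ∞) χ) (hχc : HasCompactSupport χ)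
    (hχsupp : tsupport χ ⊆ Bt) (hχ1 : ∀ x ∈ Ω, χ x = 1)
    (i j : Fin n)
    -- `∂η_i/∂z_j (y, z)` where `η_i (y, z) = z_i ω (y + z)`
    (Dη : EuclideanSpace ℝ (Fin n) → EuclideanSpace ℝ (Fin n) → ℝ)
    (hDη : ∀ y z, Dη y z =
      fderiv ℝ (fun w : EuclideanSpace ℝ (Fin n) => w i * ω (y + w)) z (EuclideanSpace.single j 1))
    (K₂ : EuclideanSpace ℝ (Fin n) → EuclideanSpace ℝ (Fin n) → ℝ)
    (hK₂ : ∀ y z, K₂ y z =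
      ∫ s in Set.Ioi (1:ℝ), χ y * Dη y (s⁻¹ • z) * (s ^ (n + 1))⁻¹) :
    ∃ C : ℝ,
      (∀ y z : EuclideanSpace ℝ (Fin n), |K₂ y z| ≤ C) ∧
      (∀ x y : EuclideanSpace ℝ (Fin n), 2 * d < ‖x - y‖ → χ x * K₂ y (x - y) = 0) := by
  -- support part is immediate, so first bound the integrand
  have hωcont : Continuous (fderiv ℝ ω) := hω.continuous_fderiv (by simp)
  have hωdiff : Differentiable ℝ ω := hω.differentiable (by simp)
  have hDc : HasCompactSupport (fderiv ℝ ω) := hωc.fderiv ℝ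
  obtain ⟨A, hA⟩ := hωc.exists_bound_of_continuous hω.continuous
  obtain ⟨D, hD⟩ := hDc.exists_bound_of_continuous hωcont
  obtain ⟨X, hX⟩ := hχc.exists_bound_of_continuous hχ.continuous
  obtain ⟨E, hE⟩ := (hDc.smul_left (f := fun u => ‖u‖)).exists_bound_of_continuous
    (continuous_norm.smul hωcont)
  obtain ⟨Y, hY⟩ := (hχc.smul_left (f := fun u => ‖u‖)).exists_bound_of_continuous
    (continuous_norm.smul hχ.continuous)
  have hM : ∀ y w, |χ y * Dη y w| ≤ X * A + X * E + Y * D := by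
    intro y w
    have hform : Dη y w = w i * fderiv ℝ ω (y + w) (EuclideanSpace.single j 1)
        + ω (y + w) * (EuclideanSpace.single j (1:ℝ) : EuclideanSpace ℝ (Fin n)) i := by
      rw [hDη]
      have h1 : HasFDerivAt (fun w : EuclideanSpace ℝ (Fin n) => w i)
          (EuclideanSpace.proj i : EuclideanSpace ℝ (Fin n) →L[ℝ] ℝ) w :=
        (EuclideanSpace.proj i : EuclideanSpace ℝ (Fin n) →L[ℝ] ℝ).hasFDerivAt
      have h2 : HasFDerivAt (fun w : EuclideanSpace ℝ (Fin n) => ω (y + w))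
          (fderiv ℝ ω (y + w)) w := by
        have := (hωdiff (y + w)).hasFDerivAt.comp w ((hasFDerivAt_id w).const_add y)
        rwa [ContinuousLinearMap.comp_id] at this
      have h3 : HasFDerivAt (fun w : EuclideanSpace ℝ (Fin n) => w i * ω (y + w)) _ w :=
        h1.mul h2
      rw [h3.fderiv]
      simp
    have hs : ‖(EuclideanSpace.single j (1:ℝ) : EuclideanSpace ℝ (Fin n))‖ = 1 := by simp
    have hsi : |(EuclideanSpace.single j (1:ℝ) : EuclideanSpace ℝ (Fin n)) i| ≤ 1 := by
      exact (PiLp.norm_apply_le (EuclideanSpace.single j (1:ℝ)) i).trans hs.le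
    have hfd : |fderiv ℝ ω (y + w) (EuclideanSpace.single j 1)| ≤ ‖fderiv ℝ ω (y + w)‖ := by
      have := (fderiv ℝ ω (y + w)).le_opNorm (EuclideanSpace.single j 1)
      rwa [hs, mul_one] at this
    have hw : |w i| ≤ ‖y + w‖ + ‖y‖ := by
      have h1 : |w i| ≤ ‖w‖ := PiLp.norm_apply_le w i
      have h2 : ‖w‖ ≤ ‖y + w‖ + ‖y‖ := by
        simpa using norm_sub_le (y + w) y
      linarith
    have hA' := hA (y + w)
    have hD' := hD (y + w)
    have hE' := hE (y + w)
    have hX' := hX y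
    have hY' := hY y
    simp only [norm_smul, Pi.smul_apply', Real.norm_eq_abs, abs_norm] at hA' hE' hX' hY'
    have hX0 : 0 ≤ X := (abs_nonneg _).trans hX'
    have hY0 : 0 ≤ Y := le_trans (by positivity) hY'
    rw [hform, abs_mul]
    calc |χ y| * |w i * fderiv ℝ ω (y + w) (EuclideanSpace.single j 1)
        + ω (y + w) * (EuclideanSpace.single j (1:ℝ) : EuclideanSpace ℝ (Fin n)) i|
        ≤ |χ y| * ((‖y + w‖ + ‖y‖) * ‖fderiv ℝ ω (y + w)‖ + |ω (y + w)| * 1) := by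
          gcongr
          refine (abs_add_le _ _).trans ?_
          rw [abs_mul, abs_mul]
          gcongr
      _ = |χ y| * |ω (y + w)| + |χ y| * (‖y + w‖ * ‖fderiv ℝ ω (y + w)‖)
          + (‖y‖ * |χ y|) * ‖fderiv ℝ ω (y + w)‖ := by ring
      _ ≤ X * A + X * E + Y * D := by gcongr
  have hint : IntegrableOn (fun s : ℝ => (s ^ (n + 1))⁻¹) (Set.Ioi (1:ℝ)) := by
    have h := integrableOn_Ioi_rpow_of_lt (a := -((n + 1 : ℕ) : ℝ)) (c := 1)
      (by push_cast; have : (2:ℝ) ≤ n := by exact_mod_cast hn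
          linarith) one_pos
    refine h.congr_fun (fun s hs => ?_) measurableSet_Ioi
    have hs0 : (0:ℝ) ≤ s := le_trans zero_le_one (le_of_lt hs)
    simp only [Real.rpow_neg hs0, Real.rpow_natCast]
  refine ⟨∫ s in Set.Ioi (1:ℝ), (X * A + X * E + Y * D) * (s ^ (n + 1))⁻¹, ?_, ?_⟩
  · intro y z
    rw [hK₂, ← Real.norm_eq_abs]
    refine norm_integral_le_of_norm_le (hint.const_mul _) ?_
    filter_upwards [ae_restrict_mem measurableSet_Ioi] with s hs
    have hs0 : (0:ℝ) < s := lt_trans zero_lt_one hs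
    have hp : (0:ℝ) ≤ (s ^ (n + 1))⁻¹ := by positivity
    rw [Real.norm_eq_abs, abs_mul, abs_of_nonneg hp]
    exact mul_le_mul_of_nonneg_right (hM _ _) hp
  · intro x y hxy
    by_cases hx : χ x = 0
    · simp [hx]
    by_cases hy : χ y = 0
    · simp [hK₂, hy]
    exfalso
    have hxB : x ∈ Bt := hχsupp (subset_tsupport _ hx)
    have hyB : y ∈ Bt := hχsupp (subset_tsupport _ hy)
    obtain ⟨c, r, hr, rfl⟩ := hBt
    have h := dist_le_diam_of_mem isBounded_ball hxB hyB
    rw [dist_eq_norm, ← hd] at h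
    have := norm_nonneg (x - y)
    linarith
end

section
/- Define K₂(y,z) = ∫₁^∞ χ(y) (∂η_i/∂z_j)(y, z/s) s^{−(n+1)} ds and g₂(y) = ∫_{ℝⁿ} χ(x) K₂(y, x−y) dx. Then g₂ has compact support and g₂ is Lipschitz continuous on ℝⁿ, i.e. there is a constant L with |g₂(y) − g₂(ȳ)| ≤ L |y−ȳ| for all y, ȳ ∈ ℝⁿ. -/
open MeasureTheory Metric Set Filter Topology

/-- With `K₂(y,z) = ∫₁^∞ χ(y) (∂η_i/∂z_j)(y, z/s) s^{−(n+1)} ds`, the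
function `g₂(y) = ∫ χ(x) K₂(y, x−y) dx` has compact support and is Lipschitz continuous. -/
theorem g2_compact_support_and_lipschitz
    (n : ℕ) (hn : 2 ≤ n)
    (Ω B : Set (EuclideanSpace ℝ (Fin n)))
    (hΩo : IsOpen Ω) (hΩb : Bornology.IsBounded Ω)
    (hBball : ∃ c r, 0 < r ∧ B = Metric.ball c r)
    (hBΩ : B ⊆ Ω)
    (hstar : ∀ x ∈ Ω, ∀ y ∈ B, segment ℝ x y ⊆ Ω)
    (ω : EuclideanSpace ℝ (Fin n) → ℝ)
    (hω : ContDiff ℝ (⊤ : ℕ∞) ω) (hωc : HasCompactSupport ω)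
    (hωsupp : tsupport ω ⊆ B) (hωint : ∫ x, ω x = 1)
    (Bt : Set (EuclideanSpace ℝ (Fin n)))
    (hBt : ∃ c r, 0 < r ∧ Bt = Metric.ball c r)
    (hΩBt : closure Ω ⊆ Bt)
    (d : ℝ) (hd : d = Metric.diam Bt)
    (χ : EuclideanSpace ℝ (Fin n) → ℝ)
    (hχ : ContDiff ℝ (⊤ : ℕ∞) χ) (hχc : HasCompactSupport χ)
    (hχsupp : tsupport χ ⊆ Bt) (hχ1 : ∀ x ∈ Ω, χ x = 1)
    (i j : Fin n)
    -- `∂η_i/∂z_j (y, z)` where `η_i (y, z) = z_i ω (y + z)`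
    (Dη : EuclideanSpace ℝ (Fin n) → EuclideanSpace ℝ (Fin n) → ℝ)
    (hDη : ∀ y z, Dη y z =
      fderiv ℝ (fun w : EuclideanSpace ℝ (Fin n) => w i * ω (y + w)) z (EuclideanSpace.single j 1))
    (K₂ : EuclideanSpace ℝ (Fin n) → EuclideanSpace ℝ (Fin n) → ℝ)
    (hK₂ : ∀ y z, K₂ y z =
      ∫ s in Set.Ioi (1:ℝ), χ y * Dη y (s⁻¹ • z) * (s ^ (n + 1))⁻¹)
    (g₂ : EuclideanSpace ℝ (Fin n) → ℝ)
    (hg₂ : ∀ y, g₂ y = ∫ x, χ x * K₂ y (x - y)) :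
    HasCompactSupport g₂ ∧
    ∃ L : ℝ, ∀ y y' : EuclideanSpace ℝ (Fin n), |g₂ y - g₂ y'| ≤ L * ‖y - y'‖ := by
  have hform : ∀ y z, Dη y z = (EuclideanSpace.single j (1:ℝ) : EuclideanSpace ℝ (Fin n)) i * ω (y + z)
      + z i * fderiv ℝ ω (y + z) (EuclideanSpace.single j 1) := by
    intro y z
    rw [hDη]
    have h1 : HasFDerivAt (fun w : EuclideanSpace ℝ (Fin n) => w i)
        (EuclideanSpace.proj i : EuclideanSpace ℝ (Fin n) →L[ℝ] ℝ) z :=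
      (EuclideanSpace.proj i : EuclideanSpace ℝ (Fin n) →L[ℝ] ℝ).hasFDerivAt
    have h2 : HasFDerivAt (fun w : EuclideanSpace ℝ (Fin n) => ω (y + w))
        (fderiv ℝ ω (y + z)) z := by
      have h3 : HasFDerivAt ω (fderiv ℝ ω (y + z)) (y + z) :=
        (hω.differentiable (by simp) _).hasFDerivAt
      have h4 : HasFDerivAt (fun w : EuclideanSpace ℝ (Fin n) => y + w)
        (ContinuousLinearMap.id ℝ _) z := (hasFDerivAt_id z).const_add y
      exact h3.comp z h4
    rw [show fderiv ℝ (fun w : EuclideanSpace ℝ (Fin n) => w i * ω (y + w)) z = _ from (h1.mul h2).fderiv]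
    simp
    ring
  set G : EuclideanSpace ℝ (Fin n) × EuclideanSpace ℝ (Fin n) → ℝ :=
    fun p => χ p.1 * Dη p.1 p.2 with hG
  have hGs : ContDiff ℝ 1 G := by
    simp only [hG, hform]
    have hω' : ContDiff ℝ 1 (fderiv ℝ ω) := hω.fderiv_right (by norm_cast)
    have hω1 : ContDiff ℝ 1 ω := hω.of_le (by norm_cast)
    have hχ1' : ContDiff ℝ 1 χ := hχ.of_le (by norm_cast)
    have hp : ContDiff ℝ 1 (fun p : EuclideanSpace ℝ (Fin n) × EuclideanSpace ℝ (Fin n) => p.2 i) :=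
      (EuclideanSpace.proj i : EuclideanSpace ℝ (Fin n) →L[ℝ] ℝ).contDiff.comp contDiff_snd
    have ha : ContDiff ℝ 1 (fun p : EuclideanSpace ℝ (Fin n) × EuclideanSpace ℝ (Fin n) => p.1 + p.2) :=
      contDiff_fst.add contDiff_snd
    exact (hχ1'.comp contDiff_fst).mul ((contDiff_const.mul (hω1.comp ha)).add
      (hp.mul ((hω'.comp ha).clm_apply contDiff_const)))
  have hGc : HasCompactSupport G := by
    have hk : IsCompact ((fun q : EuclideanSpace ℝ (Fin n) × EuclideanSpace ℝ (Fin n) =>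
        (q.1, q.2 - q.1)) '' (tsupport χ ×ˢ tsupport ω)) :=
      (hχc.isCompact.prod hωc.isCompact).image (by fun_prop)
    refine HasCompactSupport.intro hk ?_
    rintro ⟨y, z⟩ hx
    by_contra hne
    apply hx
    refine ⟨(y, y + z), ⟨?_, ?_⟩, by simp⟩
    · apply subset_tsupport
      intro h0
      simp [hG, h0] at hne
    · by_contra hnt
      have e1 : ω (y + z) = 0 := image_eq_zero_of_notMem_tsupport hnt
      have e2 : fderiv ℝ ω (y + z) = 0 := by
        by_contra h
        exact hnt (support_fderiv_subset ℝ h)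
      simp [hG, hform, e1, e2] at hne
  obtain ⟨C, hC⟩ := hGs.lipschitzWith_of_hasCompactSupport hGc (by simp)
  obtain ⟨M, hM⟩ := hGc.exists_bound_of_continuous hGs.continuous
  have hI : IntegrableOn (fun s : ℝ => (s ^ (n + 1))⁻¹) (Ioi 1) := by
    have h := integrableOn_Ioi_rpow_of_lt (a := -((n:ℝ) + 1)) (c := 1) (by
      have : (2:ℝ) ≤ n := by exact_mod_cast hn
      linarith) one_pos
    refine h.congr_fun ?_ measurableSet_Ioi
    intro s hs
    have hs0 : (0:ℝ) < s := lt_trans one_pos hs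
    simp only
    rw [Real.rpow_neg hs0.le]
    congr 1
    exact_mod_cast Real.rpow_natCast s (n + 1)
  have hint : ∀ y z, IntegrableOn (fun s : ℝ => G (y, s⁻¹ • z) * (s ^ (n + 1))⁻¹) (Ioi 1) := by
    intro y z
    refine Integrable.bdd_mul hI (c := M) ?_ (Eventually.of_forall fun s => hM _)
    have : Measurable (fun s : ℝ => G (y, s⁻¹ • z)) :=
      hGs.continuous.measurable.comp (by fun_prop)
    exact this.aestronglyMeasurable
  set I := ∫ s in Ioi (1:ℝ), (s ^ (n + 1))⁻¹ with hIdef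
  have hKL : ∀ y z y' z', |K₂ y z - K₂ y' z'| ≤ C * max ‖y - y'‖ ‖z - z'‖ * I := by
    intro y z y' z'
    rw [hK₂, hK₂]
    change |(∫ s in Ioi (1:ℝ), G (y, s⁻¹ • z) * (s ^ (n + 1))⁻¹)
      - ∫ s in Ioi (1:ℝ), G (y', s⁻¹ • z') * (s ^ (n + 1))⁻¹| ≤ _
    rw [← integral_sub (hint y z) (hint y' z'), hIdef, ← integral_const_mul, ← Real.norm_eq_abs]
    refine norm_integral_le_of_norm_le (hI.const_mul _) ?_
    refine (ae_restrict_iff' measurableSet_Ioi).2 (Eventually.of_forall fun s hs => ?_)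
    have hs1 : (1:ℝ) < s := hs
    have hs0 : (0:ℝ) < s := lt_trans one_pos hs1
    rw [← sub_mul, norm_mul, Real.norm_of_nonneg (by positivity : 0 ≤ (s ^ (n + 1))⁻¹)]
    gcongr
    rw [← dist_eq_norm]
    refine (hC.dist_le_mul _ _).trans ?_
    gcongr
    rw [Prod.dist_eq]
    simp only [dist_eq_norm]
    gcongr
    rw [← smul_sub, norm_smul, norm_inv, Real.norm_of_nonneg hs0.le]
    exact mul_le_of_le_one_left (norm_nonneg _) (inv_le_one_of_one_le₀ hs1.le)
  have hI0 : 0 ≤ I := by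
    refine setIntegral_nonneg measurableSet_Ioi fun s hs => ?_
    have hs0 : (0:ℝ) < s := lt_trans one_pos hs
    positivity
  have hKc : ∀ y, Continuous (K₂ y) := by
    intro y
    refine (LipschitzWith.of_dist_le_mul (K := C * I.toNNReal) fun z z' => ?_).continuous
    have := hKL y z y z'
    rw [Real.dist_eq, dist_eq_norm]
    refine this.trans (le_of_eq ?_)
    simp [Real.coe_toNNReal _ hI0]
    ring
  have hgint : ∀ y, Integrable (fun x => χ x * K₂ y (x - y)) := by
    intro y
    refine Continuous.integrable_of_hasCompactSupport ?_ hχc.mul_right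
    exact hχ.continuous.mul ((hKc y).comp (by fun_prop))
  have hχi : Integrable (fun x => |χ x|) :=
    (hχ.continuous.integrable_of_hasCompactSupport hχc).abs
  constructor
  · refine hχc.mono ?_
    intro y hy h0
    apply hy
    rw [hg₂]
    simp [hK₂, h0]
  · refine ⟨(∫ x, |χ x|) * (C * I), fun y y' => ?_⟩
    rw [hg₂, hg₂, ← integral_sub (hgint y) (hgint y'), ← Real.norm_eq_abs, mul_assoc,
      ← integral_mul_const]
    refine norm_integral_le_of_norm_le (hχi.mul_const _) (Eventually.of_forall fun x => ?_)
    rw [← mul_sub, norm_mul, Real.norm_eq_abs, Real.norm_eq_abs]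
    gcongr
    refine (hKL _ _ _ _).trans (le_of_eq ?_)
    have : ‖x - y - (x - y')‖ = ‖y - y'‖ := by
      rw [sub_sub_sub_cancel_left, norm_sub_rev]
    rw [this, max_self]
    ring
end

section
/- For every y ∈ ℝⁿ the principal-value limit g(y) = lim_{ε→0⁺} ∫_{{x : |x−y|>ε}} χ(x) K(y, x−y) dx exists, and for every α with 0 < α < 1 there is a constant C (depending on α, n, Ω, ω, χ) such that |g(y) − g(ȳ)| ≤ C |y−ȳ|^α for all y, ȳ ∈ ℝⁿ, i.e. g belongs to the homogeneous Lipschitz space Λ̇_α(ℝⁿ). -/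
open MeasureTheory Metric Set Filter Topology

lemma aux_integrable_of_bdd {X : Type*} [TopologicalSpace X] [MeasurableSpace X] 
    [OpensMeasurableSpace X] [T2Space X]
    (μ : Measure X) [IsFiniteMeasureOnCompacts μ] (F : X → ℝ) (hF : Measurable F)
    (k : Set X) (hk : IsCompact k) (C : ℝ) (hC : ∀ x, |F x| ≤ C) (h0 : ∀ x, x ∉ k → F x = 0) :
    Integrable F μ := by
  have hs : Function.support F ⊆ k := fun x hx => by
    by_contra h; exact hx (h0 x h)
  rw [← integrableOn_iff_integrable_of_support_subset hs]
  refine ⟨hF.aestronglyMeasurable, ?_⟩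
  have : IsFiniteMeasure (μ.restrict k) := ⟨by simpa using hk.measure_lt_top⟩
  exact .of_bounded (C := C) (.of_forall hC)

lemma aux_log_integrable (n : ℕ) (hn : 2 ≤ n) (R : ℝ) :
    Integrable (fun w : EuclideanSpace ℝ (Fin n) =>
      (Iic R).indicator (fun t => |Real.log t|) ‖w‖) volume := by
  have : Nontrivial (EuclideanSpace ℝ (Fin n)) := by
    have : Nonempty (Fin n) := ⟨⟨0, by omega⟩⟩
    infer_instance
  rw [integrable_fun_norm_addHaar]
  simp only [finrank_euclideanSpace, Fintype.card_fin]
  have h1 : Continuous (fun t : ℝ => t ^ (n-2) * |t * Real.log t|) :=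
    (continuous_pow _).mul Real.continuous_mul_log.abs
  have h2 : IntegrableOn (fun t : ℝ => t ^ (n-2) * |t * Real.log t|) (Ioi 0 ∩ Iic R) volume :=
    (h1.integrableOn_Icc (a := 0) (b := R)).mono_set (fun x hx => ⟨le_of_lt hx.1, hx.2⟩)
  have h3 : IntegrableOn ((Iic R).indicator (fun t : ℝ => t ^ (n-2) * |t * Real.log t|)) (Ioi 0) := by
    rw [IntegrableOn, integrable_indicator_iff measurableSet_Iic, IntegrableOn,
      Measure.restrict_restrict measurableSet_Iic, inter_comm]
    exact h2
  refine h3.congr_fun ?_ measurableSet_Ioi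
  intro t ht
  have ht' : (0:ℝ) < t := ht
  by_cases htR : t ∈ Iic R
  · simp only [indicator_of_mem htR, smul_eq_mul]
    rw [abs_mul, abs_of_pos ht', ← mul_assoc, ← pow_succ]
    congr 3; omega
  · simp [indicator_of_notMem htR]

lemma aux_fubini (n : ℕ) (φ χ : EuclideanSpace ℝ (Fin n) → ℝ) (hφ : Continuous φ)
    (hχ : Continuous χ) (M M' R : ℝ) (hR : 0 < R) (hM : ∀ x, |χ x| ≤ M) (hM' : ∀ x, |φ x| ≤ M')
    (hφR : ∀ w, R < ‖w‖ → φ w = 0) (y : EuclideanSpace ℝ (Fin n)) (ε : ℝ) (hε : 0 < ε) :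
    ∫ z in {z : EuclideanSpace ℝ (Fin n) | ε < ‖z‖}, χ (y + z) *
        ∫ s in Ioo (0:ℝ) 1, φ (s⁻¹ • z) * (s ^ (n+1))⁻¹
      = ∫ w, φ w * ∫ s in {s : ℝ | 0 < s ∧ s < 1 ∧ ε < s * ‖w‖}, χ (y + s • w) * s⁻¹ := by
  have hM0 : 0 ≤ M := (abs_nonneg _).trans (hM 0)
  have hM0' : 0 ≤ M' := (abs_nonneg _).trans (hM' 0)
  set F : EuclideanSpace ℝ (Fin n) × ℝ → ℝ :=
    {p : EuclideanSpace ℝ (Fin n) × ℝ | ε < ‖p.1‖ ∧ 0 < p.2 ∧ p.2 < 1}.indicator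
      (fun p => χ (y + p.1) * (φ (p.2⁻¹ • p.1) * (p.2 ^ (n+1))⁻¹)) with hF
  set G : EuclideanSpace ℝ (Fin n) × ℝ → ℝ :=
    {p : EuclideanSpace ℝ (Fin n) × ℝ | 0 < p.2 ∧ p.2 < 1 ∧ ε < p.2 * ‖p.1‖}.indicator
      (fun p => φ p.1 * (χ (y + p.2 • p.1) * p.2⁻¹)) with hG
  have mF : Measurable F := by
    refine Measurable.indicator ?_ ?_
    · have := hφ.measurable; have := hχ.measurable
      fun_prop
    · have m0 : MeasurableSet {p : EuclideanSpace ℝ (Fin n) × ℝ | ε < ‖p.1‖} :=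
          measurableSet_lt (by fun_prop) (by fun_prop)
      have m1 : MeasurableSet {p : EuclideanSpace ℝ (Fin n) × ℝ | 0 < p.2} :=
          measurableSet_lt (by fun_prop) (by fun_prop)
      have m2 : MeasurableSet {p : EuclideanSpace ℝ (Fin n) × ℝ | p.2 < 1} :=
          measurableSet_lt (by fun_prop) (by fun_prop)
      exact m0.inter (m1.inter m2)
  have mG : Measurable G := by
    refine Measurable.indicator ?_ ?_
    · have := hφ.measurable; have := hχ.measurable
      fun_prop
    · have m0 : MeasurableSet {p : EuclideanSpace ℝ (Fin n) × ℝ | 0 < p.2} :=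
          measurableSet_lt (by fun_prop) (by fun_prop)
      have m1 : MeasurableSet {p : EuclideanSpace ℝ (Fin n) × ℝ | p.2 < 1} :=
          measurableSet_lt (by fun_prop) (by fun_prop)
      have m2 : MeasurableSet {p : EuclideanSpace ℝ (Fin n) × ℝ | ε < p.2 * ‖p.1‖} :=
          measurableSet_lt (by fun_prop) (by fun_prop)
      exact m0.inter (m1.inter m2)
  have hk : IsCompact ((closedBall (0 : EuclideanSpace ℝ (Fin n)) R) ×ˢ (Icc (0:ℝ) 1)) :=
    (isCompact_closedBall _ _).prod isCompact_Icc
  have iF : Integrable F (volume.prod volume) := by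
    refine aux_integrable_of_bdd _ F mF _ hk (M * (M' * ((ε / R) ^ (n+1))⁻¹)) ?_ ?_
    · rintro ⟨z, s⟩
      by_cases h : (z, s) ∈ {p : EuclideanSpace ℝ (Fin n) × ℝ | ε < ‖p.1‖ ∧ 0 < p.2 ∧ p.2 < 1}
      · rw [hF, indicator_of_mem h]
        obtain ⟨h1, h2, h3⟩ := h
        simp only at h1 h2 h3 ⊢
        by_cases h4 : R < ‖s⁻¹ • z‖
        · rw [hφR _ h4]; simp; positivity
        · rw [norm_smul, norm_inv, Real.norm_of_nonneg h2.le, inv_mul_eq_div, not_lt,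
            div_le_iff₀ h2] at h4
          have h5 : ε / R ≤ s := by rw [div_le_iff₀ hR]; linarith
          have h6 : 0 < ε / R := by positivity
          rw [abs_mul, abs_mul, abs_of_pos (by positivity : 0 < (s^(n+1))⁻¹)]
          gcongr
          · exact hM _
          · exact hM' _
      · rw [hF, indicator_of_notMem h]; simp; positivity
    · rintro ⟨z, s⟩ hzs
      refine indicator_apply_eq_zero.2 ?_
      rintro ⟨h1, h2, h3⟩
      simp only at h1 h2 h3 ⊢
      rw [hφR]; · simp
      rw [norm_smul, norm_inv, Real.norm_of_nonneg h2.le, inv_mul_eq_div, lt_div_iff₀ h2]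
      have : R < ‖z‖ := by
        by_contra hh
        exact hzs ⟨by simpa using hh, h2.le, h3.le⟩
      nlinarith
  have iG : Integrable G (volume.prod volume) := by
    refine aux_integrable_of_bdd _ G mG _ hk (M' * (M * (ε / R)⁻¹)) ?_ ?_
    · rintro ⟨z, s⟩
      by_cases h : (z, s) ∈ {p : EuclideanSpace ℝ (Fin n) × ℝ | 0 < p.2 ∧ p.2 < 1 ∧ ε < p.2 * ‖p.1‖}
      · rw [hG, indicator_of_mem h]
        obtain ⟨h2, h3, h1⟩ := h
        simp only at h1 h2 h3 ⊢
        by_cases h4 : R < ‖z‖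
        · rw [hφR _ h4]; simp; positivity
        · have h5 : ε / R ≤ s := by rw [div_le_iff₀ hR]; nlinarith
          have h6 : 0 < ε / R := by positivity
          rw [abs_mul, abs_mul, abs_of_pos (by positivity : 0 < s⁻¹)]
          gcongr
          · exact hM' _
          · exact hM _
      · rw [hG, indicator_of_notMem h]; simp; positivity
    · rintro ⟨z, s⟩ hzs
      refine indicator_apply_eq_zero.2 ?_
      rintro ⟨h2, h3, h1⟩
      simp only at h1 h2 h3 ⊢
      rw [hφR]; · simp
      by_contra hh
      exact hzs ⟨by simpa using hh, h2.le, h3.le⟩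
  have e1 : ∫ z in {z : EuclideanSpace ℝ (Fin n) | ε < ‖z‖}, χ (y + z) *
        ∫ s in Ioo (0:ℝ) 1, φ (s⁻¹ • z) * (s ^ (n+1))⁻¹ = ∫ z, ∫ s, F (z, s) := by
    rw [← integral_indicator (measurableSet_lt measurable_const (by fun_prop))]
    congr 1; ext z
    by_cases hz : ε < ‖z‖
    · rw [indicator_of_mem (show z ∈ {z | ε < ‖z‖} from hz), ← integral_const_mul,
        ← integral_indicator measurableSet_Ioo]
      congr 1; ext s
      simp only [hF, indicator, mem_ofPred_eq, mem_Ioo, hz, true_and]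
    · rw [indicator_of_notMem (show z ∉ {z | ε < ‖z‖} from hz)]
      simp [hF, hz]
  have e2 : ∫ w, φ w * ∫ s in {s : ℝ | 0 < s ∧ s < 1 ∧ ε < s * ‖w‖}, χ (y + s • w) * s⁻¹
      = ∫ w, ∫ s, G (w, s) := by
    congr 1; ext w
    rw [← integral_const_mul, ← integral_indicator]
    · congr 1
    · have m0 : MeasurableSet {s : ℝ | 0 < s} :=
          measurableSet_lt (by fun_prop) (by fun_prop)
      have m1 : MeasurableSet {s : ℝ | s < 1} :=
          measurableSet_lt (by fun_prop) (by fun_prop)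
      have m2 : MeasurableSet {s : ℝ | ε < s * ‖w‖} :=
          measurableSet_lt (by fun_prop) (by fun_prop)
      exact m0.inter (m1.inter m2)
  rw [e1, e2, integral_integral_swap (f := fun z s => F (z, s)) iF,
    integral_integral_swap (f := fun z s => G (z, s)) iG]
  congr 1; ext s
  by_cases hs : 0 < s ∧ s < 1
  · have h1 : ∀ w, G (w, s) = s ^ n * F (s • w, s) := by
      intro w
      have : s ≠ 0 := hs.1.ne'
      have h2 : s⁻¹ • s • w = w := by rw [smul_smul, inv_mul_cancel₀ this, one_smul]
      simp only [hF, hG, indicator, mem_ofPred_eq, norm_smul, Real.norm_of_nonneg hs.1.le, hs.1, hs.2,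
        true_and, and_true, h2]
      split_ifs
      · field_simp
        ring
      · simp
    simp_rw [h1]
    rw [integral_const_mul, Measure.integral_comp_smul volume (fun z => F (z, s)) s]
    have : 0 < s ^ n := pow_pos hs.1 n
    rw [finrank_euclideanSpace, Fintype.card_fin, abs_of_pos (by positivity), smul_eq_mul,
      ← mul_assoc, mul_inv_cancel₀ this.ne', one_mul]
  · have z1 : ∀ w, F (w, s) = 0 := fun w => by
      simp only [hF, indicator, mem_ofPred_eq]; rw [if_neg]; tauto
    have z2 : ∀ w, G (w, s) = 0 := fun w => by
      simp only [hG, indicator, mem_ofPred_eq]; rw [if_neg]; tauto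
    simp only [z1, z2]

/-- The set of admissible dilation parameters. -/
def auxS {n : ℕ} (ε : ℝ) (w : EuclideanSpace ℝ (Fin n)) : Set ℝ :=
  {s : ℝ | 0 < s ∧ s < 1 ∧ ε < s * ‖w‖}

/-- The regularized inner integral. -/
noncomputable def auxA {n : ℕ} (χ : EuclideanSpace ℝ (Fin n) → ℝ) (y : EuclideanSpace ℝ (Fin n))
    (ε : ℝ) (w : EuclideanSpace ℝ (Fin n)) : ℝ :=
  ∫ s in auxS ε w, (χ (y + s • w) - χ y) * s⁻¹

lemma aux_mS {n : ℕ} (ε : ℝ) (w : EuclideanSpace ℝ (Fin n)) : MeasurableSet (auxS ε w) := by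
  have m0 : MeasurableSet {s : ℝ | 0 < s} := measurableSet_lt (by fun_prop) (by fun_prop)
  have m1 : MeasurableSet {s : ℝ | s < 1} := measurableSet_lt (by fun_prop) (by fun_prop)
  have m2 : MeasurableSet {s : ℝ | ε < s * ‖w‖} := measurableSet_lt (by fun_prop) (by fun_prop)
  exact m0.inter (m1.inter m2)

lemma aux_S_sub {n : ℕ} (ε : ℝ) (w : EuclideanSpace ℝ (Fin n)) : auxS ε w ⊆ Ioo 0 1 :=
  fun _ hs => ⟨hs.1, hs.2.1⟩

lemma aux_S_fin {n : ℕ} (ε : ℝ) (w : EuclideanSpace ℝ (Fin n)) : volume (auxS ε w) < ⊤ :=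
  (measure_mono (aux_S_sub ε w)).trans_lt (by simp)

lemma aux_S_le {n : ℕ} (ε : ℝ) (w : EuclideanSpace ℝ (Fin n)) : volume.real (auxS ε w) ≤ 1 := by
  have := measureReal_mono (μ := volume) (aux_S_sub ε w) (by simp)
  simpa using this

lemma aux_D_bound {n : ℕ} (χ : EuclideanSpace ℝ (Fin n) → ℝ) (L : ℝ)
    (hL : ∀ a b, |χ a - χ b| ≤ L * ‖a - b‖) (y w : EuclideanSpace ℝ (Fin n)) (s : ℝ) (hs : 0 < s) :
    |(χ (y + s • w) - χ y) * s⁻¹| ≤ L * ‖w‖ := by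
  have h := hL (y + s • w) y
  rw [add_sub_cancel_left, norm_smul, Real.norm_of_nonneg hs.le] at h
  rw [abs_mul, abs_of_pos (inv_pos.2 hs), ← div_eq_mul_inv, div_le_iff₀ hs]
  linarith

lemma aux_A_bound {n : ℕ} (χ : EuclideanSpace ℝ (Fin n) → ℝ) (L : ℝ) (hL0 : 0 ≤ L)
    (hL : ∀ a b, |χ a - χ b| ≤ L * ‖a - b‖) (y w : EuclideanSpace ℝ (Fin n)) (ε : ℝ) :
    |auxA χ y ε w| ≤ L * ‖w‖ := by
  have h := norm_setIntegral_le_of_norm_le_const (μ := volume) (s := auxS ε w)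
    (f := fun s => (χ (y + s • w) - χ y) * s⁻¹) (C := L * ‖w‖) (aux_S_fin ε w)
    (fun s hs => aux_D_bound χ L hL y w s hs.1)
  refine h.trans ?_
  have := aux_S_le ε w
  have : 0 ≤ L * ‖w‖ := by positivity
  nlinarith

lemma aux_D_int {n : ℕ} (χ : EuclideanSpace ℝ (Fin n) → ℝ) (hχ : Continuous χ) (L : ℝ)
    (hL : ∀ a b, |χ a - χ b| ≤ L * ‖a - b‖) (y w : EuclideanSpace ℝ (Fin n)) :
    IntegrableOn (fun s : ℝ => (χ (y + s • w) - χ y) * s⁻¹) (Ioo 0 1) := by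
  have := hχ.measurable
  refine Measure.integrableOn_of_bounded (M := L * ‖w‖) (by simp) ?_ ?_
  · exact Measurable.aestronglyMeasurable (by fun_prop)
  · refine (ae_restrict_iff' measurableSet_Ioo).2 (.of_forall fun s hs => ?_)
    exact aux_D_bound χ L hL y w s hs.1

lemma aux_A_lip {n : ℕ} (χ : EuclideanSpace ℝ (Fin n) → ℝ) (hχ : Continuous χ) (L L2 : ℝ)
    (hL20 : 0 ≤ L2)
    (hL : ∀ a b, |χ a - χ b| ≤ L * ‖a - b‖)
    (hL2 : ∀ a b h, |(χ (a + h) - χ a) - (χ (b + h) - χ b)| ≤ L2 * ‖h‖ * ‖a - b‖)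
    (y y' w : EuclideanSpace ℝ (Fin n)) (ε : ℝ) :
    |auxA χ y ε w - auxA χ y' ε w| ≤ L2 * ‖w‖ * ‖y - y'‖ := by
  unfold auxA
  rw [← integral_sub ((aux_D_int χ hχ L hL y w).mono_set (aux_S_sub ε w))
    ((aux_D_int χ hχ L hL y' w).mono_set (aux_S_sub ε w))]
  have h := norm_setIntegral_le_of_norm_le_const (μ := volume) (s := auxS ε w)
    (f := fun s => (χ (y + s • w) - χ y) * s⁻¹ - (χ (y' + s • w) - χ y') * s⁻¹)
    (C := L2 * ‖w‖ * ‖y - y'‖) (aux_S_fin ε w) (by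
      intro s hs
      have hs0 : 0 < s := hs.1
      have h := hL2 y y' (s • w)
      rw [norm_smul, Real.norm_of_nonneg hs0.le] at h
      rw [← sub_mul, Real.norm_eq_abs, abs_mul, abs_of_pos (inv_pos.2 hs0), ← div_eq_mul_inv,
        div_le_iff₀ hs0]
      linarith)
  refine h.trans ?_
  have := aux_S_le ε w
  have : 0 ≤ L2 * ‖w‖ * ‖y - y'‖ := by positivity
  nlinarith

lemma aux_A_meas {n : ℕ} (χ : EuclideanSpace ℝ (Fin n) → ℝ) (hχ : Continuous χ)
    (y : EuclideanSpace ℝ (Fin n)) (ε : ℝ) : StronglyMeasurable (auxA χ y ε) := by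
  have hm := hχ.measurable
  set G : EuclideanSpace ℝ (Fin n) × ℝ → ℝ :=
    {p : EuclideanSpace ℝ (Fin n) × ℝ | 0 < p.2 ∧ p.2 < 1 ∧ ε < p.2 * ‖p.1‖}.indicator
      (fun p => (χ (y + p.2 • p.1) - χ y) * p.2⁻¹) with hG
  have mG : Measurable G := by
    refine Measurable.indicator (by fun_prop) ?_
    have m0 : MeasurableSet {p : EuclideanSpace ℝ (Fin n) × ℝ | 0 < p.2} :=
      measurableSet_lt (by fun_prop) (by fun_prop)
    have m1 : MeasurableSet {p : EuclideanSpace ℝ (Fin n) × ℝ | p.2 < 1} :=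
      measurableSet_lt (by fun_prop) (by fun_prop)
    have m2 : MeasurableSet {p : EuclideanSpace ℝ (Fin n) × ℝ | ε < p.2 * ‖p.1‖} :=
      measurableSet_lt (by fun_prop) (by fun_prop)
    exact m0.inter (m1.inter m2)
  have h : auxA χ y ε = fun w => ∫ s, G (w, s) := by
    ext w
    unfold auxA
    rw [← integral_indicator (aux_mS ε w)]
    rfl
  rw [h]
  exact mG.stronglyMeasurable.integral_prod_right'

lemma aux_A_tendsto {n : ℕ} (χ : EuclideanSpace ℝ (Fin n) → ℝ) (hχ : Continuous χ) (L : ℝ)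
    (hL : ∀ a b, |χ a - χ b| ≤ L * ‖a - b‖) (y w : EuclideanSpace ℝ (Fin n)) :
    Tendsto (fun ε => auxA χ y ε w) (𝓝[>] 0) (𝓝 (auxA χ y 0 w)) := by
  have hm := hχ.measurable
  have e : ∀ ε, auxA χ y ε w =
      ∫ s, (auxS ε w).indicator (fun s => (χ (y + s • w) - χ y) * s⁻¹) s := fun ε =>
    (integral_indicator (aux_mS ε w)).symm
  simp_rw [e]
  refine tendsto_integral_filter_of_dominated_convergence
    ((Ioo (0:ℝ) 1).indicator (fun s => |(χ (y + s • w) - χ y) * s⁻¹|)) ?_ ?_ ?_ ?_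
  · refine .of_forall fun ε => Measurable.aestronglyMeasurable ?_
    exact Measurable.indicator (by fun_prop) (aux_mS ε w)
  · refine .of_forall fun ε => .of_forall fun s => ?_
    rw [norm_indicator_eq_indicator_norm]
    exact indicator_le_indicator_of_subset (aux_S_sub ε w) (fun _ => abs_nonneg _) s
  · rw [integrable_indicator_iff measurableSet_Ioo]
    exact (aux_D_int χ hχ L hL y w).abs
  · refine .of_forall fun s => ?_
    refine tendsto_const_nhds.congr' ?_
    by_cases h : 0 < s * ‖w‖
    · filter_upwards [mem_nhdsWithin_of_mem_nhds (Iio_mem_nhds h)] with ε hε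
      have hε' : ε < s * ‖w‖ := hε
      simp only [indicator, auxS, mem_ofPred_eq, h, hε']
    · filter_upwards [self_mem_nhdsWithin] with ε hε
      have hε' : ¬ ε < s * ‖w‖ := by
        have : 0 < ε := hε
        linarith
      simp only [indicator, auxS, mem_ofPred_eq, h, hε']

lemma aux_inner {n : ℕ} (χ : EuclideanSpace ℝ (Fin n) → ℝ) (hχ : Continuous χ) (L : ℝ)
    (hL : ∀ a b, |χ a - χ b| ≤ L * ‖a - b‖) (y w : EuclideanSpace ℝ (Fin n)) (hw : w ≠ 0)
    (ε : ℝ) (hε : 0 < ε) :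
    ∫ s in auxS ε w, χ (y + s • w) * s⁻¹
      = auxA χ y ε w + χ y * (max (Real.log ‖w‖) (Real.log ε) - Real.log ε) := by
  have hw' : 0 < ‖w‖ := norm_pos_iff.2 hw
  have hpos : 0 < ε / ‖w‖ := by positivity
  have hS : auxS ε w = Ioo (ε / ‖w‖) 1 := by
    ext s
    simp only [auxS, mem_ofPred_eq, mem_Ioo, div_lt_iff₀ hw']
    constructor
    · rintro ⟨h1, h2, h3⟩; exact ⟨h3, h2⟩
    · rintro ⟨h1, h2⟩
      refine ⟨?_, h2, h1⟩
      by_contra h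
      nlinarith
  have hint : IntegrableOn (fun s : ℝ => χ y * s⁻¹) (auxS ε w) := by
    rw [hS]
    refine IntegrableOn.mono_set (ContinuousOn.integrableOn_Icc ?_) Ioo_subset_Icc_self
    refine continuousOn_const.mul (continuousOn_inv₀.mono ?_)
    intro x hx
    exact (hpos.trans_le hx.1).ne'
  have hinv : ∫ s in auxS ε w, s⁻¹ = max (Real.log ‖w‖) (Real.log ε) - Real.log ε := by
    rw [hS]
    rcases le_total ‖w‖ ε with h | h
    · rw [Ioo_eq_empty (by rw [not_lt, le_div_iff₀ hw']; linarith),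
        max_eq_right (Real.log_le_log hw' h)]
      simp
    · rw [max_eq_left (Real.log_le_log hε h), ← integral_Ioc_eq_integral_Ioo,
        ← intervalIntegral.integral_of_le (by rw [div_le_iff₀ hw']; linarith),
        integral_inv_of_pos hpos one_pos, one_div_div, Real.log_div hw'.ne' hε.ne']
  rw [← hinv, ← integral_const_mul]
  unfold auxA
  rw [← integral_add ((aux_D_int χ hχ L hL y w).mono_set (aux_S_sub ε w)) hint]
  congr 1; ext s; ring

lemma aux_bound_integrable (n : ℕ) (hn : 2 ≤ n) (R a b : ℝ) :
    Integrable (fun w : EuclideanSpace ℝ (Fin n) =>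
      (Iic R).indicator (fun t => a + b * |Real.log t|) ‖w‖) volume := by
  have h1 : Integrable ((closedBall (0 : EuclideanSpace ℝ (Fin n)) R).indicator (fun _ => a)) := by
    rw [integrable_indicator_iff measurableSet_closedBall]
    exact integrableOn_const (measure_closedBall_lt_top.ne)
  refine (h1.add ((aux_log_integrable n hn R).const_mul b)).congr (.of_forall fun w => ?_)
  by_cases h : ‖w‖ ≤ R <;> simp [indicator, h]

lemma aux_limit (n : ℕ) (hn : 2 ≤ n) (φ χ : EuclideanSpace ℝ (Fin n) → ℝ) (hφ : Continuous φ)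
    (hχ : Continuous χ) (M M' R L : ℝ) (hM : ∀ x, |χ x| ≤ M) (hM' : ∀ x, |φ x| ≤ M')
    (hφR : ∀ w, R < ‖w‖ → φ w = 0) (hφi : ∫ w, φ w = 0) (hL0 : 0 ≤ L)
    (hL : ∀ a b, |χ a - χ b| ≤ L * ‖a - b‖) (y : EuclideanSpace ℝ (Fin n)) :
    Tendsto (fun ε => ∫ w, φ w * ∫ s in auxS ε w, χ (y + s • w) * s⁻¹) (𝓝[>] 0)
      (𝓝 (∫ w, φ w * (auxA χ y 0 w + χ y * Real.log ‖w‖))) := by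
  have hM0 : 0 ≤ M := (abs_nonneg _).trans (hM 0)
  have hM0' : 0 ≤ M' := (abs_nonneg _).trans (hM' 0)
  have : Nontrivial (EuclideanSpace ℝ (Fin n)) := by
    have : Nonempty (Fin n) := ⟨⟨0, by omega⟩⟩
    infer_instance
  have hne : ∀ᵐ w : EuclideanSpace ℝ (Fin n), w ≠ 0 := by
    simp [ae_iff]
  have φint : Integrable φ := by
    refine aux_integrable_of_bdd _ φ hφ.measurable (closedBall 0 R) (isCompact_closedBall _ _) M' hM' ?_
    intro x hx
    exact hφR x (by simpa using hx)
  have hbd : ∀ ε, 0 < ε → ε < 1 → ∀ w : EuclideanSpace ℝ (Fin n), w ≠ 0 →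
      |φ w * (auxA χ y ε w + χ y * max (Real.log ‖w‖) (Real.log ε))| ≤
      (Iic R).indicator (fun t => M' * (L * R) + M' * M * |Real.log t|) ‖w‖ := by
    intro ε h0 h1 w hw
    by_cases hwR : ‖w‖ ≤ R
    · rw [indicator_of_mem (show ‖w‖ ∈ Iic R from hwR)]
      have h2 := aux_A_bound χ L hL0 hL y w ε
      have h3 : |max (Real.log ‖w‖) (Real.log ε)| ≤ |Real.log ‖w‖| := by
        rcases le_total (Real.log ε) (Real.log ‖w‖) with h | h
        · rw [max_eq_left h]
        · rw [max_eq_right h]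
          have : Real.log ε < 0 := Real.log_neg h0 h1
          rw [abs_of_neg this, abs_of_neg (h.trans_lt this)]
          linarith
      have h4 : L * ‖w‖ ≤ L * R := by gcongr
      rw [abs_mul]
      have h5 : |auxA χ y ε w + χ y * max (Real.log ‖w‖) (Real.log ε)|
          ≤ L * R + M * |Real.log ‖w‖| := by
        refine (abs_add_le _ _).trans ?_
        rw [abs_mul]
        gcongr
        · linarith
        · exact hM y
      calc _ ≤ M' * (L * R + M * |Real.log ‖w‖|) := by
            gcongr
            exact hM' w
        _ = _ := by ring
    · rw [hφR w (not_le.1 hwR), indicator_of_notMem (show ‖w‖ ∉ Iic R from hwR)]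
      simp
  have hms : ∀ ε, AEStronglyMeasurable
      (fun w => φ w * (auxA χ y ε w + χ y * max (Real.log ‖w‖) (Real.log ε))) volume := by
    intro ε
    have := (aux_A_meas χ hχ y ε).measurable
    have := hφ.measurable
    exact Measurable.aestronglyMeasurable (by fun_prop)
  have hev : ∀ᶠ ε in 𝓝[>] (0:ℝ), 0 < ε ∧ ε < 1 := by
    filter_upwards [self_mem_nhdsWithin, mem_nhdsWithin_of_mem_nhds (Iio_mem_nhds one_pos)]
      with ε h1 h2 using ⟨h1, h2⟩
  have hint := aux_bound_integrable n hn R (M' * (L * R)) (M' * M)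
  have key : Tendsto (fun ε => ∫ w, φ w * (auxA χ y ε w + χ y * max (Real.log ‖w‖) (Real.log ε)))
      (𝓝[>] 0) (𝓝 (∫ w, φ w * (auxA χ y 0 w + χ y * Real.log ‖w‖))) := by
    refine tendsto_integral_filter_of_dominated_convergence _ (.of_forall hms) ?_ hint ?_
    · filter_upwards [hev] with ε hε
      filter_upwards [hne] with w hw
      exact hbd ε hε.1 hε.2 w hw
    · filter_upwards [hne] with w hw
      refine (Tendsto.add (aux_A_tendsto χ hχ L hL y w) (Tendsto.const_mul _ ?_)).const_mul _
      refine tendsto_const_nhds.congr' ?_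
      have hw' : 0 < ‖w‖ := norm_pos_iff.2 hw
      filter_upwards [hev, mem_nhdsWithin_of_mem_nhds (Iio_mem_nhds hw')] with ε h1 h2
      rw [max_eq_left (Real.log_le_log h1.1 (le_of_lt h2))]
  refine key.congr' ?_
  filter_upwards [hev] with ε hε
  have e : ∫ w, φ w * ∫ s in auxS ε w, χ (y + s • w) * s⁻¹ =
      ∫ w, (φ w * (auxA χ y ε w + χ y * max (Real.log ‖w‖) (Real.log ε))
        - φ w * (χ y * Real.log ε)) := by
    refine integral_congr_ae ?_
    filter_upwards [hne] with w hw
    rw [aux_inner χ hχ L hL y w hw ε hε.1]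
    ring
  rw [e, integral_sub, integral_mul_const, hφi]
  · simp
  · refine hint.mono' (hms ε) ?_
    filter_upwards [hne] with w hw
    exact hbd ε hε.1 hε.2 w hw
  · exact φint.mul_const _

lemma aux_lip (n : ℕ) (hn : 2 ≤ n) (u : EuclideanSpace ℝ (Fin n) → EuclideanSpace ℝ (Fin n) → ℝ)
    (hu : ∀ y, Continuous (u y)) (χ : EuclideanSpace ℝ (Fin n) → ℝ)
    (hχ : Continuous χ) (M R L L2 U V : ℝ) (hM : ∀ x, |χ x| ≤ M)
    (huR : ∀ y w, R < ‖w‖ → u y w = 0)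
    (hU : ∀ y w, ‖w‖ ≤ R → |u y w| ≤ U)
    (hV : ∀ y y' w, ‖w‖ ≤ R → |u y w - u y' w| ≤ V * ‖y - y'‖)
    (hL0 : 0 ≤ L) (hL20 : 0 ≤ L2) (hU0 : 0 ≤ U) (hV0 : 0 ≤ V)
    (hL : ∀ a b, |χ a - χ b| ≤ L * ‖a - b‖)
    (hL2 : ∀ a b h, |(χ (a + h) - χ a) - (χ (b + h) - χ b)| ≤ L2 * ‖h‖ * ‖a - b‖) :
    ∃ C, 0 ≤ C ∧ ∀ y y',
      |∫ w, u y w * (auxA χ y 0 w + χ y * Real.log ‖w‖)| ≤ C ∧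
      |(∫ w, u y w * (auxA χ y 0 w + χ y * Real.log ‖w‖))
        - ∫ w, u y' w * (auxA χ y' 0 w + χ y' * Real.log ‖w‖)| ≤ C * ‖y - y'‖ := by
  have hM0 : 0 ≤ M := (abs_nonneg _).trans (hM 0)
  set b1 : EuclideanSpace ℝ (Fin n) → ℝ := fun w =>
    (Iic R).indicator (fun t => U * (L * R) + U * M * |Real.log t|) ‖w‖ with hb1
  set b2 : EuclideanSpace ℝ (Fin n) → ℝ := fun w =>
    (Iic R).indicator (fun t => (V * (L * R) + U * (L2 * R)) +
      (V * M + U * L) * |Real.log t|) ‖w‖ with hb2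
  have i1 : Integrable b1 := aux_bound_integrable n hn R _ _
  have i2 : Integrable b2 := aux_bound_integrable n hn R _ _
  have hv : ∀ y w, ‖w‖ ≤ R →
      |auxA χ y 0 w + χ y * Real.log ‖w‖| ≤ L * R + M * |Real.log ‖w‖| := by
    intro y w hw
    have h2 := aux_A_bound χ L hL0 hL y w 0
    have h4 : L * ‖w‖ ≤ L * R := by gcongr
    refine (abs_add_le _ _).trans ?_
    rw [abs_mul]
    gcongr
    · linarith
    · exact hM y
  have hv2 : ∀ y y' w, ‖w‖ ≤ R →
      |(auxA χ y 0 w + χ y * Real.log ‖w‖) - (auxA χ y' 0 w + χ y' * Real.log ‖w‖)|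
        ≤ (L2 * R + L * |Real.log ‖w‖|) * ‖y - y'‖ := by
    intro y y' w hw
    have h2 := aux_A_lip χ hχ L L2 hL20 hL hL2 y y' w 0
    have h3 := hL y y'
    have h4 : L2 * ‖w‖ * ‖y - y'‖ ≤ L2 * R * ‖y - y'‖ := by gcongr
    have e : (auxA χ y 0 w + χ y * Real.log ‖w‖) - (auxA χ y' 0 w + χ y' * Real.log ‖w‖)
      = (auxA χ y 0 w - auxA χ y' 0 w) + (χ y - χ y') * Real.log ‖w‖ := by ring
    rw [e]
    refine (abs_add_le _ _).trans ?_
    rw [abs_mul]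
    have h5 : |χ y - χ y'| * |Real.log ‖w‖| ≤ L * ‖y - y'‖ * |Real.log ‖w‖| := by gcongr
    linarith
  have p1 : ∀ y w, |u y w * (auxA χ y 0 w + χ y * Real.log ‖w‖)| ≤ b1 w := by
    intro y w
    by_cases hwR : ‖w‖ ≤ R
    · rw [hb1]; simp only
      rw [indicator_of_mem (show ‖w‖ ∈ Iic R from hwR), abs_mul]
      calc _ ≤ U * (L * R + M * |Real.log ‖w‖|) := by
            gcongr
            · exact hU y w hwR
            · exact hv y w hwR
        _ = _ := by ring
    · rw [hb1]; simp only
      rw [huR y w (not_le.1 hwR), indicator_of_notMem (show ‖w‖ ∉ Iic R from hwR)]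
      simp
  have p2 : ∀ y y' w, |u y w * (auxA χ y 0 w + χ y * Real.log ‖w‖)
      - u y' w * (auxA χ y' 0 w + χ y' * Real.log ‖w‖)| ≤ b2 w * ‖y - y'‖ := by
    intro y y' w
    by_cases hwR : ‖w‖ ≤ R
    · rw [hb2]; simp only
      rw [indicator_of_mem (show ‖w‖ ∈ Iic R from hwR)]
      have e : ∀ a b c d : ℝ, a * b - c * d = (a - c) * b + c * (b - d) := by intros; ring
      rw [e]
      refine (abs_add_le _ _).trans ?_
      rw [abs_mul, abs_mul]
      calc _ ≤ (V * ‖y - y'‖) * (L * R + M * |Real.log ‖w‖|)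
              + U * ((L2 * R + L * |Real.log ‖w‖|) * ‖y - y'‖) := by
            gcongr
            · exact hV y y' w hwR
            · exact hv y w hwR
            · exact hU y' w hwR
            · exact hv2 y y' w hwR
        _ = _ := by ring
    · rw [hb2]; simp only
      rw [huR y w (not_le.1 hwR), huR y' w (not_le.1 hwR),
        indicator_of_notMem (show ‖w‖ ∉ Iic R from hwR)]
      simp
  have pi : ∀ y, Integrable (fun w => u y w * (auxA χ y 0 w + χ y * Real.log ‖w‖)) := by
    intro y
    refine i1.mono' ?_ (.of_forall (p1 y))
    have := (aux_A_meas χ hχ y 0).measurable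
    have := (hu y).measurable
    exact Measurable.aestronglyMeasurable (by fun_prop)
  refine ⟨max (max (∫ w, b1 w) (∫ w, b2 w)) 0, le_max_right _ _, fun y y' => ⟨?_, ?_⟩⟩
  · refine (norm_integral_le_of_norm_le (f := fun w => u y w * (auxA χ y 0 w + χ y * Real.log ‖w‖))
      i1 (.of_forall (p1 y))).trans ?_
    exact (le_max_left _ _).trans (le_max_left _ _)
  · rw [← integral_sub (pi y) (pi y')]
    refine (norm_integral_le_of_norm_le (f := fun w => u y w * (auxA χ y 0 w + χ y * Real.log ‖w‖)
      - u y' w * (auxA χ y' 0 w + χ y' * Real.log ‖w‖)) (i2.mul_const ‖y - y'‖) (.of_forall (p2 y y'))).trans ?_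
    rw [integral_mul_const]
    gcongr
    exact (le_max_right _ _).trans (le_max_left _ _)

lemma aux_facts {n : ℕ} {F : Type*} [NormedAddCommGroup F] [NormedSpace ℝ F]
    (f : EuclideanSpace ℝ (Fin n) → F) (hf : ContDiff ℝ (⊤ : ℕ∞) f) (hc : HasCompactSupport f) :
    ∃ C, 0 ≤ C ∧ (∀ x, ‖f x‖ ≤ C) ∧ (∀ a b, ‖f a - f b‖ ≤ C * ‖a - b‖) ∧
      (∀ x, C < ‖x‖ → f x = 0) := by
  obtain ⟨C1, h1⟩ := hc.exists_bound_of_continuous hf.continuous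
  obtain ⟨C2, h2⟩ := hf.lipschitzWith_of_hasCompactSupport hc (by simp)
  obtain ⟨C3, h3⟩ := hc.isCompact.isBounded.exists_norm_le
  refine ⟨max (max C1 C2) C3, (C2.2.trans (le_max_right _ _)).trans (le_max_left _ _), ?_, ?_, ?_⟩
  · intro x
    exact (h1 x).trans ((le_max_left _ _).trans (le_max_left _ _))
  · intro a b
    refine (h2.norm_sub_le a b).trans ?_
    gcongr
    exact (le_max_right _ _).trans (le_max_left _ _)
  · intro x hx
    by_contra hne
    have := h3 x (subset_tsupport f hne)
    exact absurd (this.trans (le_max_right _ _)) (not_le.2 hx)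

lemma aux_hL2 {n : ℕ} (χ : EuclideanSpace ℝ (Fin n) → ℝ) (hχ : ContDiff ℝ (⊤ : ℕ∞) χ) (C : ℝ)
    (hC : ∀ a b, ‖fderiv ℝ χ a - fderiv ℝ χ b‖ ≤ C * ‖a - b‖) (a b h : EuclideanSpace ℝ (Fin n)) :
    |(χ (a + h) - χ a) - (χ (b + h) - χ b)| ≤ C * ‖h‖ * ‖a - b‖ := by
  have hd : Differentiable ℝ χ := hχ.differentiable (by simp)
  have hder : ∀ x ∈ (univ : Set (EuclideanSpace ℝ (Fin n))), HasFDerivWithinAt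
      (fun x => χ (x + h) - χ x) (fderiv ℝ χ (x + h) - fderiv ℝ χ x) univ x := by
    intro x _
    refine HasFDerivAt.hasFDerivWithinAt (HasFDerivAt.sub ?_ (hd x).hasFDerivAt)
    exact hasFDerivAt_comp_add_right h |>.2 (hd (x + h)).hasFDerivAt
  have := convex_univ.norm_image_sub_le_of_norm_hasFDerivWithin_le (C := C * ‖h‖) hder
    (fun x _ => by simpa using hC (x + h) x) (mem_univ b) (mem_univ a)
  simpa using this

/-- The principal value `g(y) = lim_{ε→0⁺} ∫_{|x−y|>ε} χ(x) K(y, x−y) dx`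
exists for every `y`, and `g` belongs to `Λ̇_α(ℝⁿ)` for every `0 < α < 1`. -/
theorem Tstar_one_in_homogeneous_lipschitz
    (n : ℕ) (hn : 2 ≤ n)
    (Ω B : Set (EuclideanSpace ℝ (Fin n)))
    (hΩo : IsOpen Ω) (hΩb : Bornology.IsBounded Ω)
    (hBball : ∃ c r, 0 < r ∧ B = Metric.ball c r)
    (hBΩ : B ⊆ Ω)
    (hstar : ∀ x ∈ Ω, ∀ y ∈ B, segment ℝ x y ⊆ Ω)
    (ω : EuclideanSpace ℝ (Fin n) → ℝ)
    (hω : ContDiff ℝ (⊤ : ℕ∞) ω) (hωc : HasCompactSupport ω)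
    (hωsupp : tsupport ω ⊆ B) (hωint : ∫ x, ω x = 1)
    (Bt : Set (EuclideanSpace ℝ (Fin n)))
    (hBt : ∃ c r, 0 < r ∧ Bt = Metric.ball c r)
    (hΩBt : closure Ω ⊆ Bt)
    (d : ℝ) (hd : d = Metric.diam Bt)
    (χ : EuclideanSpace ℝ (Fin n) → ℝ)
    (hχ : ContDiff ℝ (⊤ : ℕ∞) χ) (hχc : HasCompactSupport χ)
    (hχsupp : tsupport χ ⊆ Bt) (hχ1 : ∀ x ∈ Ω, χ x = 1)
    (i j : Fin n)
    -- `∂η_i/∂z_j (y, z)` where `η_i (y, z) = z_i ω (y + z)`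
    (Dη : EuclideanSpace ℝ (Fin n) → EuclideanSpace ℝ (Fin n) → ℝ)
    (hDη : ∀ y z, Dη y z =
      fderiv ℝ (fun w : EuclideanSpace ℝ (Fin n) => w i * ω (y + w)) z (EuclideanSpace.single j 1))
    (K : EuclideanSpace ℝ (Fin n) → EuclideanSpace ℝ (Fin n) → ℝ)
    (hK : ∀ y z, z ≠ 0 → K y z =
      ∫ s in Set.Ioo (0:ℝ) 1, χ y * Dη y (s⁻¹ • z) * (s ^ (n + 1))⁻¹)
:    ∃ g : EuclideanSpace ℝ (Fin n) → ℝ,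
      (∀ y : EuclideanSpace ℝ (Fin n),
        Tendsto (fun ε : ℝ =>
            ∫ x in {x : EuclideanSpace ℝ (Fin n) | ε < ‖x - y‖}, χ x * K y (x - y))
          (𝓝[>] (0:ℝ)) (𝓝 (g y))) ∧
      (∀ α : ℝ, 0 < α → α < 1 → ∃ C : ℝ,
        ∀ y y' : EuclideanSpace ℝ (Fin n), |g y - g y'| ≤ C * ‖y - y'‖ ^ α) := by
  have hBall := hχ1
  obtain ⟨M, hM0, hM, hML, hMR⟩ := aux_facts χ hχ hχc
  obtain ⟨L2, hL20, -, hL2, -⟩ := aux_facts (fderiv ℝ χ)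
    (hχ.fderiv_right (m := ((⊤ : ℕ∞) : WithTop ℕ∞)) (by simp)) (hχc.fderiv ℝ)
  obtain ⟨W, hW0, hW, hWL, hWR⟩ := aux_facts ω hω hωc
  obtain ⟨W1, hW10, hW1, hW1L, hW1R⟩ := aux_facts (fderiv ℝ ω)
    (hω.fderiv_right (m := ((⊤ : ℕ∞) : WithTop ℕ∞)) (by simp)) (hωc.fderiv ℝ)
  have hωd : Differentiable ℝ ω := hω.differentiable (by simp)
  have hω'c : Continuous (fderiv ℝ ω) := hω.continuous_fderiv (by simp)
  set e : EuclideanSpace ℝ (Fin n) := EuclideanSpace.single j 1 with he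
  have hnorm_e : ‖e‖ = 1 := by simp [he]
  have hder : ∀ y w : EuclideanSpace ℝ (Fin n), HasFDerivAt
      (fun w : EuclideanSpace ℝ (Fin n) => w i * ω (y + w))
      (w i • fderiv ℝ ω (y + w) + ω (y + w) • (EuclideanSpace.proj i : EuclideanSpace ℝ (Fin n) →L[ℝ] ℝ)) w := by
    intro y w
    have h1 : HasFDerivAt (fun w : EuclideanSpace ℝ (Fin n) => w i)
      (EuclideanSpace.proj i : EuclideanSpace ℝ (Fin n) →L[ℝ] ℝ) w :=
      (EuclideanSpace.proj i : EuclideanSpace ℝ (Fin n) →L[ℝ] ℝ).hasFDerivAt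
    have h2 : HasFDerivAt (fun w => ω (y + w)) (fderiv ℝ ω (y + w)) w :=
      hasFDerivAt_comp_add_left y |>.2 (hωd (y + w)).hasFDerivAt
    exact h1.mul h2
  have hD : ∀ y w, Dη y w = w i * fderiv ℝ ω (y + w) e + ω (y + w) * e i := by
    intro y w
    rw [hDη, (hder y w).fderiv]
    simp
  have hci : Continuous (fun w : EuclideanSpace ℝ (Fin n) => w i) :=
    (EuclideanSpace.proj i : EuclideanSpace ℝ (Fin n) →L[ℝ] ℝ).continuous
  have hDc : ∀ y, Continuous (Dη y) := by
    intro y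
    have : Dη y = fun w => w i * fderiv ℝ ω (y + w) e + ω (y + w) * e i := funext (hD y)
    rw [this]
    have h1 : Continuous (fun w => fderiv ℝ ω (y + w) e) :=
      (hω'c.comp (continuous_const.add continuous_id)).clm_apply continuous_const
    have h2 := hω.continuous.comp (continuous_const.add continuous_id : Continuous (fun w => y + w))
    exact (hci.mul h1).add (h2.mul continuous_const)
  have hcoord : ∀ w : EuclideanSpace ℝ (Fin n), |w i| ≤ ‖w‖ := fun w => PiLp.norm_apply_le w i
  have hei : |e i| ≤ 1 := hnorm_e ▸ hcoord e
  have hW1' : ∀ x, |fderiv ℝ ω x e| ≤ W1 := fun x => by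
    have := (fderiv ℝ ω x).le_opNorm e
    rw [hnorm_e, mul_one] at this
    exact this.trans (hW1 x)
  have hW1L' : ∀ a b, |fderiv ℝ ω a e - fderiv ℝ ω b e| ≤ W1 * ‖a - b‖ := fun a b => by
    have := (fderiv ℝ ω a - fderiv ℝ ω b).le_opNorm e
    rw [hnorm_e, mul_one] at this
    exact this.trans (hW1L a b)
  -- vanishing of `Dη`
  have hD0 : ∀ y w, W + W1 + ‖y‖ < ‖w‖ → Dη y w = 0 := by
    intro y w h
    have h1 : ‖w‖ ≤ ‖y + w‖ + ‖y‖ := by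
      have := norm_sub_le (y + w) y
      simpa using this
    rw [hD, hWR _ (by linarith), hW1R _ (by linarith)]
    simp
  have hDb : ∀ y w R, ‖w‖ ≤ R → |Dη y w| ≤ R * W1 + W := by
    intro y w R h
    rw [hD]
    refine (abs_add_le _ _).trans ?_
    rw [abs_mul, abs_mul]
    have h0 : 0 ≤ R := (norm_nonneg _).trans h
    calc _ ≤ R * W1 + W * 1 := by
          gcongr
          · exact (hcoord w).trans h
          · exact hW1' _
          · exact hW _
      _ = _ := by ring
  have hDl : ∀ y y' w R, ‖w‖ ≤ R → |Dη y w - Dη y' w| ≤ (R * W1 + W) * ‖y - y'‖ := by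
    intro y y' w R h
    rw [hD, hD]
    have e1 : (w i * fderiv ℝ ω (y + w) e + ω (y + w) * e i)
        - (w i * fderiv ℝ ω (y' + w) e + ω (y' + w) * e i)
      = w i * (fderiv ℝ ω (y + w) e - fderiv ℝ ω (y' + w) e) + (ω (y + w) - ω (y' + w)) * e i := by
      ring
    rw [e1]
    refine (abs_add_le _ _).trans ?_
    rw [abs_mul, abs_mul]
    have h0 : 0 ≤ R := (norm_nonneg _).trans h
    have h1 := hW1L' (y + w) (y' + w)
    have h2 := hWL (y + w) (y' + w)
    rw [add_sub_add_right_eq_sub] at h1 h2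
    calc _ ≤ R * (W1 * ‖y - y'‖) + (W * ‖y - y'‖) * 1 := by
          gcongr
          · exact (hcoord w).trans h
          · exact h2
      _ = _ := by ring
  have hDb' : ∀ y w, |Dη y w| ≤ (W + W1 + ‖y‖) * W1 + W := by
    intro y w
    by_cases h : ‖w‖ ≤ W + W1 + ‖y‖
    · exact hDb y w _ h
    · rw [hD0 y w (not_le.1 h)]; simp; positivity
  have hDint : ∀ y, ∫ w, Dη y w = 0 := by
    intro y
    have hcs : HasCompactSupport (fun w : EuclideanSpace ℝ (Fin n) => w i * ω (y + w)) := by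
      refine HasCompactSupport.intro (isCompact_closedBall 0 (W + ‖y‖)) ?_
      intro w hw
      have h1 : ‖w‖ ≤ ‖y + w‖ + ‖y‖ := by
        have := norm_sub_le (y + w) y
        simpa using this
      have h2 : W + ‖y‖ < ‖w‖ := by simpa using hw
      simp [hWR (y + w) (by linarith)]
    have hi1 : Integrable (fun w : EuclideanSpace ℝ (Fin n) => w i * ω (y + w)) := by
      refine Continuous.integrable_of_hasCompactSupport ?_ hcs
      exact hci.mul (hω.continuous.comp (continuous_const.add continuous_id))
    have hi2 : Integrable (Dη y) := by
      refine Continuous.integrable_of_hasCompactSupport (hDc y) ?_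
      refine HasCompactSupport.intro (isCompact_closedBall 0 (W + W1 + ‖y‖)) ?_
      intro w hw
      exact hD0 y w (by simpa using hw)
    have := integral_mul_fderiv_eq_neg_fderiv_mul_of_integrable (μ := volume)
      (f := fun _ : EuclideanSpace ℝ (Fin n) => (1:ℝ))
      (g := fun w : EuclideanSpace ℝ (Fin n) => w i * ω (y + w)) (v := e)
      (by simp) (by simpa [← hDη] using hi2) (by simpa using hi1)
      (fun x _ => differentiableAt_const _) (fun x _ => (hder y x).differentiableAt)
    simpa [← hDη] using this
  refine ⟨fun y => ∫ w, χ y * Dη y w * (auxA χ y 0 w + χ y * Real.log ‖w‖), ?_, ?_⟩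
  · intro y
    have hlim := (aux_limit n hn (Dη y) χ (hDc y) hχ.continuous M _ (W + W1 + ‖y‖ + 1) M
      hM (hDb' y) (fun w hw => hD0 y w (by linarith)) (hDint y) hM0 hML y).const_mul (χ y)
    rw [← integral_const_mul] at hlim
    simp_rw [← mul_assoc] at hlim ⊢
    refine hlim.congr' ?_
    filter_upwards [self_mem_nhdsWithin] with ε hε
    have hε0 : 0 < ε := hε
    have hf := aux_fubini n (Dη y) χ (hDc y) hχ.continuous M _ (W + W1 + ‖y‖ + 1) (by positivity)
      hM (hDb' y) (fun w hw => hD0 y w (by linarith)) y ε hε0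
    have hms : MeasurableSet {z : EuclideanSpace ℝ (Fin n) | ε < ‖z‖} :=
      measurableSet_lt (by fun_prop) (by fun_prop)
    have hms' : MeasurableSet {x : EuclideanSpace ℝ (Fin n) | ε < ‖x - y‖} :=
      measurableSet_lt (by fun_prop) (by fun_prop)
    have ht : ∫ x in {x : EuclideanSpace ℝ (Fin n) | ε < ‖x - y‖}, χ x * K y (x - y)
        = ∫ z in {z : EuclideanSpace ℝ (Fin n) | ε < ‖z‖}, χ (y + z) * K y z := by
      rw [← integral_indicator hms, ← integral_indicator hms',
        ← integral_sub_right_eq_self ({z : EuclideanSpace ℝ (Fin n) | ε < ‖z‖}.indicator _) y]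
      congr 1; ext x
      simp only [indicator, mem_ofPred_eq, add_sub_cancel]
    rw [ht]
    have h3 : ∫ z in {z : EuclideanSpace ℝ (Fin n) | ε < ‖z‖}, χ (y + z) * K y z =
        ∫ z in {z : EuclideanSpace ℝ (Fin n) | ε < ‖z‖}, χ y * (χ (y + z) *
          ∫ s in Ioo (0:ℝ) 1, Dη y (s⁻¹ • z) * (s ^ (n+1))⁻¹) := by
      refine setIntegral_congr_fun hms ?_
      intro z hz
      have hz' : ε < ‖z‖ := hz
      have hz0 : z ≠ 0 := norm_pos_iff.1 (hε0.trans hz')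
      simp only
      rw [hK y z hz0]
      simp_rw [mul_assoc (χ y)]
      rw [integral_const_mul]
      ring
    rw [h3, integral_const_mul, hf]
    rfl
  · set R := W + W1 + M with hRdef
    have hR0 : 0 ≤ R := by positivity
    have hB0 : 0 ≤ R * W1 + W := by positivity
    obtain ⟨C, hC0, hC⟩ := aux_lip n hn (fun y w => χ y * Dη y w)
      (fun y => continuous_const.mul (hDc y)) χ hχ.continuous M R M L2 (M * (R * W1 + W))
      (M * (R * W1 + W) + M * (R * W1 + W)) hM
      (by
        intro y w hw
        by_cases h : M < ‖y‖
        · simp [hMR y h]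
        · rw [hD0 y w (by linarith)]; simp)
      (by
        intro y w hw
        rw [abs_mul]
        gcongr
        · exact hM y
        · exact hDb y w R hw)
      (by
        intro y y' w hw
        have e1 : χ y * Dη y w - χ y' * Dη y' w
          = (χ y - χ y') * Dη y w + χ y' * (Dη y w - Dη y' w) := by ring
        rw [e1]
        refine (abs_add_le _ _).trans ?_
        rw [abs_mul, abs_mul]
        calc _ ≤ (M * ‖y - y'‖) * (R * W1 + W) + M * ((R * W1 + W) * ‖y - y'‖) := by
              gcongr
              · exact hML y y'
              · exact hDb y w R hw
              · exact hM y'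
              · exact hDl y y' w R hw
          _ = _ := by ring)
      hM0 hL20 (by positivity) (by positivity) hML (aux_hL2 χ hχ L2 hL2)
    intro α hα0 hα1
    refine ⟨2 * C, fun y y' => ?_⟩
    obtain ⟨h1, h2⟩ := hC y y'
    have h3 := (hC y' y).1
    simp only
    rcases le_total ‖y - y'‖ 1 with h | h
    · have : ‖y - y'‖ ≤ ‖y - y'‖ ^ α := by
        rcases (norm_nonneg (y - y')).eq_or_lt with h0 | h0
        · rw [← h0, Real.zero_rpow hα0.ne']
        · exact Real.self_le_rpow_of_le_one h0.le h hα1.le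
      refine h2.trans ?_
      nlinarith [norm_nonneg (y - y')]
    · have : 1 ≤ ‖y - y'‖ ^ α := Real.one_le_rpow h hα0.le
      refine (abs_sub _ _).trans ?_
      nlinarith
end

section
/- Fix an integer j with 1 ≤ j ≤ n−1 and define K_j(x,z) = binom(n−1, j) · ∫₀¹ χ(x) ψ(x + z/t) t^{−(n+1−j)} dt. Then there is a constant C (depending on n, j, χ, ψ, d) such that |K_j(x,z)| ≤ C |z|^{−(n−j)} for all x ∈ ℝⁿ and all z ≠ 0; moreover K_j(x,z) = 0 whenever |z| > d. -/
open MeasureTheory Metric Set Filter Topology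

/-- For `1 ≤ j ≤ n−1`, the kernel
`K_j(x,z) = C(n−1,j) ∫₀¹ χ(x) ψ(x + z/t) t^{−(n+1−j)} dt` satisfies
`|K_j(x,z)| ≲ |z|^{−(n−j)}` and vanishes for `|z| > d`. -/
theorem Kj_size_bound
    (n : ℕ) (hn : 2 ≤ n)
    (Ω B : Set (EuclideanSpace ℝ (Fin n)))
    (hΩo : IsOpen Ω) (hΩb : Bornology.IsBounded Ω)
    (hBball : ∃ c r, 0 < r ∧ B = Metric.ball c r)
    (hBΩ : B ⊆ Ω)
    (hstar : ∀ x ∈ Ω, ∀ y ∈ B, segment ℝ x y ⊆ Ω)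
    (Bt : Set (EuclideanSpace ℝ (Fin n)))
    (hBt : ∃ c r, 0 < r ∧ Bt = Metric.ball c r)
    (hΩBt : closure Ω ⊆ Bt)
    (d : ℝ) (hd : d = Metric.diam Bt)
    (χ : EuclideanSpace ℝ (Fin n) → ℝ)
    (hχ : ContDiff ℝ (⊤ : ℕ∞) χ) (hχc : HasCompactSupport χ)
    (hχsupp : tsupport χ ⊆ Bt) (hχ1 : ∀ x ∈ Ω, χ x = 1)
    (ψ : EuclideanSpace ℝ (Fin n) → ℝ)
    (hψ : ContDiff ℝ (⊤ : ℕ∞) ψ) (hψc : HasCompactSupport ψ)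
    (hψsupp : tsupport ψ ⊆ B) (hψint : ∫ x, ψ x = 0)
    (j : ℕ) (hj1 : 1 ≤ j) (hjn : j ≤ n - 1)
    (Kj : EuclideanSpace ℝ (Fin n) → EuclideanSpace ℝ (Fin n) → ℝ)
    (hKj : ∀ x z, Kj x z = (n - 1).choose j *
      ∫ t in Set.Ioo (0:ℝ) 1, χ x * ψ (x + t⁻¹ • z) * (t ^ (n + 1 - j))⁻¹) :
    ∃ C : ℝ, ∀ x z : EuclideanSpace ℝ (Fin n), z ≠ 0 →
      |Kj x z| ≤ C * (‖z‖ ^ (n - j))⁻¹ ∧ (d < ‖z‖ → Kj x z = 0) := by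
  have hBtb : Bornology.IsBounded Bt := by
    obtain ⟨c, r, _, rfl⟩ := hBt
    exact Metric.isBounded_ball
  have hd0 : 0 ≤ d := hd ▸ Metric.diam_nonneg
  obtain ⟨M1, hM1⟩ := hχc.exists_bound_of_continuous hχ.continuous
  obtain ⟨M2, hM2⟩ := hψc.exists_bound_of_continuous hψ.continuous
  have hM10 : 0 ≤ M1 := (norm_nonneg _).trans (hM1 0)
  have hM20 : 0 ≤ M2 := (norm_nonneg _).trans (hM2 0)
  -- the key support fact
  have key : ∀ x z : EuclideanSpace ℝ (Fin n), ∀ t : ℝ, 0 < t →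
      χ x * ψ (x + t⁻¹ • z) ≠ 0 → ‖z‖ ≤ d * t := by
    intro x z t ht h
    have hx : x ∈ Bt := hχsupp (subset_tsupport _ (left_ne_zero_of_mul h))
    have hy : x + t⁻¹ • z ∈ Bt :=
      hΩBt (subset_closure (hBΩ (hψsupp (subset_tsupport _ (right_ne_zero_of_mul h)))))
    have h1 := Metric.dist_le_diam_of_mem hBtb hy hx
    rw [← hd, dist_eq_norm, add_sub_cancel_left, norm_smul, norm_inv, Real.norm_of_nonneg ht.le,
      inv_mul_eq_div, div_le_iff₀ ht] at h1
    exact h1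
  obtain ⟨m, hm⟩ : ∃ m, n - j = m := ⟨_, rfl⟩
  have hm1 : 1 ≤ m := by omega
  have hm2 : n + 1 - j = m + 1 := by omega
  have hm0 : (0:ℝ) < m := by exact_mod_cast hm1
  rw [hm]
  rw [hm2] at hKj
  refine ⟨(n - 1).choose j * (M1 * M2 * ((d + 1) ^ m / m)), fun x z hz => ⟨?_, ?_⟩⟩
  · have hz0 : 0 < ‖z‖ := norm_pos_iff.2 hz
    have hD : 0 < d + 1 := by linarith
    set c : ℝ := ‖z‖ / (d + 1) with hc
    have hc0 : 0 < c := div_pos hz0 hD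
    have hexp : (-((m:ℝ) + 1)) < -1 := by linarith
    have hint : IntegrableOn (fun t : ℝ => M1 * M2 * t ^ (-((m:ℝ) + 1))) (Ioi c) :=
      (integrableOn_Ioi_rpow_of_lt hexp hc0).const_mul _
    have hind : Integrable ((Ioi c).indicator (fun t : ℝ => M1 * M2 * t ^ (-((m:ℝ) + 1)))) :=
      hint.integrable_indicator measurableSet_Ioi
    have hI : ‖∫ t in Set.Ioo (0:ℝ) 1, χ x * ψ (x + t⁻¹ • z) * (t ^ (m + 1))⁻¹‖ ≤
        ∫ t in Set.Ioo (0:ℝ) 1,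
          (Ioi c).indicator (fun t : ℝ => M1 * M2 * t ^ (-((m:ℝ) + 1))) t := by
      refine norm_integral_le_of_norm_le hind.integrableOn ?_
      refine (ae_restrict_mem measurableSet_Ioo).mono fun t ht => ?_
      have ht0 : 0 < t := ht.1
      by_cases h : χ x * ψ (x + t⁻¹ • z) = 0
      · rw [h, zero_mul, norm_zero]
        refine indicator_nonneg (fun s hs => ?_) t
        have : 0 < s := hc0.trans hs
        positivity
      · have h1 := key x z t ht0 h
        have h2 : t ∈ Ioi c := by
          rw [mem_Ioi, hc, div_lt_iff₀ hD]
          nlinarith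
        rw [indicator_of_mem h2, Real.rpow_neg ht0.le, norm_mul, norm_mul, norm_inv, norm_pow,
          Real.norm_of_nonneg ht0.le]
        have h3 : t ^ ((m:ℝ) + 1) = t ^ (m + 1) := by
          exact_mod_cast Real.rpow_natCast t (m + 1)
        rw [h3]
        have := hM1 x
        have := hM2 (x + t⁻¹ • z)
        gcongr
    have hI2 : (∫ t in Set.Ioo (0:ℝ) 1,
          (Ioi c).indicator (fun t : ℝ => M1 * M2 * t ^ (-((m:ℝ) + 1))) t) ≤
          M1 * M2 * ((d + 1) ^ m / m) * (‖z‖ ^ m)⁻¹ := by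
      refine (setIntegral_le_integral hind (ae_of_all _ fun t => ?_)).trans ?_
      · refine indicator_nonneg (fun s hs => ?_) t
        have : 0 < s := hc0.trans hs
        positivity
      · rw [integral_indicator measurableSet_Ioi, integral_const_mul,
          integral_Ioi_rpow_of_lt hexp hc0]
        have e : -((m:ℝ) + 1) + 1 = -(m:ℝ) := by ring
        rw [e, neg_div_neg_eq, Real.rpow_neg hc0.le, Real.rpow_natCast, hc, div_pow]
        apply le_of_eq
        field_simp
    rw [hKj, abs_mul, Nat.abs_cast, mul_assoc]
    exact mul_le_mul_of_nonneg_left (hI.trans hI2) (Nat.cast_nonneg _)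
  · intro hdz
    rw [hKj]
    have : ∫ t in Set.Ioo (0:ℝ) 1, χ x * ψ (x + t⁻¹ • z) * (t ^ (m + 1))⁻¹ = 0 := by
      refine setIntegral_eq_zero_of_forall_eq_zero fun t ht => ?_
      by_contra h
      have h1 := key x z t ht.1 (left_ne_zero_of_mul h)
      nlinarith [ht.2]
    rw [this, mul_zero]
end
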